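/- arXiv:1604.06329 — 2 statements merged into one kernel-verified Lean document; each statement's English description precedes it below -/
import Mathlib

section
/- Let Γ^{sb} = (K, I, J, q, g) be a commutative state-blind repeated game with K, I, J finite and nonempty. Then for every initial probability p₁ ∈ Δ(K) the game Γ^{sb}(p₁) has a uniform value. -/
open Filter Topology

noncomputable section

/-- The affine extension of a transition `q : K → I → J → Δ(K)` to beliefs `p : K → ℝ`. -/
def qTilde {K I J : Type*} [Fintype K]
    (q : K → I → J → K → ℝ) (p : K → ℝ) (i : I) (j : J) : K → ℝ :=
  fun k' => ∑ k : K, p k * q k i j k'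

/-- The affine extension of the payoff `g` to beliefs. -/
def gTilde {K I J : Type*} [Fintype K]
    (g : K → I → J → ℝ) (p : K → ℝ) (i : I) (j : J) : ℝ :=
  ∑ k : K, p k * g k i j

/-- Expected total payoff over `n` stages of the state-blind repeated game, when players use the
behavioral strategies `σ` and `τ` (which observe only past action pairs), the current belief is
`p` and the past history is `h`. -/
def expPaySB {K I J : Type*} [Fintype K] [Fintype I] [Fintype J]
    (q : K → I → J → K → ℝ) (g : K → I → J → ℝ)
    (σ : List (I × J) → PMF I) (τ : List (I × J) → PMF J) :
    ℕ → (K → ℝ) → List (I × J) → ℝ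
  | 0, _, _ => 0
  | n + 1, p, h => ∑ i : I, ∑ j : J, ((σ h) i).toReal * ((τ h) j).toReal *
      (gTilde g p i j + expPaySB q g σ τ n (qTilde q p i j) (h ++ [(i, j)]))

/-- The `n`-stage average expected payoff `γ_n(p₁, σ, τ)` of the state-blind repeated game. -/
def sbPayoff {K I J : Type*} [Fintype K] [Fintype I] [Fintype J]
    (q : K → I → J → K → ℝ) (g : K → I → J → ℝ)
    (σ : List (I × J) → PMF I) (τ : List (I × J) → PMF J) (p₁ : K → ℝ) (n : ℕ) : ℝ :=
  (1 / (n : ℝ)) * expPaySB q g σ τ n p₁ []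

set_option linter.unusedSectionVars false

/-! ### Matrix games -/

theorem CSB.matrix_minimax {I J : Type*} [Fintype I] [Nonempty I] [Fintype J] [Nonempty J]
    (A : I → J → ℝ) :
    ∃ v : ℝ, ∃ x ∈ stdSimplex ℝ I, ∃ y ∈ stdSimplex ℝ J,
      (∀ j, v ≤ ∑ i, x i * A i j) ∧ (∀ i, ∑ j, y j * A i j ≤ v) := by
  classical
  let f : (J → ℝ) → (I → ℝ) → ℝ := fun y x => ∑ i, ∑ j, x i * (y j * A i j)
  have hneI : (stdSimplex ℝ I).Nonempty := ⟨_, single_mem_stdSimplex ℝ (Classical.arbitrary I)⟩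
  have hneJ : (stdSimplex ℝ J).Nonempty := ⟨_, single_mem_stdSimplex ℝ (Classical.arbitrary J)⟩
  obtain ⟨y, hy, x, hx, h⟩ := Sion.exists_isSaddlePointOn (f := f) hneJ (convex_stdSimplex ℝ J)
    (isCompact_stdSimplex ℝ J)
    (fun x _ => by
      refine ContinuousOn.lowerSemicontinuousOn (Continuous.continuousOn ?_)
      fun_prop)
    (fun x _ => by
      apply ConvexOn.quasiconvexOn
      refine ⟨convex_stdSimplex ℝ J, fun a _ b _ s t _ _ _ => le_of_eq ?_⟩
      simp only [f, Pi.add_apply, Pi.smul_apply, smul_eq_mul, Finset.mul_sum,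
        ← Finset.sum_add_distrib]
      refine Finset.sum_congr rfl fun i _ => Finset.sum_congr rfl fun j _ => by ring)
    (convex_stdSimplex ℝ I) hneI (isCompact_stdSimplex ℝ I)
    (fun x _ => by
      refine ContinuousOn.upperSemicontinuousOn (Continuous.continuousOn ?_)
      fun_prop)
    (fun x _ => by
      apply ConcaveOn.quasiconcaveOn
      refine ⟨convex_stdSimplex ℝ I, fun a _ b _ s t _ _ _ => le_of_eq ?_⟩
      simp only [f, Pi.add_apply, Pi.smul_apply, smul_eq_mul, Finset.mul_sum,
        ← Finset.sum_add_distrib]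
      refine Finset.sum_congr rfl fun i _ => Finset.sum_congr rfl fun j _ => by ring)
  refine ⟨f y x, x, hx, y, hy, ?_, ?_⟩
  · intro j
    have := h (Pi.single j 1) (single_mem_stdSimplex ℝ j) x hx
    simpa [f, Pi.single_apply] using this
  · intro i
    have := h y hy (Pi.single i 1) (single_mem_stdSimplex ℝ i)
    simpa [f, Pi.single_apply] using this

/-- The value of a matrix game. -/
def CSB.val {I J : Type*} [Fintype I] [Nonempty I] [Fintype J] [Nonempty J]
    (A : I → J → ℝ) : ℝ := (CSB.matrix_minimax A).choose

theorem CSB.val_spec {I J : Type*} [Fintype I] [Nonempty I] [Fintype J] [Nonempty J]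
    (A : I → J → ℝ) :
    ∃ x ∈ stdSimplex ℝ I, ∃ y ∈ stdSimplex ℝ J,
      (∀ j, CSB.val A ≤ ∑ i, x i * A i j) ∧ (∀ i, ∑ j, y j * A i j ≤ CSB.val A) :=
  (CSB.matrix_minimax A).choose_spec

/-- weighted sum bounds -/
theorem CSB.le_wsum {I : Type*} [Fintype I] {x : I → ℝ} (hx : x ∈ stdSimplex ℝ I) {f : I → ℝ}
    {c : ℝ} (h : ∀ i, c ≤ f i) : c ≤ ∑ i, x i * f i := by
  calc c = ∑ i, x i * c := by rw [← Finset.sum_mul, hx.2, one_mul]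
    _ ≤ _ := Finset.sum_le_sum fun i _ => mul_le_mul_of_nonneg_left (h i) (hx.1 i)

theorem CSB.wsum_le {I : Type*} [Fintype I] {x : I → ℝ} (hx : x ∈ stdSimplex ℝ I) {f : I → ℝ}
    {c : ℝ} (h : ∀ i, f i ≤ c) : ∑ i, x i * f i ≤ c := by
  calc _ ≤ ∑ i, x i * c := Finset.sum_le_sum fun i _ => mul_le_mul_of_nonneg_left (h i) (hx.1 i)
    _ = c := by rw [← Finset.sum_mul, hx.2, one_mul]

theorem CSB.wsum_mono {I : Type*} [Fintype I] {x : I → ℝ} (hx : x ∈ stdSimplex ℝ I)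
    {f g : I → ℝ} (h : ∀ i, f i ≤ g i) : ∑ i, x i * f i ≤ ∑ i, x i * g i :=
  Finset.sum_le_sum fun i _ => mul_le_mul_of_nonneg_left (h i) (hx.1 i)

theorem CSB.wsum_swap {I J : Type*} [Fintype I] [Fintype J] (x : I → ℝ) (y : J → ℝ)
    (A : I → J → ℝ) : ∑ j, y j * ∑ i, x i * A i j = ∑ i, x i * ∑ j, y j * A i j := by
  simp only [Finset.mul_sum]
  rw [Finset.sum_comm]
  exact Finset.sum_congr rfl fun i _ => Finset.sum_congr rfl fun j _ => by ring

/-- If `x` guarantees `a` in `A`, `y` guarantees `b` in `B`, `A ≤ B + c`, then `a ≤ b + c`. -/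
theorem CSB.compare {I J : Type*} [Fintype I] [Fintype J] {A B : I → J → ℝ} {x : I → ℝ}
    {y : J → ℝ} (hx : x ∈ stdSimplex ℝ I) (hy : y ∈ stdSimplex ℝ J) {a b c : ℝ}
    (ha : ∀ j, a ≤ ∑ i, x i * A i j) (hb : ∀ i, ∑ j, y j * B i j ≤ b)
    (h : ∀ i j, A i j ≤ B i j + c) : a ≤ b + c := by
  calc a ≤ ∑ j, y j * ∑ i, x i * A i j := CSB.le_wsum hy ha
    _ = ∑ i, x i * ∑ j, y j * A i j := CSB.wsum_swap x y A
    _ ≤ b + c := CSB.wsum_le hx fun i => by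
        calc ∑ j, y j * A i j ≤ ∑ j, y j * (B i j + c) := CSB.wsum_mono hy (h i)
          _ = ∑ j, y j * B i j + c := by
            simp only [mul_add, Finset.sum_add_distrib, ← Finset.sum_mul, hy.2, one_mul]
          _ ≤ b + c := by linarith [hb i]

theorem CSB.val_le {I J : Type*} [Fintype I] [Nonempty I] [Fintype J] [Nonempty J]
    {A B : I → J → ℝ} {c : ℝ} (h : ∀ i j, A i j ≤ B i j + c) : CSB.val A ≤ CSB.val B + c := by
  obtain ⟨x, hx, _, _, ha, _⟩ := CSB.val_spec A
  obtain ⟨_, _, y, hy, _, hb⟩ := CSB.val_spec B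
  exact CSB.compare hx hy ha hb h

/-! ### Discounted values of finite deterministic stochastic games -/

/-- The auxiliary one-shot game. -/
def CSB.aux {S I J : Type*} (δ : S → I → J → S) (r : S → I → J → ℝ) (l : ℝ) (v : S → ℝ)
    (s : S) : I → J → ℝ := fun i j => l * r s i j + (1 - l) * v (δ s i j)

/-- `v` is the `l`-discounted value. -/
def CSB.IsVal {S I J : Type*} [Fintype I] [Fintype J]
    (δ : S → I → J → S) (r : S → I → J → ℝ) (l : ℝ) (v : S → ℝ) : Prop :=
  ∀ s, ∃ x ∈ stdSimplex ℝ I, ∃ y ∈ stdSimplex ℝ J,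
      (∀ j, v s ≤ ∑ i, x i * CSB.aux δ r l v s i j) ∧
      (∀ i, ∑ j, y j * CSB.aux δ r l v s i j ≤ v s)

section disc
variable {S I J : Type*} [Fintype S] [Nonempty S] [Fintype I] [Nonempty I] [Fintype J] [Nonempty J]
  (δ : S → I → J → S) (r : S → I → J → ℝ)

theorem CSB.exists_isVal {l : ℝ} (hl : l ∈ Set.Ioo (0:ℝ) 1) : ∃ v, CSB.IsVal δ r l v := by
  let Φ : (S → ℝ) → (S → ℝ) := fun v s => CSB.val (CSB.aux δ r l v s)
  have key : ∀ v w : S → ℝ, ∀ s, Φ v s ≤ Φ w s + (1 - l) * dist v w := by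
    intro v w s
    apply CSB.val_le
    intro i j
    have : v (δ s i j) - w (δ s i j) ≤ dist v w :=
      (le_abs_self _).trans ((Real.dist_eq _ _).symm.le.trans (dist_le_pi_dist v w _))
    simp only [CSB.aux]
    nlinarith [hl.2]
  have hl' : ((1 - l).toNNReal : ℝ) = 1 - l := Real.coe_toNNReal _ (by linarith [hl.2])
  have hc : ContractingWith (1 - l).toNNReal Φ := by
    refine ⟨by rw [← NNReal.coe_lt_coe, hl']; simp [hl.1],
      LipschitzWith.of_dist_le_mul fun v w => ?_⟩
    refine (dist_pi_le_iff (mul_nonneg (NNReal.coe_nonneg _) dist_nonneg)).2 fun s => ?_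
    rw [Real.dist_eq, abs_le]
    constructor
    · have := key w v s
      rw [dist_comm] at this
      rw [hl']; linarith
    · have := key v w s
      rw [hl']; linarith
  refine ⟨hc.fixedPoint Φ, fun s => ?_⟩
  obtain ⟨x, hx, y, hy, h1, h2⟩ := CSB.val_spec (CSB.aux δ r l (hc.fixedPoint Φ) s)
  have : CSB.val (CSB.aux δ r l (hc.fixedPoint Φ) s) = hc.fixedPoint Φ s :=
    congrFun hc.fixedPoint_isFixedPt s
  rw [this] at h1 h2
  exact ⟨x, hx, y, hy, h1, h2⟩

variable {δ r}

theorem CSB.IsVal.nonneg (hr : ∀ s i j, r s i j ∈ Set.Icc (0:ℝ) 1) {l : ℝ}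
    (hl : l ∈ Set.Ioo (0:ℝ) 1) {v : S → ℝ} (hv : CSB.IsVal δ r l v) (s : S) : 0 ≤ v s := by
  obtain ⟨s₀, hs₀⟩ := Finite.exists_min v
  suffices 0 ≤ v s₀ from this.trans (hs₀ s)
  obtain ⟨x, hx, y, hy, h1, h2⟩ := hv s₀
  have h3 : (1 - l) * v s₀ ≤ v s₀ := by
    refine le_trans (CSB.le_wsum hy fun j => ?_) (h2 (Classical.arbitrary I))
    simp only [CSB.aux]
    have := hr s₀ (Classical.arbitrary I) j
    nlinarith [this.1, hl.1, hl.2, hs₀ (δ s₀ (Classical.arbitrary I) j)]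
  nlinarith [hl.1]

theorem CSB.IsVal.le_one (hr : ∀ s i j, r s i j ∈ Set.Icc (0:ℝ) 1) {l : ℝ}
    (hl : l ∈ Set.Ioo (0:ℝ) 1) {v : S → ℝ} (hv : CSB.IsVal δ r l v) (s : S) : v s ≤ 1 := by
  obtain ⟨s₀, hs₀⟩ := Finite.exists_max v
  suffices v s₀ ≤ 1 from (hs₀ s).trans this
  obtain ⟨x, hx, y, hy, h1, h2⟩ := hv s₀
  have h3 : v s₀ ≤ l + (1 - l) * v s₀ := by
    refine le_trans (h1 (Classical.arbitrary J)) (CSB.wsum_le hx fun i => ?_)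
    simp only [CSB.aux]
    have := hr s₀ i (Classical.arbitrary J)
    nlinarith [this.2, hl.1, hl.2, hs₀ (δ s₀ i (Classical.arbitrary J))]
  nlinarith [hl.1]

theorem CSB.IsVal.sub_le (hr : ∀ s i j, r s i j ∈ Set.Icc (0:ℝ) 1) {l m : ℝ}
    (hl : l ∈ Set.Ioo (0:ℝ) 1) (hm : m ∈ Set.Ioo (0:ℝ) 1) {v w : S → ℝ}
    (hv : CSB.IsVal δ r l v) (hw : CSB.IsVal δ r m w) (s : S) :
    l * (v s - w s) ≤ |l - m| := by
  obtain ⟨s₀, hs₀⟩ := Finite.exists_max (fun s => v s - w s)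
  suffices l * (v s₀ - w s₀) ≤ |l - m| from
    (mul_le_mul_of_nonneg_left (hs₀ s) hl.1.le).trans this
  obtain ⟨x, hx, _, _, h1, _⟩ := hv s₀
  obtain ⟨_, _, y, hy, _, h2⟩ := hw s₀
  have := CSB.compare (c := |l - m| + (1 - l) * (v s₀ - w s₀)) hx hy h1 h2 (fun i j => by
    simp only [CSB.aux]
    have a1 := hr s₀ i j
    have a2 := hw.nonneg hr hm (δ s₀ i j)
    have a3 := hw.le_one hr hm (δ s₀ i j)
    have a4 := hs₀ (δ s₀ i j)
    have a5 : (l - m) * (r s₀ i j - w (δ s₀ i j)) ≤ |l - m| := by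
      refine (le_abs_self _).trans ?_
      rw [abs_mul]
      refine mul_le_of_le_one_right (abs_nonneg _) ?_
      rw [abs_le]; constructor <;> linarith [a1.1, a1.2]
    have a6 := mul_le_mul_of_nonneg_left a4 (sub_nonneg.2 hl.2.le)
    nlinarith)
  linarith
end disc

/-! ### Fourier–Motzkin elimination and sign-determined sets -/

/-- `T` depends only on the signs of finitely many elements of the ring `R`. -/
def CSB.SignDet {Θ R : Type*} [CommRing R] (ev : Θ → R →+* ℝ) (T : Θ → Prop) : Prop :=
  ∃ F : Finset R, ∀ θ θ' : Θ,
    (∀ p ∈ F, SignType.sign (ev θ p) = SignType.sign (ev θ' p)) → T θ → T θ'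

theorem CSB.one_var {ι : Type*} [Fintype ι] (α β : ι → ℝ) :
    (∃ t : ℝ, ∀ i, 0 ≤ α i * t + β i) ↔
      ((∀ i, α i = 0 → 0 ≤ β i) ∧ ∀ i j, 0 < α i → α j < 0 → 0 ≤ α i * β j - α j * β i) := by
  classical
  constructor
  · rintro ⟨t, ht⟩
    refine ⟨fun i hi => by simpa [hi] using ht i, fun i j hi hj => ?_⟩
    nlinarith [mul_nonneg hi.le (ht j), mul_nonneg (neg_nonneg.2 hj.le) (ht i)]
  · rintro ⟨h0, h1⟩
    by_cases hP : ∃ i, 0 < α i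
    · have hne : (Finset.univ.filter fun i => 0 < α i).Nonempty := by
        obtain ⟨i, hi⟩ := hP
        exact ⟨i, by simp [hi]⟩
      obtain ⟨m, hm, hmax⟩ := Finset.exists_max_image _ (fun i => - β i / α i) hne
      simp only [Finset.mem_filter, Finset.mem_univ, true_and] at hm hmax
      refine ⟨- β m / α m, fun i => ?_⟩
      rcases lt_trichotomy (α i) 0 with hi | hi | hi
      · have := h1 m i hm hi
        have e : α i * (-β m / α m) + β i = (α m * β i - α i * β m) / α m := by
          field_simp; ring
        rw [e]
        exact div_nonneg this hm.le
      · simpa [hi] using h0 i hi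
      · have := hmax i hi
        rw [div_le_iff₀ hi] at this
        linarith
    · push Not at hP
      refine ⟨- ∑ i, |β i / α i|, fun i => ?_⟩
      rcases (hP i).lt_or_eq with hi | hi
      · have h2 : |β i / α i| ≤ ∑ i, |β i / α i| :=
          Finset.single_le_sum (f := fun i => |β i / α i|) (fun _ _ => abs_nonneg _)
            (Finset.mem_univ i)
        have h3 : - (β i / α i) ≥ - ∑ i, |β i / α i| := by
          have := le_abs_self (β i / α i)
          linarith
        have h4 := mul_le_mul_of_nonpos_left h3.le hi.le
        have e : α i * -(β i / α i) = - β i := by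
          have := hi.ne
          field_simp
        rw [e] at h4
        linarith
      · simpa [hi] using h0 i hi

theorem CSB.fm {Θ R : Type*} [CommRing R] (ev : Θ → R →+* ℝ) (n : ℕ) :
    ∀ {ι : Type*} [Fintype ι] (a : ι → Fin n → R) (b : ι → R),
      CSB.SignDet ev (fun θ => ∃ x : Fin n → ℝ, ∀ i, 0 ≤ ∑ k, ev θ (a i k) * x k + ev θ (b i)) := by
  classical
  induction n with
  | zero =>
    intro ι _ a b
    refine ⟨Finset.univ.image b, fun θ θ' h => ?_⟩
    rintro ⟨x, hx⟩
    refine ⟨x, fun i => ?_⟩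
    have h1 := hx i
    have h2 := h (b i) (by simp)
    simp only [Finset.univ_eq_empty, Finset.sum_empty, zero_add] at h1 ⊢
    rw [← sign_nonneg_iff] at h1 ⊢
    rwa [← h2]
  | succ n ih =>
    intro ι _ a b
    let a' : (ι → SignType) → ι × ι → Fin n → R := fun σ p k =>
      if σ p.1 = 0 then a p.1 k.castSucc
      else if σ p.1 = 1 ∧ σ p.2 = -1 then
        a p.1 (Fin.last n) * a p.2 k.castSucc - a p.2 (Fin.last n) * a p.1 k.castSucc
      else 0
    let b' : (ι → SignType) → ι × ι → R := fun σ p =>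
      if σ p.1 = 0 then b p.1
      else if σ p.1 = 1 ∧ σ p.2 = -1 then
        a p.1 (Fin.last n) * b p.2 - a p.2 (Fin.last n) * b p.1
      else 0
    choose F hF using fun σ => ih (a' σ) (b' σ)
    have key : ∀ θ (σ : ι → SignType), (∀ i, SignType.sign (ev θ (a i (Fin.last n))) = σ i) →
        ((∃ x : Fin (n + 1) → ℝ, ∀ i, 0 ≤ ∑ k, ev θ (a i k) * x k + ev θ (b i)) ↔
          ∃ x : Fin n → ℝ, ∀ p, 0 ≤ ∑ k, ev θ (a' σ p k) * x k + ev θ (b' σ p)) := by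
      intro θ σ hσ
      have e1 : (∃ x : Fin (n + 1) → ℝ, ∀ i, 0 ≤ ∑ k, ev θ (a i k) * x k + ev θ (b i)) ↔
          ∃ x : Fin n → ℝ, ∃ t : ℝ, ∀ i, 0 ≤ ev θ (a i (Fin.last n)) * t +
            (∑ k : Fin n, ev θ (a i k.castSucc) * x k + ev θ (b i)) := by
        constructor
        · rintro ⟨x, hx⟩
          refine ⟨fun k => x k.castSucc, x (Fin.last n), fun i => ?_⟩
          have := hx i
          rw [Fin.sum_univ_castSucc] at this
          linarith
        · rintro ⟨x, t, hx⟩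
          refine ⟨Fin.snoc x t, fun i => ?_⟩
          have := hx i
          rw [Fin.sum_univ_castSucc]
          simp only [Fin.snoc_castSucc, Fin.snoc_last]
          linarith
      rw [e1]
      refine exists_congr fun x => ?_
      rw [CSB.one_var]
      have hz : ∀ i, σ i = 0 ↔ ev θ (a i (Fin.last n)) = 0 := fun i => by
        rw [← hσ, sign_eq_zero_iff]
      have hp : ∀ i, σ i = 1 ↔ 0 < ev θ (a i (Fin.last n)) := fun i => by
        rw [← hσ, sign_eq_one_iff]
      have hn : ∀ i, σ i = -1 ↔ ev θ (a i (Fin.last n)) < 0 := fun i => by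
        rw [← hσ, sign_eq_neg_one_iff]
      have comb : ∀ i j, ∑ k : Fin n, ev θ (a i (Fin.last n) * a j k.castSucc -
            a j (Fin.last n) * a i k.castSucc) * x k +
            ev θ (a i (Fin.last n) * b j - a j (Fin.last n) * b i) =
          ev θ (a i (Fin.last n)) * (∑ k : Fin n, ev θ (a j k.castSucc) * x k + ev θ (b j)) -
          ev θ (a j (Fin.last n)) * (∑ k : Fin n, ev θ (a i k.castSucc) * x k + ev θ (b i)) := by
        intro i j
        simp only [map_sub, map_mul, sub_mul, Finset.sum_sub_distrib, mul_add, Finset.mul_sum]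
        simp only [mul_assoc]
        ring
      constructor
      · rintro ⟨h0, h1⟩ ⟨i, j⟩
        by_cases c0 : σ i = 0
        · simpa [a', b', c0] using h0 i ((hz i).1 c0)
        · by_cases c1 : σ i = 1 ∧ σ j = -1
          · have := h1 i j ((hp i).1 c1.1) ((hn j).1 c1.2)
            rw [← comb] at this
            simpa only [a', b', if_neg c0, if_pos c1] using this
          · simp [a', b', c0, c1]
      · intro h
        refine ⟨fun i hi => ?_, fun i j hi hj => ?_⟩
        · have := h (i, i)
          simpa [a', b', (hz i).2 hi] using this
        · have := h (i, j)
          have c0 : ¬ σ i = 0 := fun hh => hi.ne' ((hz i).1 hh)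
          have c1 : σ i = 1 ∧ σ j = -1 := ⟨(hp i).2 hi, (hn j).2 hj⟩
          rw [← comb]
          simpa only [a', b', if_neg c0, if_pos c1] using this
    refine ⟨(Finset.univ.biUnion F) ∪ Finset.univ.image (fun i => a i (Fin.last n)),
      fun θ θ' h => ?_⟩
    let σ : ι → SignType := fun i => SignType.sign (ev θ (a i (Fin.last n)))
    have hσ' : ∀ i, SignType.sign (ev θ' (a i (Fin.last n))) = σ i := fun i =>
      (h _ (by simp)).symm
    intro hT
    refine (key θ' σ hσ').2 (hF σ θ θ' (fun p hp => h p ?_) ((key θ σ fun i => rfl).1 hT))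
    simp only [Finset.mem_union, Finset.mem_biUnion, Finset.mem_univ, true_and]
    exact Or.inl ⟨σ, hp⟩

theorem CSB.fm' {Θ R : Type*} [CommRing R] (ev : Θ → R →+* ℝ)
    {ι κ : Type*} [Fintype ι] [Fintype κ] (a : ι → κ → R) (b : ι → R) :
      CSB.SignDet ev (fun θ => ∃ x : κ → ℝ, ∀ i, 0 ≤ ∑ k, ev θ (a i k) * x k + ev θ (b i)) := by
  let e := Fintype.equivFin κ
  obtain ⟨F, hF⟩ := CSB.fm ev (Fintype.card κ) (fun i k => a i (e.symm k)) b
  refine ⟨F, fun θ θ' h => ?_⟩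
  rintro ⟨x, hx⟩
  obtain ⟨y, hy⟩ := hF θ θ' h ⟨x ∘ e.symm, fun i => by
    have := hx i
    rw [← e.symm.sum_comp] at this
    exact this⟩
  refine ⟨y ∘ e, fun i => ?_⟩
  have := hy i
  rw [← e.symm.sum_comp]
  simpa using this

/-! ### Sign of the Attia–Oliu-Barton determinants -/

section det
variable {S : Type*} [Fintype S] [DecidableEq S] [Nonempty S]

theorem CSB.min_principle {Q : Matrix S S ℝ} (hQ : Q ∈ Matrix.rowStochastic ℝ S) {t : ℝ}
    (ht : t ∈ Set.Ico (0:ℝ) 1) {w : S → ℝ} (hw : ∀ s, 0 ≤ ((1 - t • Q).mulVec w) s) (s : S) :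
    0 ≤ w s := by
  obtain ⟨s₀, hs₀⟩ := Finite.exists_min w
  suffices 0 ≤ w s₀ from this.trans (hs₀ s)
  have h := hw s₀
  rw [Matrix.sub_mulVec, Matrix.one_mulVec, Matrix.smul_mulVec] at h
  simp only [Pi.sub_apply, Pi.smul_apply, smul_eq_mul] at h
  have h2 : w s₀ ≤ (Q.mulVec w) s₀ := by
    refine CSB.le_wsum (x := Q s₀) (f := w) ⟨fun j => hQ.1 s₀ j, ?_⟩ hs₀
    exact Matrix.sum_row_of_mem_rowStochastic hQ s₀
  nlinarith [ht.1, ht.2]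

theorem CSB.det_pos {Q : Matrix S S ℝ} (hQ : Q ∈ Matrix.rowStochastic ℝ S) {t : ℝ}
    (ht : t ∈ Set.Ico (0:ℝ) 1) : 0 < (1 - t • Q).det := by
  have hne : ∀ u ∈ Set.Ico (0:ℝ) 1, (1 - u • Q).det ≠ 0 := by
    intro u hu h0
    obtain ⟨w, hw, hw0⟩ := Matrix.exists_mulVec_eq_zero_iff.2 h0
    apply hw
    ext s
    apply le_antisymm
    · have := CSB.min_principle hQ hu (w := -w) (by simp [Matrix.mulVec_neg, hw0]) s
      simpa using this
    · exact CSB.min_principle hQ hu (by simp [hw0]) s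
  by_contra hcon
  push Not at hcon
  have hcont : ContinuousOn (fun u : ℝ => (1 - u • Q).det) (Set.Icc 0 t) :=
    Continuous.continuousOn (by fun_prop)
  have := intermediate_value_Icc' ht.1 hcont
  obtain ⟨u, hu, h0⟩ := this (show (0:ℝ) ∈ _ from ⟨hcon, by simp⟩)
  exact hne u ⟨hu.1, hu.2.trans_lt ht.2⟩ h0

theorem CSB.det_updateCol_mulVec (N : Matrix S S ℝ) (w : S → ℝ) (k : S) :
    (N.updateCol k (N.mulVec w)).det = N.det * w k := by
  rw [← Matrix.cramer_apply, Matrix.cramer_eq_adjugate_mulVec, Matrix.mulVec_mulVec,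
    Matrix.adjugate_mul, Matrix.smul_mulVec, Matrix.one_mulVec]
  rfl

theorem CSB.det_sign_aux {Q : Matrix S S ℝ} (hQ : Q ∈ Matrix.rowStochastic ℝ S) {l : ℝ}
    (hl : l ∈ Set.Ioo (0:ℝ) 1) (u : S → ℝ) (k : S) (z : ℝ) :
    ∃ γ : S → ℝ, (1 - (1 - l) • Q).mulVec γ = u ∧
    ((1 - (1 - l) • Q).updateCol k (fun s => u s - z * (1 - (1 - l) • Q) s k)).det =
      (1 - (1 - l) • Q).det * (γ k - z) := by
  have ht : 1 - l ∈ Set.Ico (0:ℝ) 1 := ⟨by linarith [hl.2], by linarith [hl.1]⟩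
  have hpos := CSB.det_pos hQ ht
  set N := (1 - (1 - l) • Q) with hN
  have hu : N.mulVec (N⁻¹.mulVec u) = u := by
    rw [Matrix.mulVec_mulVec, Matrix.mul_nonsing_inv _ (isUnit_iff_ne_zero.2 hpos.ne'),
      Matrix.one_mulVec]
  refine ⟨N⁻¹.mulVec u, hu, ?_⟩
  have : (fun s => u s - z * N s k) = N.mulVec (N⁻¹.mulVec u - z • Pi.single k 1) := by
    rw [Matrix.mulVec_sub, hu, Matrix.mulVec_smul]
    ext s
    simp
  rw [this, CSB.det_updateCol_mulVec]
  simp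

theorem CSB.det_nonneg_of_sub {Q : Matrix S S ℝ} (hQ : Q ∈ Matrix.rowStochastic ℝ S) {l : ℝ}
    (hl : l ∈ Set.Ioo (0:ℝ) 1) (u v : S → ℝ) (k : S) (z : ℝ)
    (h : ∀ s, v s ≤ u s + (1 - l) * (Q.mulVec v) s) (hz : z ≤ v k) :
    0 ≤ ((1 - (1 - l) • Q).updateCol k (fun s => u s - z * (1 - (1 - l) • Q) s k)).det := by
  have ht : 1 - l ∈ Set.Ico (0:ℝ) 1 := ⟨by linarith [hl.2], by linarith [hl.1]⟩
  obtain ⟨γ, hγ, hd⟩ := CSB.det_sign_aux hQ hl u k z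
  rw [hd]
  refine mul_nonneg (CSB.det_pos hQ ht).le ?_
  have := CSB.min_principle hQ ht (w := γ - v) (fun s => by
    rw [Matrix.mulVec_sub, hγ, Matrix.sub_mulVec, Matrix.one_mulVec, Matrix.smul_mulVec]
    simp only [Pi.sub_apply, Pi.smul_apply, smul_eq_mul]
    linarith [h s]) k
  simp only [Pi.sub_apply] at this
  linarith

theorem CSB.det_neg_of_super {Q : Matrix S S ℝ} (hQ : Q ∈ Matrix.rowStochastic ℝ S) {l : ℝ}
    (hl : l ∈ Set.Ioo (0:ℝ) 1) (u v : S → ℝ) (k : S) (z : ℝ)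
    (h : ∀ s, u s + (1 - l) * (Q.mulVec v) s ≤ v s) (hz : v k < z) :
    ((1 - (1 - l) • Q).updateCol k (fun s => u s - z * (1 - (1 - l) • Q) s k)).det < 0 := by
  have ht : 1 - l ∈ Set.Ico (0:ℝ) 1 := ⟨by linarith [hl.2], by linarith [hl.1]⟩
  obtain ⟨γ, hγ, hd⟩ := CSB.det_sign_aux hQ hl u k z
  rw [hd]
  refine mul_neg_of_pos_of_neg (CSB.det_pos hQ ht) ?_
  have := CSB.min_principle hQ ht (w := v - γ) (fun s => by
    rw [Matrix.mulVec_sub, hγ, Matrix.sub_mulVec, Matrix.one_mulVec, Matrix.smul_mulVec]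
    simp only [Pi.sub_apply, Pi.smul_apply, smul_eq_mul]
    linarith [h s]) k
  simp only [Pi.sub_apply] at this
  linarith

/-- Determinants are multi-affine in the rows. -/
theorem CSB.det_mix {A : Type*} [Fintype A] (x : S → A → ℝ) (ρ : S → A → S → ℝ) :
    ∑ f : S → A, (∏ s, x s (f s)) * (Matrix.of fun s => ρ s (f s)).det =
      (Matrix.of fun s => ∑ i, x s i • ρ s i).det := by
  classical
  have h := (Matrix.detRowAlternating (R := ℝ) (n := S)).toMultilinearMap.map_sum
    (fun s i => x s i • ρ s i)
  have h2 : ∀ f : S → A, (Matrix.detRowAlternating (R := ℝ) (n := S)).toMultilinearMap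
      (fun s => x s (f s) • ρ s (f s)) = (∏ s, x s (f s)) * (Matrix.of fun s => ρ s (f s)).det := by
    intro f
    rw [MultilinearMap.map_smul_univ]
    rfl
  simp only [h2] at h
  rw [← h]
  rfl
end det

section poly
variable {S A : Type*} [Fintype S] [DecidableEq S] [Nonempty S] [Fintype A]

/-- Row of the Attia–Oliu-Barton matrix. -/
def CSB.row {R : Type*} [CommRing R] (c : ℝ → R) (l z : R) (k : S) (d : S → A → S)
    (ρ : S → A → ℝ) (s : S) (a : A) : S → R := fun t =>
  if t = k then l * c (ρ s a) -
      z * ((if s = k then 1 else 0) - (1 - l) * (if d s a = k then 1 else 0))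
  else (if s = t then 1 else 0) - (1 - l) * (if d s a = t then 1 else 0)

/-- The mixed transition matrix. -/
def CSB.mixQ (d : S → A → S) (x : S → A → ℝ) : Matrix S S ℝ :=
  Matrix.of fun s t => ∑ a, x s a * (if d s a = t then 1 else 0)

theorem CSB.mixQ_mem {d : S → A → S} {x : S → A → ℝ} (hx : ∀ s, x s ∈ stdSimplex ℝ A) :
    CSB.mixQ d x ∈ Matrix.rowStochastic ℝ S := by
  rw [Matrix.mem_rowStochastic_iff_sum]
  refine ⟨fun i j => Finset.sum_nonneg fun a _ => mul_nonneg ((hx i).1 a) (by split_ifs <;> simp),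
    fun i => ?_⟩
  simp only [CSB.mixQ, Matrix.of_apply]
  rw [Finset.sum_comm]
  simp only [mul_ite, mul_one, mul_zero, Finset.sum_ite_eq, Finset.mem_univ, if_true]
  exact (hx i).2

theorem CSB.mixQ_mulVec (d : S → A → S) (x : S → A → ℝ) (v : S → ℝ) (s : S) :
    ((CSB.mixQ d x).mulVec v) s = ∑ a, x s a * v (d s a) := by
  simp only [CSB.mixQ, Matrix.mulVec, dotProduct, Matrix.of_apply, Finset.sum_mul]
  rw [Finset.sum_comm]
  simp [mul_assoc]

theorem CSB.mix_row {d : S → A → S} {x : S → A → ℝ} (hx : ∀ s, x s ∈ stdSimplex ℝ A)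
    (ρ : S → A → ℝ) (l z : ℝ) (k : S) :
    (Matrix.of fun s => ∑ a, x s a • CSB.row (fun c => c) l z k d ρ s a) =
      (1 - (1 - l) • CSB.mixQ d x).updateCol k
        (fun s => (l * ∑ a, x s a * ρ s a) - z * (1 - (1 - l) • CSB.mixQ d x) s k) := by
  have base : ∀ s t, (1 - (1 - l) • CSB.mixQ d x) s t =
      ∑ a, x s a * ((if s = t then 1 else 0) - (1 - l) * (if d s a = t then 1 else 0)) := by
    intro s t
    simp only [Matrix.sub_apply, Matrix.smul_apply, smul_eq_mul, CSB.mixQ, Matrix.of_apply,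
      Matrix.one_apply, mul_sub, Finset.sum_sub_distrib, ← Finset.sum_mul, (hx s).2, one_mul]
    congr 1
    rw [Finset.mul_sum]
    exact Finset.sum_congr rfl fun a _ => by ring
  ext s t
  simp only [Matrix.of_apply, Finset.sum_apply, Pi.smul_apply, smul_eq_mul, Matrix.updateCol_apply]
  split_ifs with h
  · subst h
    rw [base, Finset.mul_sum, Finset.mul_sum, ← Finset.sum_sub_distrib]
    refine Finset.sum_congr rfl fun a _ => ?_
    simp only [CSB.row, if_true]
    ring
  · rw [base]
    refine Finset.sum_congr rfl fun a _ => ?_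
    simp only [CSB.row, if_neg h]

theorem CSB.aob_nonneg {d : S → A → S} {x : S → A → ℝ} (hx : ∀ s, x s ∈ stdSimplex ℝ A)
    (ρ : S → A → ℝ) {l : ℝ} (hl : l ∈ Set.Ioo (0:ℝ) 1) (v : S → ℝ) (z : ℝ) (k : S)
    (h : ∀ s, v s ≤ ∑ a, x s a * (l * ρ s a + (1 - l) * v (d s a))) (hz : z ≤ v k) :
    0 ≤ ∑ f : S → A, (∏ s, x s (f s)) *
      (Matrix.of fun s => CSB.row (fun c => c) l z k d ρ s (f s)).det := by
  rw [CSB.det_mix, CSB.mix_row hx]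
  refine CSB.det_nonneg_of_sub (CSB.mixQ_mem hx) hl _ v k z (fun s => (h s).trans (le_of_eq ?_)) hz
  rw [CSB.mixQ_mulVec, Finset.mul_sum, Finset.mul_sum, ← Finset.sum_add_distrib]
  exact Finset.sum_congr rfl fun a _ => by ring

theorem CSB.aob_neg {d : S → A → S} {x : S → A → ℝ} (hx : ∀ s, x s ∈ stdSimplex ℝ A)
    (ρ : S → A → ℝ) {l : ℝ} (hl : l ∈ Set.Ioo (0:ℝ) 1) (v : S → ℝ) (z : ℝ) (k : S)
    (h : ∀ s, ∑ a, x s a * (l * ρ s a + (1 - l) * v (d s a)) ≤ v s) (hz : v k < z) :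
    ∑ f : S → A, (∏ s, x s (f s)) *
      (Matrix.of fun s => CSB.row (fun c => c) l z k d ρ s (f s)).det < 0 := by
  rw [CSB.det_mix, CSB.mix_row hx]
  refine CSB.det_neg_of_super (CSB.mixQ_mem hx) hl _ v k z (fun s => le_trans (le_of_eq ?_) (h s)) hz
  rw [CSB.mixQ_mulVec, Finset.mul_sum, Finset.mul_sum, ← Finset.sum_add_distrib]
  exact Finset.sum_congr rfl fun a _ => by ring

theorem CSB.prod_mem {x : S → A → ℝ} (hx : ∀ s, x s ∈ stdSimplex ℝ A) :
    (fun f : S → A => ∏ s, x s (f s)) ∈ stdSimplex ℝ (S → A) := by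
  classical
  refine ⟨fun f => Finset.prod_nonneg fun s _ => (hx s).1 _, ?_⟩
  rw [← Fintype.prod_sum]
  exact Finset.prod_eq_one fun s _ => (hx s).2
end poly

section poly2
variable {S I J : Type*} [Fintype S] [Nonempty S] [Fintype I] [Nonempty I] [Fintype J] [Nonempty J]

open Polynomial in
theorem CSB.exists_poly (δ : S → I → J → S) (r : S → I → J → ℝ) (k : S) :
    ∃ P : ℝ[X][X], P ≠ 0 ∧ ∀ l ∈ Set.Ioo (0:ℝ) 1, ∀ v, CSB.IsVal δ r l v →
      P.evalEval l (v k) = 0 := by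
  classical
  let ev : ℝ × ℝ → ℝ[X][X] →+* ℝ := fun θ => evalEvalRingHom θ.1 θ.2
  let W : (S → I) → (S → J) → ℝ[X][X] := fun f h =>
    (Matrix.of fun s => CSB.row (fun c => C (C c)) (C X) X k (fun s i => δ s i (h s))
      (fun s i => r s i (h s)) s (f s)).det
  let Wr : ℝ → ℝ → (S → I) → (S → J) → ℝ := fun l z f h =>
    (Matrix.of fun s => CSB.row (fun c => c) l z k (fun s i => δ s i (h s))
      (fun s i => r s i (h s)) s (f s)).det
  have hW : ∀ θ f h, ev θ (W f h) = Wr θ.1 θ.2 f h := by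
    intro θ f h
    simp only [W, Wr]
    rw [RingHom.map_det]
    congr 1
    ext s t
    simp only [RingHom.mapMatrix_apply, Matrix.map_apply, Matrix.of_apply, CSB.row, ev]
    split_ifs <;> simp <;> exact mul_comm _ _
  -- the feasibility problem
  let a : ((S → I) ⊕ Unit ⊕ (S → J)) → (S → I) → ℝ[X][X] := fun c f =>
    match c with
    | Sum.inl f' => if f = f' then 1 else 0
    | Sum.inr (Sum.inl _) => 1
    | Sum.inr (Sum.inr h) => W f h
  let b : ((S → I) ⊕ Unit ⊕ (S → J)) → ℝ[X][X] := fun c =>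
    match c with
    | Sum.inl _ => 0
    | Sum.inr (Sum.inl _) => -1
    | Sum.inr (Sum.inr _) => 0
  obtain ⟨F, hF⟩ := CSB.fm' ev a b
  have hT : ∀ θ : ℝ × ℝ, (∃ x : (S → I) → ℝ, ∀ i, 0 ≤ ∑ k, ev θ (a i k) * x k + ev θ (b i)) ↔
      ∃ x : (S → I) → ℝ, (∀ f, 0 ≤ x f) ∧ 1 ≤ ∑ f, x f ∧
        ∀ h, 0 ≤ ∑ f, x f * Wr θ.1 θ.2 f h := by
    intro θ
    refine exists_congr fun x => ?_
    constructor
    · intro hx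
      refine ⟨fun f => ?_, ?_, fun h => ?_⟩
      · have := hx (Sum.inl f)
        simpa [a, b] using this
      · have := hx (Sum.inr (Sum.inl ()))
        simpa [a, b] using this
      · have := hx (Sum.inr (Sum.inr h))
        simpa [a, b, hW, mul_comm] using this
    · rintro ⟨h1, h2, h3⟩ (f | u | h)
      · simpa [a, b] using h1 f
      · simpa [a, b] using h2
      · simpa [a, b, hW, mul_comm] using h3 h
  have hpos : ∀ l ∈ Set.Ioo (0:ℝ) 1, ∀ v, CSB.IsVal δ r l v →
      (∃ x : (S → I) → ℝ, ∀ i, 0 ≤ ∑ f, ev (l, v k) (a i f) * x f + ev (l, v k) (b i)) := by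
    intro l hl v hv
    rw [hT]
    choose x hx y hy h1 h2 using hv
    refine ⟨fun f => ∏ s, x s (f s), (CSB.prod_mem hx).1, (CSB.prod_mem hx).2.ge, fun h => ?_⟩
    exact CSB.aob_nonneg hx (fun s i => r s i (h s)) hl v (v k) k (fun s => h1 s (h s)) le_rfl
  have hneg : ∀ l ∈ Set.Ioo (0:ℝ) 1, ∀ v, CSB.IsVal δ r l v → ∀ z, v k < z →
      ¬ (∃ x : (S → I) → ℝ, ∀ i, 0 ≤ ∑ f, ev (l, z) (a i f) * x f + ev (l, z) (b i)) := by
    intro l hl v hv z hz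
    rw [hT]
    choose x hx y hy h1 h2 using hv
    rintro ⟨X, hX0, hX1, hX2⟩
    let Y : (S → J) → ℝ := fun h => ∏ s, y s (h s)
    have hY : Y ∈ stdSimplex ℝ (S → J) := CSB.prod_mem hy
    have hf : ∀ f, ∑ h, Y h * Wr l z f h < 0 := by
      intro f
      exact CSB.aob_neg hy (d := fun s j => δ s (f s) j) (fun s j => r s (f s) j) hl v z k
        (fun s => h2 s (f s)) hz
    have hsum : 0 ≤ ∑ h, Y h * ∑ f, X f * Wr l z f h :=
      Finset.sum_nonneg fun h _ => mul_nonneg (hY.1 h) (hX2 h)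
    rw [CSB.wsum_swap] at hsum
    have hnp : ∀ f, X f * ∑ h, Y h * Wr l z f h ≤ 0 := fun f =>
      mul_nonpos_of_nonneg_of_nonpos (hX0 f) (hf f).le
    have h0 := (Finset.sum_eq_zero_iff_of_nonpos fun f _ => hnp f).1
      (le_antisymm (Finset.sum_nonpos fun f _ => hnp f) hsum)
    have : ∑ f, X f = 0 := Finset.sum_eq_zero fun f hf' => by
      rcases mul_eq_zero.1 (h0 f hf') with h | h
      · exact h
      · exact absurd h (hf f).ne
    linarith
  refine ⟨∏ p ∈ F.filter (· ≠ 0), p, Finset.prod_ne_zero_iff.2 fun p hp =>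
    (Finset.mem_filter.1 hp).2, fun l hl v hv => ?_⟩
  rw [← coe_evalEvalRingHom, map_prod, Finset.prod_eq_zero_iff]
  by_contra hcon
  push Not at hcon
  have hev : ∀ᶠ z in 𝓝[>] (v k), ∀ p ∈ F,
      SignType.sign (ev (l, v k) p) = SignType.sign (ev (l, z) p) := by
    rw [Finset.eventually_all]
    intro p hp
    by_cases hp0 : p = 0
    · subst hp0; simp
    have hne : ev (l, v k) p ≠ 0 := hcon p (Finset.mem_filter.2 ⟨hp, hp0⟩)
    have hc : Continuous fun z => ev (l, z) p := by
      have : (fun z => ev (l, z) p) = fun z => (p.map (evalRingHom l)).eval z := by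
        ext z
        simp only [ev, coe_evalEvalRingHom]
        rw [map_evalRingHom_eval]
      rw [this]
      exact Polynomial.continuous _
    apply eventually_nhdsWithin_of_eventually_nhds
    rcases hne.lt_or_gt with h | h
    · filter_upwards [hc.continuousAt.eventually_lt continuousAt_const h] with z hz
      rw [sign_neg h, sign_neg hz]
    · filter_upwards [continuousAt_const.eventually_lt hc.continuousAt h] with z hz
      rw [sign_pos h, sign_pos hz]
  obtain ⟨z, hz1, hz2⟩ := (hev.and self_mem_nhdsWithin).exists
  exact hneg l hl v hv z hz2 (hF _ _ hz1 (hpos l hl v hv))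
end poly2

open Polynomial in
theorem CSB.exists_deg (P : ℝ[X][X]) : ∃ d : ℕ, ∀ c : ℝ, (P.eval (C c)).natDegree ≤ d := by
  refine ⟨P.support.sup fun i => (P.coeff i).natDegree, fun c => ?_⟩
  rw [eval_eq_sum, Polynomial.sum]
  refine natDegree_sum_le_of_forall_le _ _ fun i hi => ?_
  rw [← C_pow]
  exact (natDegree_mul_C_le _ _).trans (Finset.le_sup (f := fun i => (P.coeff i).natDegree) hi)

open Polynomial in
/-- Crossing count: a regular level is crossed at most `d` times. -/
theorem CSB.crossing {Q : ℝ[X]} (hQ : Q ≠ 0) {d : ℕ} (hd : Q.natDegree ≤ d)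
    {f : ℝ → ℝ} {c : ℝ} (hf : ContinuousOn f (Set.Ioo 0 1))
    (hroot : ∀ l ∈ Set.Ioo (0:ℝ) 1, f l = c → Q.eval l = 0)
    {u : ℕ → ℝ} (hu : StrictAnti u) (hu1 : ∀ n, u n ∈ Set.Ioo (0:ℝ) 1) (F : Finset ℕ)
    (hF : ∀ i ∈ F, c ∈ Set.Ioo (min (f (u i)) (f (u (i+1)))) (max (f (u i)) (f (u (i+1))))) :
    F.card ≤ d := by
  classical
  have hx : ∀ i ∈ F, ∃ x ∈ Set.Ioo (u (i+1)) (u i), f x = c := by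
    intro i hi
    have hlt : u (i+1) < u i := hu (Nat.lt_succ_self i)
    have hsub : Set.Icc (u (i+1)) (u i) ⊆ Set.Ioo (0:ℝ) 1 := fun y hy =>
      ⟨(hu1 _).1.trans_le hy.1, hy.2.trans_lt (hu1 _).2⟩
    have hcc := hF i hi
    rcases le_total (f (u i)) (f (u (i+1))) with h | h
    · rw [min_eq_left h, max_eq_right h] at hcc
      exact intermediate_value_Ioo' hlt.le (hf.mono hsub) hcc
    · rw [min_eq_right h, max_eq_left h] at hcc
      exact intermediate_value_Ioo hlt.le (hf.mono hsub) hcc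
  choose! x hx1 hx2 using hx
  have hinj : Set.InjOn x F := by
    intro i hi j hj hij
    by_contra hne
    rcases lt_or_gt_of_ne hne with h | h
    · have := hu.antitone (Nat.succ_le_of_lt h)
      have h1 := (hx1 i hi).1; have h2 := (hx1 j hj).2
      simp only [Nat.succ_eq_add_one] at this
      linarith
    · have := hu.antitone (Nat.succ_le_of_lt h)
      have h1 := (hx1 j hj).1; have h2 := (hx1 i hi).2
      simp only [Nat.succ_eq_add_one] at this
      linarith
  rw [← Finset.card_image_of_injOn hinj]
  refine le_trans (Finset.card_le_card (t := Q.roots.toFinset) ?_)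
    ((Multiset.toFinset_card_le _).trans ((card_roots' Q).trans hd))
  intro y hy
  obtain ⟨i, hi, rfl⟩ := Finset.mem_image.1 hy
  rw [Multiset.mem_toFinset, mem_roots hQ]
  exact hroot _ ⟨(hu1 _).1.trans (hx1 i hi).1, (hx1 i hi).2.trans (hu1 _).2⟩ (hx2 i hi)

open Polynomial MeasureTheory in
theorem CSB.bv (P : ℝ[X][X]) (hP : P ≠ 0) : ∃ d : ℕ, ∀ f : ℝ → ℝ,
    ContinuousOn f (Set.Ioo 0 1) → (∀ l ∈ Set.Ioo (0:ℝ) 1, f l ∈ Set.Icc (0:ℝ) 1) →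
    (∀ l ∈ Set.Ioo (0:ℝ) 1, P.evalEval l (f l) = 0) →
    ∀ u : ℕ → ℝ, StrictAnti u → (∀ n, u n ∈ Set.Ioo (0:ℝ) 1) →
    ∀ n, ∑ i ∈ Finset.range n, |f (u i) - f (u (i+1))| ≤ d := by
  classical
  obtain ⟨d, hd⟩ := CSB.exists_deg P
  refine ⟨d, fun f hf hf01 hroot u hu hu1 n => ?_⟩
  let A : ℕ → Set ℝ := fun i =>
    Set.Ioo (min (f (u i)) (f (u (i+1)))) (max (f (u i)) (f (u (i+1))))
  have hbad : {c : ℝ | P.eval (C c) = 0}.Finite := by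
    have : {c : ℝ | P.eval (C c) = 0} ⊆ C ⁻¹' {y | y ∈ P.roots} := by
      intro c hc
      exact (mem_roots hP).2 hc
    exact Set.Finite.subset ((P.roots.finite_toSet).preimage (C_injective.injOn)) this
  have hvol : ∀ i, volume (A i) = ENNReal.ofReal |f (u i) - f (u (i+1))| := by
    intro i
    rw [Real.volume_Ioo, max_sub_min_eq_abs']
  have key : ∑ i ∈ Finset.range n, volume (A i) ≤ d := by
    calc ∑ i ∈ Finset.range n, volume (A i)
        = ∑ i ∈ Finset.range n, ∫⁻ c, (A i).indicator 1 c := by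
          refine Finset.sum_congr rfl fun i _ => ?_
          rw [lintegral_indicator_one measurableSet_Ioo]
      _ = ∫⁻ c, ∑ i ∈ Finset.range n, (A i).indicator 1 c := by
          rw [lintegral_finsetSum _ fun i _ => measurable_one.indicator measurableSet_Ioo]
      _ ≤ ∫⁻ c, (d:ENNReal) * (Set.Icc (0:ℝ) 1).indicator 1 c := by
          refine lintegral_mono_ae ?_
          have : ∀ᵐ c ∂(volume : Measure ℝ), c ∉ {c : ℝ | P.eval (C c) = 0} :=
            measure_eq_zero_iff_ae_notMem.1 (hbad.measure_zero _)
          filter_upwards [this] with c hc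
          by_cases hc01 : c ∈ Set.Icc (0:ℝ) 1
          · rw [Set.indicator_of_mem hc01]
            have h1 : ∑ i ∈ Finset.range n, (A i).indicator (1 : ℝ → ENNReal) c
                = (((Finset.range n).filter fun i => c ∈ A i).card : ENNReal) := by
              rw [Finset.card_filter, Nat.cast_sum]
              refine Finset.sum_congr rfl fun i _ => ?_
              by_cases h : c ∈ A i <;> simp [h]
            rw [h1]
            simp only [Pi.one_apply, mul_one]
            norm_cast
            refine CSB.crossing hc (hd c) hf ?_ hu hu1 _ fun i hi => (Finset.mem_filter.1 hi).2
            rintro l hl rfl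
            exact hroot l hl
          · rw [Set.indicator_of_notMem hc01, mul_zero]
            refine le_of_eq (Finset.sum_eq_zero fun i _ => Set.indicator_of_notMem ?_ _)
            intro hi
            exact hc01 ⟨(le_min (hf01 _ (hu1 _)).1 (hf01 _ (hu1 _)).1).trans hi.1.le,
              hi.2.le.trans (max_le (hf01 _ (hu1 _)).2 (hf01 _ (hu1 _)).2)⟩
      _ = d := by
          rw [lintegral_const_mul _ (measurable_one.indicator measurableSet_Icc),
            lintegral_indicator_one measurableSet_Icc]
          simp
  simp only [hvol] at key
  rw [← ENNReal.ofReal_sum_of_nonneg fun i _ => abs_nonneg _] at key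
  have := (ENNReal.ofReal_le_iff_le_toReal (by simp)).1 key
  simpa using this

section
variable {S I J : Type*} [Fintype S] [Nonempty S] [Fintype I] [Nonempty I] [Fintype J] [Nonempty J]

/-- Bounded variation and continuity of the discounted values. -/
theorem CSB.exists_V (δ : S → I → J → S) (r : S → I → J → ℝ)
    (hr : ∀ s i j, r s i j ∈ Set.Icc (0:ℝ) 1) :
    ∃ V : ℝ → S → ℝ, (∀ l ∈ Set.Ioo (0:ℝ) 1, CSB.IsVal δ r l (V l)) ∧
      (∀ l ∈ Set.Ioo (0:ℝ) 1, ∀ s, V l s ∈ Set.Icc (0:ℝ) 1) ∧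
      (∀ s, ContinuousOn (fun l => V l s) (Set.Ioo 0 1)) ∧
      ∃ B : ℝ, ∀ u : ℕ → ℝ, StrictAnti u → (∀ n, u n ∈ Set.Ioo (0:ℝ) 1) →
        ∀ n, ∑ i ∈ Finset.range n, ∑ s, |V (u i) s - V (u (i+1)) s| ≤ B := by
  classical
  have : ∀ l : ℝ, ∃ v, l ∈ Set.Ioo (0:ℝ) 1 → CSB.IsVal δ r l v := fun l => by
    by_cases h : l ∈ Set.Ioo (0:ℝ) 1
    · exact (CSB.exists_isVal δ r h).imp fun v hv _ => hv
    · exact ⟨fun _ => 0, fun h' => absurd h' h⟩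
  choose V hV using this
  have h01 : ∀ l ∈ Set.Ioo (0:ℝ) 1, ∀ s, V l s ∈ Set.Icc (0:ℝ) 1 := fun l hl s =>
    ⟨(hV l hl).nonneg hr hl s, (hV l hl).le_one hr hl s⟩
  have hcont : ∀ s, ContinuousOn (fun l => V l s) (Set.Ioo 0 1) := by
    intro s l hl
    have hb : ∀ m ∈ Set.Ioo (0:ℝ) 1, dist (V m s) (V l s) ≤ |m - l| / l + |m - l| / m := by
      intro m hm
      have h1 := CSB.IsVal.sub_le hr hm hl (hV m hm) (hV l hl) s
      have h2 := CSB.IsVal.sub_le hr hl hm (hV l hl) (hV m hm) s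
      rw [abs_sub_comm l m] at h2
      rw [mul_comm, ← le_div_iff₀ hm.1] at h1
      rw [mul_comm, ← le_div_iff₀ hl.1] at h2
      have h3 : 0 ≤ |m - l| / l := div_nonneg (abs_nonneg _) hl.1.le
      have h4 : 0 ≤ |m - l| / m := div_nonneg (abs_nonneg _) hm.1.le
      rw [Real.dist_eq, abs_le]
      constructor <;> linarith
    have hlim : Tendsto (fun m : ℝ => |m - l| / l + |m - l| / m) (𝓝[Set.Ioo 0 1] l) (𝓝 0) := by
      have : ContinuousAt (fun m : ℝ => |m - l| / l + |m - l| / m) l := by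
        have := hl.1.ne'
        fun_prop (disch := assumption)
      have h := this.tendsto
      simp only [sub_self, abs_zero, zero_div, add_zero] at h
      exact h.mono_left nhdsWithin_le_nhds
    refine tendsto_iff_dist_tendsto_zero.2 (squeeze_zero' ?_ ?_ hlim)
    · exact Eventually.of_forall fun _ => dist_nonneg
    · filter_upwards [self_mem_nhdsWithin] with m hm using hb m hm
  refine ⟨V, hV, h01, hcont, ?_⟩
  choose P hP0 hP using CSB.exists_poly δ r
  choose d hd using fun s => CSB.bv (P s) (hP0 s)
  refine ⟨∑ s, (d s : ℝ), fun u hu hu1 n => ?_⟩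
  rw [Finset.sum_comm]
  refine Finset.sum_le_sum fun s _ => hd s (fun l => V l s) (hcont s) (fun l hl => h01 l hl s)
    (fun l hl => hP s l hl _ (hV l hl)) u hu hu1 n
end

/-- One greedy step. -/
theorem CSB.greedy {S : Type*} [Fintype S] {V : ℝ → S → ℝ}
    (hc : ∀ s, ContinuousOn (fun l => V l s) (Set.Ioo 0 1)) {η : ℝ} (hη : 0 < η) {l : ℝ}
    (hl : l ∈ Set.Ioo (0:ℝ) 1) :
    ∃ m ∈ Set.Ioo (0:ℝ) l, ∑ s, |V l s - V m s| + (l - m) = η * m := by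
  set m0 : ℝ := l / (2 * (1 + η)) with hm0
  have hden : (0:ℝ) < 2 * (1 + η) := by linarith
  have hm0pos : 0 < m0 := div_pos hl.1 hden
  have hm0l : m0 * (2 * (1 + η)) = l := div_mul_cancel₀ _ hden.ne'
  have hlt : m0 < l := by nlinarith [mul_pos hm0pos hη]
  have hsub : Set.Icc m0 l ⊆ Set.Ioo (0:ℝ) 1 := fun y hy =>
    ⟨hm0pos.trans_le hy.1, hy.2.trans_lt hl.2⟩
  have hcont : ContinuousOn (fun m => ∑ s, |V l s - V m s| + (l - m) - η * m) (Set.Icc m0 l) := by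
    refine ((continuousOn_finsetSum _ fun s _ => ?_).add (by fun_prop)).sub (by fun_prop)
    exact (continuousOn_const.sub ((hc s).mono hsub)).abs
  have h0 : (0:ℝ) ∈ Set.Ioo (∑ s, |V l s - V l s| + (l - l) - η * l)
      (∑ s, |V l s - V m0 s| + (l - m0) - η * m0) := by
    constructor
    · simp only [sub_self, abs_zero, Finset.sum_const_zero, add_zero]
      nlinarith [mul_pos hη hl.1]
    · have : 0 ≤ ∑ s, |V l s - V m0 s| := Finset.sum_nonneg fun _ _ => abs_nonneg _
      nlinarith [mul_pos hm0pos hη]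
  obtain ⟨m, hm, hm2⟩ := intermediate_value_Ioo' hlt.le hcont h0
  exact ⟨m, ⟨hm0pos.trans hm.1, hm.2⟩, by simp only at hm2; linarith⟩

theorem CSB.schedule0 {S : Type*} [Fintype S] {V : ℝ → S → ℝ}
    (hc : ∀ s, ContinuousOn (fun l => V l s) (Set.Ioo 0 1)) {B : ℝ}
    (hB : ∀ u : ℕ → ℝ, StrictAnti u → (∀ n, u n ∈ Set.Ioo (0:ℝ) 1) →
        ∀ n, ∑ i ∈ Finset.range n, ∑ s, |V (u i) s - V (u (i+1)) s| ≤ B)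
    {η ε : ℝ} (hη : 0 < η) (hε : 0 < ε) :
    ∃ u : ℕ → ℝ, (∀ n, u n ∈ Set.Ioo (0:ℝ) 1) ∧ Antitone u ∧
      (∀ n, ∑ j ∈ Finset.range n, u j ≤ ε) ∧
      (∀ n s, |V (u n) s - V (u (n+1)) s| ≤ η * u (n+1)) ∧
      (∀ n, u n - u (n+1) ≤ η * u (n+1)) := by
  classical
  have hstep : ∀ l : Set.Ioo (0:ℝ) 1, ∃ m : Set.Ioo (0:ℝ) 1, m.1 < l.1 ∧
      ∑ s, |V l s - V m s| + (l.1 - m.1) = η * m.1 := fun l => by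
    obtain ⟨m, hm, h⟩ := CSB.greedy hc hη l.2
    exact ⟨⟨m, hm.1, hm.2.trans l.2.2⟩, hm.2, h⟩
  choose nx hnx1 hnx2 using hstep
  let w : ℕ → Set.Ioo (0:ℝ) 1 := fun n => nx^[n] ⟨1/2, by norm_num⟩
  have hw : ∀ n, w (n+1) = nx (w n) := fun n => Function.iterate_succ_apply' _ _ _
  let u : ℕ → ℝ := fun n => (w n).1
  have hanti : StrictAnti u := strictAnti_nat_of_succ_lt fun n => by
    simp only [u, hw]; exact hnx1 _
  have hu1 : ∀ n, u n ∈ Set.Ioo (0:ℝ) 1 := fun n => (w n).2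
  have heq : ∀ n, ∑ s, |V (u n) s - V (u (n+1)) s| + (u n - u (n+1)) = η * u (n+1) := fun n => by
    simp only [u, hw]; exact hnx2 _
  have hsum : ∀ n, ∑ i ∈ Finset.range n, u (i+1) ≤ (B + 1) / η := by
    intro n
    rw [le_div_iff₀ hη, mul_comm, Finset.mul_sum, ← Finset.sum_congr rfl fun i _ => heq i,
      Finset.sum_add_distrib, Finset.sum_range_sub']
    have := hB u hanti hu1 n
    linarith [(hu1 0).2, (hu1 n).1]
  have hsm : Summable fun i => u (i+1) :=
    summable_of_sum_range_le (fun n => (hu1 _).1.le) hsum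
  have hsm' : Summable u := (summable_nat_add_iff 1).1 hsm
  have ht := tendsto_sum_nat_add u
  obtain ⟨N, hN⟩ := ((tendsto_order.1 ht).2 ε hε).exists
  refine ⟨fun n => u (n + N), fun n => hu1 _, fun a b h => hanti.antitone (by omega), fun n => ?_,
    fun n s => ?_, fun n => ?_⟩
  · refine le_trans (Summable.sum_le_tsum _ (fun i _ => (hu1 _).1.le) ?_) hN.le
    exact (summable_nat_add_iff N).2 hsm'
  · have h := heq (n + N)
    have h2 := Finset.single_le_sum (f := fun s => |V (u (n+N)) s - V (u (n+N+1)) s|)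
      (fun _ _ => abs_nonneg _) (Finset.mem_univ s)
    have h3 := hanti (Nat.lt_succ_self (n+N))
    simp only [show n + 1 + N = n + N + 1 by ring]
    simp only [Nat.succ_eq_add_one] at h3 h2
    linarith
  · have h := heq (n + N)
    have h2 : 0 ≤ ∑ s, |V (u (n+N)) s - V (u (n+N+1)) s| :=
      Finset.sum_nonneg fun _ _ => abs_nonneg _
    simp only [show n + 1 + N = n + N + 1 by ring]
    linarith

theorem CSB.schedule {S : Type*} [Fintype S] {V : ℝ → S → ℝ}
    (hc : ∀ s, ContinuousOn (fun l => V l s) (Set.Ioo 0 1)) {B : ℝ}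
    (hB : ∀ u : ℕ → ℝ, StrictAnti u → (∀ n, u n ∈ Set.Ioo (0:ℝ) 1) →
        ∀ n, ∑ i ∈ Finset.range n, ∑ s, |V (u i) s - V (u (i+1)) s| ≤ B)
    {ε : ℝ} (hε : 0 < ε) (hε1 : ε ≤ 1) {L : ℕ} (hL : 1 ≤ L) :
    ∃ u : ℕ → ℝ, (∀ n, u n ∈ Set.Ioo (0:ℝ) 1) ∧ Antitone u ∧
      (∀ n, ∑ j ∈ Finset.range n, u j ≤ ε) ∧
      (∀ m m' : ℕ, m ≤ m' + 2 * L → m' ≤ m + 2 * L →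
        (∀ s, |V (u m') s - V (u m) s| ≤ ε * u m) ∧
        u m * ((m':ℝ) - m) / L - ε * u m ≤
          (∑ j ∈ Finset.range m', u j - ∑ j ∈ Finset.range m, u j) / L) := by
  have hL0 : (1:ℝ) ≤ L := by exact_mod_cast hL
  set η : ℝ := ε / (8 * L) with hηdef
  have hη : 0 < η := by positivity
  have hηL : η * (8 * L) = ε := div_mul_cancel₀ _ (by positivity)
  obtain ⟨u, hu1, hanti, hsum, hV, hd⟩ := CSB.schedule0 hc hB hη hε
  refine ⟨u, hu1, hanti, hsum, ?_⟩
  have hdk : ∀ m k, u m - u (m+k) ≤ k * η * u m := by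
    intro m k
    induction k with
    | zero => simp
    | succ k ih =>
      have h1 := hd (m+k)
      have h2 := hanti (show m ≤ m + k + 1 by omega)
      have h3 := mul_le_mul_of_nonneg_left h2 hη.le
      rw [← add_assoc]
      push_cast
      linarith
  have hVk : ∀ m k s, |V (u m) s - V (u (m+k)) s| ≤ k * η * u m := by
    intro m k s
    induction k with
    | zero => simp
    | succ k ih =>
      have h1 := hV (m+k) s
      have h2 := hanti (show m ≤ m + k + 1 by omega)
      have h3 := mul_le_mul_of_nonneg_left h2 hη.le
      have h4 := abs_sub_le (V (u m) s) (V (u (m+k)) s) (V (u (m+k+1)) s)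
      rw [← add_assoc]
      push_cast
      linarith
  have hkη : ∀ m k : ℕ, k ≤ 2 * L → k * η * u m ≤ ε / 4 * u m := by
    intro m k hk
    have : (k:ℝ) ≤ 2 * L := by exact_mod_cast hk
    refine mul_le_mul_of_nonneg_right ?_ (hu1 m).1.le
    nlinarith
  have hhalf : ∀ m k : ℕ, k ≤ 2 * L → u m ≤ 2 * u (m+k) := by
    intro m k hk
    have h1 := hdk m k
    have h2 := hkη m k hk
    have h3 := mul_le_mul_of_nonneg_right hε1 (hu1 m).1.le
    linarith [(hu1 m).1]
  intro m m' h1 h2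
  rcases le_total m m' with h | h
  · obtain ⟨k, rfl⟩ := Nat.exists_eq_add_of_le h
    have hk : k ≤ 2 * L := by omega
    have hkR : (k:ℝ) ≤ 2 * L := by exact_mod_cast hk
    have hum := (hu1 m).1
    refine ⟨fun s => ?_, ?_⟩
    · rw [abs_sub_comm]
      refine (hVk m k s).trans ((hkη m k hk).trans ?_)
      nlinarith [mul_pos hε hum]
    · rw [Finset.sum_range_add, add_sub_cancel_left, le_div_iff₀ (by linarith), sub_mul,
        div_mul_cancel₀ _ (by positivity)]
      have : ∑ x ∈ Finset.range k, u (m + x) ≥ ∑ x ∈ Finset.range k, (u m - ε / 4 * u m) := by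
        refine Finset.sum_le_sum fun x hx => ?_
        have hx := Finset.mem_range.1 hx
        linarith [hdk m x, hkη m x (by omega)]
      rw [Finset.sum_const, Finset.card_range, nsmul_eq_mul] at this
      push_cast
      nlinarith [mul_nonneg (mul_pos hε hum).le (sub_nonneg.2 hkR), mul_pos (mul_pos hε hum) (show (0:ℝ) < L by linarith)]
  · obtain ⟨k, rfl⟩ := Nat.exists_eq_add_of_le h
    have hk : k ≤ 2 * L := by omega
    have hkR : (k:ℝ) ≤ 2 * L := by exact_mod_cast hk
    have hum := (hu1 (m'+k)).1
    have hh := hhalf m' k hk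
    refine ⟨fun s => ?_, ?_⟩
    · refine (hVk m' k s).trans ((hkη m' k hk).trans ?_)
      nlinarith [mul_pos hε hum, mul_le_mul_of_nonneg_left hh hε.le]
    · rw [Finset.sum_range_add, sub_add_cancel_left, le_div_iff₀ (by linarith), sub_mul,
        div_mul_cancel₀ _ (by positivity)]
      have : ∑ x ∈ Finset.range k, u (m' + x) ≤
          ∑ x ∈ Finset.range k, (u (m'+k) + ε / 2 * u (m'+k)) := by
        refine Finset.sum_le_sum fun x hx => ?_
        have hx := Finset.mem_range.1 hx
        have h3 := hanti (show m' ≤ m' + x by omega)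
        have h4 := mul_le_mul_of_nonneg_left hh hε.le
        linarith [hdk m' k, hkη m' k hk]
      rw [Finset.sum_const, Finset.card_range, nsmul_eq_mul] at this
      push_cast
      nlinarith [mul_nonneg (mul_pos hε hum).le (sub_nonneg.2 hkR), mul_pos (mul_pos hε hum) (show (0:ℝ) < L by linarith)]

theorem CSB.exists_pmf {I : Type*} [Fintype I] {x : I → ℝ} (hx : x ∈ stdSimplex ℝ I) :
    ∃ p : PMF I, ∀ i, (p i).toReal = x i := by
  refine ⟨PMF.ofFintype (fun i => ENNReal.ofReal (x i)) ?_, fun i => ?_⟩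
  · rw [← ENNReal.ofReal_sum_of_nonneg fun i _ => hx.1 i, hx.2, ENNReal.ofReal_one]
  · rw [PMF.ofFintype_apply, ENNReal.toReal_ofReal (hx.1 i)]

theorem CSB.pmf_mem {I : Type*} [Fintype I] (p : PMF I) :
    (fun i => (p i).toReal) ∈ stdSimplex ℝ I := by
  refine ⟨fun i => ENNReal.toReal_nonneg, ?_⟩
  rw [← ENNReal.toReal_sum fun i _ => p.apply_ne_top i, ← tsum_fintype (L := .unconditional I),
    p.tsum_coe, ENNReal.toReal_one]

/-- The update of the counter. -/
def CSB.upd (L : ℕ) (ε : ℝ) (m : ℕ) (ρ w : ℝ) : ℕ := ((m:ℤ) + ⌈L * (ρ - w + 3 * ε)⌉).toNat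

theorem CSB.upd_spec {L : ℕ} (hL : 1 ≤ L) {ε : ℝ} (hε : 0 < ε) (hε1 : 3 * ε ≤ 1) (m : ℕ) {ρ w : ℝ}
    (hρ : ρ ∈ Set.Icc (0:ℝ) 1) (hw : w ∈ Set.Icc (0:ℝ) 1) :
    m ≤ CSB.upd L ε m ρ w + 2 * L ∧ CSB.upd L ε m ρ w ≤ m + 2 * L ∧
    ρ - w + 3 * ε ≤ ((CSB.upd L ε m ρ w : ℝ) - m) / L ∧
    (L ≤ m → ((CSB.upd L ε m ρ w : ℝ) - m) / L ≤ ρ - w + 3 * ε + 1 / L) ∧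
    ((CSB.upd L ε m ρ w : ℝ) - m) / L ≤ ρ - w + 3 * ε + 1 / L + 1 := by
  have hL0 : (1:ℝ) ≤ L := by exact_mod_cast hL
  have hLp : (0:ℝ) < L := by linarith
  set z : ℤ := ⌈L * (ρ - w + 3 * ε)⌉ with hz
  have h1 : L * (ρ - w + 3 * ε) ≤ z := Int.le_ceil _
  have h2 : (z:ℝ) < L * (ρ - w + 3 * ε) + 1 := Int.ceil_lt_add_one _
  have h3 : z ≤ 2 * L := by
    rw [hz, Int.ceil_le]
    push_cast
    nlinarith [hρ.2, hw.1]
  have h4 : -(L:ℤ) ≤ z := by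
    have : -(L:ℝ) ≤ z := by nlinarith [hρ.1, hw.2]
    exact_mod_cast this
  have hu : CSB.upd L ε m ρ w = ((m:ℤ) + z).toNat := rfl
  set m' := CSB.upd L ε m ρ w with hm'
  have hle : (m:ℤ) + z ≤ m' := by omega
  have hleR : (m:ℝ) + z ≤ m' := by exact_mod_cast hle
  refine ⟨by omega, by omega, ?_, fun h => ?_, ?_⟩
  · rw [le_div_iff₀ hLp]; nlinarith
  · have : (m':ℤ) = m + z := by omega
    have : (m':ℝ) = m + z := by exact_mod_cast this
    rw [div_le_iff₀ hLp, add_mul, one_div_mul_cancel hLp.ne']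
    nlinarith
  · rw [div_le_iff₀ hLp, add_mul, add_mul, one_div_mul_cancel hLp.ne', one_mul]
    by_cases h : 0 ≤ (m:ℤ) + z
    · have : (m':ℤ) = m + z := by omega
      have : (m':ℝ) = m + z := by exact_mod_cast this
      nlinarith
    · have : (m':ℤ) = 0 := by omega
      have : (m':ℝ) = 0 := by exact_mod_cast this
      have h5 : (0:ℝ) ≤ m := Nat.cast_nonneg _
      nlinarith [mul_nonneg hLp.le (show 0 ≤ ρ - w + 3 * ε + 1 by linarith [hρ.1, hw.2])]

section
variable {K S I J : Type*} [Fintype K] [Fintype I] [Fintype J]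

def CSB.step (δ : S → I → J → S) (r : S → I → J → ℝ) (L : ℕ) (ε : ℝ) (vv : ℕ → S → ℝ)
    (a : S × ℕ) (b : I × J) : S × ℕ :=
  (δ a.1 b.1 b.2, CSB.upd L ε a.2 (r a.1 b.1 b.2) (vv a.2 (δ a.1 b.1 b.2)))

theorem CSB.guarantee (q : K → I → J → K → ℝ) (g : K → I → J → ℝ) (p₁ : K → ℝ)
    (δ : S → I → J → S) (r : S → I → J → ℝ) (hr : ∀ s i j, r s i j ∈ Set.Icc (0:ℝ) 1) (s₀ : S)
    {ε : ℝ} (hε : 0 < ε) (hε1 : 3 * ε ≤ 1) {L : ℕ} (hL : 1 ≤ L) (hLε : 1 / (L:ℝ) ≤ ε)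
    (happrox : ∀ (h : List (I × J)) (i : I) (j : J),
      |gTilde g (h.foldl (fun p a => qTilde q p a.1 a.2) p₁) i j
        - r (h.foldl (fun s a => δ s a.1 a.2) s₀) i j| ≤ ε)
    (u : ℕ → ℝ) (hu : ∀ n, u n ∈ Set.Ioo (0:ℝ) 1) (hanti : Antitone u)
    (hsum : ∀ n, ∑ j ∈ Finset.range n, u j ≤ ε)
    (vv : ℕ → S → ℝ) (hvv : ∀ m s, vv m s ∈ Set.Icc (0:ℝ) 1)
    (hsch : ∀ m m' : ℕ, m ≤ m' + 2 * L → m' ≤ m + 2 * L →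
        (∀ s, |vv m' s - vv m s| ≤ ε * u m) ∧
        u m * ((m':ℝ) - m) / L - ε * u m ≤
          (∑ j ∈ Finset.range m', u j - ∑ j ∈ Finset.range m, u j) / L)
    (hval : ∀ m s, ∃ x ∈ stdSimplex ℝ I, ∀ j,
      vv m s ≤ ∑ i, x i * CSB.aux δ r (u m) (vv m) s i j) :
    ∃ (σ : List (I × J) → PMF I) (C : ℝ), ∀ τ n,
      n * (vv 0 s₀ - 7 * ε) - C ≤ expPaySB q g σ τ n p₁ [] := by
  classical
  have hL0 : (1:ℝ) ≤ L := by exact_mod_cast hL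
  have hLp : (0:ℝ) < L := by linarith
  choose x hx hxv using hval
  choose X hX using fun m s => CSB.exists_pmf (hx m s)
  let st : List (I × J) → S × ℕ := fun h => h.foldl (CSB.step δ r L ε vv) (s₀, 0)
  let Λ : ℕ → ℝ := fun m => (∑ j ∈ Finset.range m, u j) / L
  have hΛ0 : ∀ m, 0 ≤ Λ m := fun m =>
    div_nonneg (Finset.sum_nonneg fun j _ => (hu j).1.le) hLp.le
  have hΛ1 : ∀ m, Λ m ≤ ε := fun m => by
    refine (div_le_self (Finset.sum_nonneg fun j _ => (hu j).1.le) hL0).trans (hsum m)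
  have huε : ∀ m, u m ≤ ε := fun m => by
    refine le_trans ?_ (hsum (m+1))
    exact Finset.single_le_sum (fun j _ => (hu j).1.le) (Finset.self_mem_range_succ m)
  let A : ℝ := 1 / (ε * u L)
  have hA : 0 < A := one_div_pos.2 (mul_pos hε (hu L).1)
  have hAm : ∀ m, m ≤ L → 1 ≤ A * (ε * u m) := fun m hm => by
    have h1 : A * (ε * u L) = 1 := one_div_mul_cancel (mul_pos hε (hu L).1).ne'
    rw [← h1]
    exact mul_le_mul_of_nonneg_left (mul_le_mul_of_nonneg_left (hanti hm) hε.le) hA.le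
  let F : ℕ → S × ℕ → ℝ := fun n a =>
    n * (vv a.2 a.1 + Λ a.2 - 7 * ε) + A * (vv a.2 a.1 + Λ a.2) - a.2 / L - 2 * A
  have hstep : ∀ (n : ℕ) (a : S × ℕ) (i : I) (j : J),
      (n + A + 1) * CSB.aux δ r (u a.2) (vv a.2) a.1 i j +
        ((n + A) * Λ a.2 - a.2 / L - (n+1) * (7 * ε) + ε - 2 * A) ≤
      r a.1 i j - ε + F n (CSB.step δ r L ε vv a (i, j)) := by
    rintro n ⟨s, m⟩ i j
    simp only [F, CSB.step]
    set ρ := r s i j with hρdef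
    have hρ := hr s i j
    rw [← hρdef] at hρ
    set s' := δ s i j with hs'
    set w := vv m s' with hw
    have hw1 : w ∈ Set.Icc (0:ℝ) 1 := hvv m s'
    obtain ⟨c1, c2, c3, c4, c5⟩ := CSB.upd_spec hL hε hε1 m hρ hw1
    set m' := CSB.upd L ε m ρ w with hm'
    obtain ⟨d1, d2⟩ := hsch m m' c1 c2
    have d1 := (abs_le.1 (d1 s')).1
    have haux : CSB.aux δ r (u m) (vv m) s i j = u m * ρ + (1 - u m) * w := rfl
    rw [haux]
    have hum := hu m
    have hY : u m * ρ + (1 - u m) * w + Λ m + ε * u m ≤ vv m' s' + Λ m' := by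
      have e1 : Λ m' - Λ m = (∑ j ∈ Finset.range m', u j - ∑ j ∈ Finset.range m, u j) / L := by
        simp only [Λ]; ring
      have e2 : u m * (ρ - w + 3 * ε) ≤ u m * ((m':ℝ) - m) / L := by
        rw [mul_div_assoc]; exact mul_le_mul_of_nonneg_left c3 hum.1.le
      rw [← hw] at d1
      nlinarith
    set Z := u m * ρ + (1 - u m) * w with hZ
    have hwZ : Z ≤ w + ε := by
      have := huε m
      nlinarith [mul_nonneg hum.1.le (sub_nonneg.2 hρ.2), mul_nonneg hum.1.le hw1.1]
    have hnA : (0:ℝ) ≤ n + A := by positivity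
    have hYn := mul_le_mul_of_nonneg_left hY hnA
    have hn0 : 0 ≤ (n:ℝ) * (ε * u m) := by have := hum.1; positivity
    have hsplit : ((m':ℝ) - m) / L = m' / L - m / L := sub_div _ _ _
    rw [hsplit] at c4 c5
    by_cases hmL : L ≤ m
    · have := c4 hmL
      have : 0 ≤ A * (ε * u m) := by have := hum.1; positivity
      nlinarith
    · have := hAm m (by omega)
      nlinarith
  refine ⟨fun h => X (st h).2 (st h).1, 2 * A, fun τ => ?_⟩
  have hfst : ∀ h, (st h).1 = h.foldl (fun s a => δ s a.1 a.2) s₀ := by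
    intro h
    induction h using List.reverseRecOn with
    | nil => rfl
    | append_singleton h a ih =>
      simp only [st, List.foldl_append, List.foldl_cons, List.foldl_nil]
      simp only [st] at ih
      rw [CSB.step, ih]
  have main : ∀ (n : ℕ) (h : List (I × J)), F n (st h) ≤
      expPaySB q g (fun h => X (st h).2 (st h).1) τ n
        (h.foldl (fun p a => qTilde q p a.1 a.2) p₁) h := by
    intro n
    induction n with
    | zero =>
      intro h
      simp only [F, expPaySB]
      have h1 := (hvv (st h).2 (st h).1).2
      have h2 := hΛ1 (st h).2
      have h3 : 0 ≤ ((st h).2:ℝ) / L := by positivity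
      push_cast
      nlinarith
    | succ n ih =>
      intro h
      rw [expPaySB]
      have hy := CSB.pmf_mem (τ h)
      simp only [hX]
      have key : ∀ j, F (n+1) (st h) ≤ ∑ i, x (st h).2 (st h).1 i *
          (gTilde g (h.foldl (fun p a => qTilde q p a.1 a.2) p₁) i j +
            expPaySB q g (fun h => X (st h).2 (st h).1) τ n
              (qTilde q (h.foldl (fun p a => qTilde q p a.1 a.2) p₁) i j) (h ++ [(i, j)])) := by
        intro j
        have hx' := hx (st h).2 (st h).1
        calc F (n+1) (st h) ≤ (n + A + 1) * vv (st h).2 (st h).1 +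
              ((n + A) * Λ (st h).2 - (st h).2 / L - (n+1) * (7 * ε) + ε - 2 * A) := by
              simp only [F]
              have := hΛ1 (st h).2
              push_cast
              nlinarith
          _ ≤ (n + A + 1) * (∑ i, x (st h).2 (st h).1 i *
                CSB.aux δ r (u (st h).2) (vv (st h).2) (st h).1 i j) +
              ((n + A) * Λ (st h).2 - (st h).2 / L - (n+1) * (7 * ε) + ε - 2 * A) := by
              have := hxv (st h).2 (st h).1 j
              have h0 : (0:ℝ) ≤ n + A + 1 := by positivity
              nlinarith [mul_le_mul_of_nonneg_left this h0]
          _ = ∑ i, x (st h).2 (st h).1 i * ((n + A + 1) *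
                CSB.aux δ r (u (st h).2) (vv (st h).2) (st h).1 i j +
              ((n + A) * Λ (st h).2 - (st h).2 / L - (n+1) * (7 * ε) + ε - 2 * A)) := by
              simp only [mul_add (x _ _ _), Finset.sum_add_distrib]
              rw [← Finset.sum_mul, hx'.2, one_mul, Finset.mul_sum]
              congr 1
              exact Finset.sum_congr rfl fun i _ => by ring
          _ ≤ _ := by
              refine CSB.wsum_mono hx' fun i => (hstep n (st h) i j).trans ?_
              have h1 := ih (h ++ [(i, j)])
              have h2 := (abs_le.1 (happrox h i j)).1
              rw [← hfst] at h2
              have h3 : st (h ++ [(i, j)]) = CSB.step δ r L ε vv (st h) (i, j) := by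
                simp only [st, List.foldl_append, List.foldl_cons, List.foldl_nil]
              rw [h3] at h1
              simp only [List.foldl_append, List.foldl_cons, List.foldl_nil] at h1
              linarith
      refine (CSB.le_wsum hy key).trans (le_of_eq ?_)
      rw [CSB.wsum_swap]
      refine Finset.sum_congr rfl fun i _ => ?_
      rw [Finset.mul_sum]
      exact Finset.sum_congr rfl fun j _ => by ring
  intro n
  refine le_trans ?_ (main n [])
  have h0 : st [] = (s₀, 0) := rfl
  have hΛ : Λ 0 = 0 := by simp [Λ]
  simp only [h0, F, hΛ]
  have := mul_nonneg hA.le (hvv 0 s₀).1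
  push_cast
  simp only [add_zero, zero_div, sub_zero]
  linarith
end

section
variable {K S I J : Type*} [Fintype K] [Fintype I] [Fintype J]

theorem CSB.qTilde_mem {q : K → I → J → K → ℝ} (hq : ∀ k i j, q k i j ∈ stdSimplex ℝ K)
    {p : K → ℝ} (hp : p ∈ stdSimplex ℝ K) (i : I) (j : J) : qTilde q p i j ∈ stdSimplex ℝ K := by
  refine ⟨fun k => Finset.sum_nonneg fun k' _ => mul_nonneg (hp.1 k') ((hq k' i j).1 k), ?_⟩
  simp only [qTilde]
  rw [Finset.sum_comm]
  simp only [← Finset.mul_sum, (hq _ i j).2, mul_one, hp.2]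

theorem CSB.foldl_mem {q : K → I → J → K → ℝ} (hq : ∀ k i j, q k i j ∈ stdSimplex ℝ K)
    (h : List (I × J)) {p : K → ℝ} (hp : p ∈ stdSimplex ℝ K) :
    h.foldl (fun p a => qTilde q p a.1 a.2) p ∈ stdSimplex ℝ K := by
  induction h generalizing p with
  | nil => exact hp
  | cons a h ih => exact ih (CSB.qTilde_mem hq hp _ _)

theorem CSB.gTilde_swap (g : K → I → J → ℝ) {p : K → ℝ} (hp : p ∈ stdSimplex ℝ K) (i : I) (j : J) :
    gTilde (fun k j i => 1 - g k i j) p j i = 1 - gTilde g p i j := by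
  simp only [gTilde, mul_sub, mul_one, Finset.sum_sub_distrib, hp.2]

theorem CSB.expPay_swap {q : K → I → J → K → ℝ} (hq : ∀ k i j, q k i j ∈ stdSimplex ℝ K)
    (g : K → I → J → ℝ) (σ : List (I × J) → PMF I) (τ : List (J × I) → PMF J) (n : ℕ) :
    ∀ (p : K → ℝ) (_ : p ∈ stdSimplex ℝ K) (h : List (I × J)),
    expPaySB q g σ (fun h => τ (h.map Prod.swap)) n p h =
      n - expPaySB (fun k j i => q k i j) (fun k j i => 1 - g k i j) τ
        (fun h => σ (h.map Prod.swap)) n p (h.map Prod.swap) := by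
  induction n with
  | zero => intro p hp h; simp [expPaySB]
  | succ n ih =>
    intro p hp h
    have hs : (h.map Prod.swap).map Prod.swap = h := by simp
    rw [expPaySB, expPaySB, eq_sub_iff_add_eq, Finset.sum_comm, ← Finset.sum_add_distrib]
    simp only [← Finset.sum_add_distrib, hs]
    have h1 := (CSB.pmf_mem (σ h)).2
    have h2 := (CSB.pmf_mem (τ (h.map Prod.swap))).2
    calc _ = ∑ j, ∑ i, ((τ (h.map Prod.swap)) j).toReal * ((σ h i).toReal * ((n:ℝ) + 1)) := by
          refine Finset.sum_congr rfl fun j _ => Finset.sum_congr rfl fun i _ => ?_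
          rw [ih _ (CSB.qTilde_mem hq hp i j), CSB.gTilde_swap g hp]
          simp only [List.map_append, List.map_cons, List.map_nil, Prod.swap_prod_mk]
          have : qTilde (fun k j i => q k i j) p j i = qTilde q p i j := rfl
          rw [this]
          ring
      _ = _ := by
          simp only [← Finset.mul_sum, ← Finset.sum_mul, h1, h2]
          push_cast; ring
end

section
variable {K S I J : Type*} [Fintype K] [Fintype I] [Nonempty I] [Fintype J] [Nonempty J]
  [Fintype S]

theorem CSB.two_sided {q : K → I → J → K → ℝ} (hq : ∀ k i j, q k i j ∈ stdSimplex ℝ K)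
    (g : K → I → J → ℝ) {p₁ : K → ℝ} (hp₁ : p₁ ∈ stdSimplex ℝ K)
    (δ : S → I → J → S) (r : S → I → J → ℝ) (hr : ∀ s i j, r s i j ∈ Set.Icc (0:ℝ) 1) (s₀ : S)
    {ε : ℝ} (hε : 0 < ε) (hε1 : 3 * ε ≤ 1)
    (happrox : ∀ (h : List (I × J)) (i : I) (j : J),
      |gTilde g (h.foldl (fun p a => qTilde q p a.1 a.2) p₁) i j
        - r (h.foldl (fun s a => δ s a.1 a.2) s₀) i j| ≤ ε) :
    ∃ w : ℝ, (∃ (σ : List (I × J) → PMF I) (C : ℝ), ∀ τ n,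
        n * (w - 7 * ε) - C ≤ expPaySB q g σ τ n p₁ []) ∧
      (∃ (τ : List (I × J) → PMF J) (C : ℝ), ∀ σ n,
        expPaySB q g σ τ n p₁ [] ≤ n * (w + 7 * ε) + C) := by
  classical
  have : Nonempty S := ⟨s₀⟩
  obtain ⟨V, hV, hV01, hVc, B, hB⟩ := CSB.exists_V δ r hr
  obtain ⟨L, hL⟩ := exists_nat_gt (1 / ε)
  have hLpos : (0:ℝ) < L := lt_trans (by positivity) hL
  have hL1 : 1 ≤ L := by exact_mod_cast hLpos
  have hLε : 1 / (L:ℝ) ≤ ε := by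
    rw [div_lt_iff₀ hε] at hL
    rw [div_le_iff₀ hLpos]; linarith
  obtain ⟨u, hu, hanti, hsum, hsch⟩ := CSB.schedule hVc hB hε (by linarith) hL1
  refine ⟨V (u 0) s₀, ?_, ?_⟩
  · refine CSB.guarantee q g p₁ δ r hr s₀ hε hε1 hL1 hLε happrox u hu hanti hsum
      (fun m => V (u m)) (fun m s => hV01 _ (hu m) s) hsch fun m s => ?_
    obtain ⟨x, hx, y, hy, h1, h2⟩ := hV (u m) (hu m) s
    exact ⟨x, hx, h1⟩
  · obtain ⟨τ, C, hτ⟩ := CSB.guarantee (fun k j i => q k i j) (fun k j i => 1 - g k i j) p₁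
      (fun s j i => δ s i j) (fun s j i => 1 - r s i j)
      (fun s j i => ⟨by linarith [(hr s i j).2], by linarith [(hr s i j).1]⟩) s₀ hε hε1 hL1 hLε
      (by
        intro h j i
        have h1 := happrox (h.map Prod.swap) i j
        rw [List.foldl_map, List.foldl_map] at h1
        have h2 : h.foldl (fun p a => qTilde (fun k j i => q k i j) p a.1 a.2) p₁ ∈
            stdSimplex ℝ K := CSB.foldl_mem (fun k j i => hq k i j) h hp₁
        rw [CSB.gTilde_swap g h2, sub_sub_sub_cancel_left]
        rw [abs_sub_comm] at h1
        exact h1)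
      u hu hanti hsum (fun m s => 1 - V (u m) s)
      (fun m s => ⟨by linarith [(hV01 _ (hu m) s).2], by linarith [(hV01 _ (hu m) s).1]⟩)
      (fun m m' h1 h2 => ⟨fun s => by
        have := (hsch m m' h1 h2).1 s
        rw [abs_sub_comm] at this
        convert this using 2
        ring, (hsch m m' h1 h2).2⟩)
      (fun m s => by
        obtain ⟨x, hx, y, hy, h1, h2⟩ := hV (u m) (hu m) s
        refine ⟨y, hy, fun i => ?_⟩
        have h3 := h2 i
        have : ∑ j, y j * CSB.aux (fun s j i => δ s i j) (fun s j i => 1 - r s i j) (u m)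
            (fun s => 1 - V (u m) s) s j i = 1 - ∑ j, y j * CSB.aux δ r (u m) (V (u m)) s i j := by
          rw [show (1:ℝ) - ∑ j, y j * CSB.aux δ r (u m) (V (u m)) s i j = ∑ j, y j -
            ∑ j, y j * CSB.aux δ r (u m) (V (u m)) s i j by rw [hy.2], ← Finset.sum_sub_distrib]
          refine Finset.sum_congr rfl fun j _ => ?_
          simp only [CSB.aux]; ring
        rw [this]
        linarith)
    refine ⟨fun h => τ (h.map Prod.swap), C, fun σ n => ?_⟩
    rw [CSB.expPay_swap hq g σ τ n p₁ hp₁]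
    have := hτ (fun h => σ (h.map Prod.swap)) n
    simp only [List.map_nil]
    linarith
end

section
open scoped Matrix.Norms.Operator
open Matrix
variable {K : Type*} [Fintype K] [DecidableEq K]

theorem CSB.norm_le_one {A : Matrix K K ℝ} (hA : A ∈ rowStochastic ℝ K) : ‖A‖ ≤ 1 := by
  rw [linfty_opNorm_def, ← NNReal.coe_one, NNReal.coe_le_coe]
  refine Finset.sup_le fun i _ => ?_
  rw [← NNReal.coe_le_coe]
  push_cast
  rw [← sum_row_of_mem_rowStochastic hA i]
  exact Finset.sum_le_sum fun j _ => by
    rw [Real.norm_of_nonneg (nonneg_of_mem_rowStochastic hA)]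

theorem CSB.isClosed_sto : IsClosed (rowStochastic ℝ K : Set (Matrix K K ℝ)) := by
  have : (rowStochastic ℝ K : Set (Matrix K K ℝ)) =
      (⋂ i, ⋂ j, {M | 0 ≤ M i j}) ∩ ⋂ i, {M | ∑ j, M i j = 1} := by
    ext M
    simp [mem_rowStochastic_iff_sum]
  rw [this]
  refine IsClosed.inter (isClosed_iInter fun i => isClosed_iInter fun j => ?_)
    (isClosed_iInter fun i => ?_)
  · exact isClosed_le continuous_const (continuous_id.matrix_elem i j)
  · exact isClosed_eq (continuous_finsetSum _ fun j _ => continuous_id.matrix_elem i j)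
      continuous_const

theorem CSB.isCompact_sto : IsCompact (rowStochastic ℝ K : Set (Matrix K K ℝ)) := by
  have : ProperSpace (Matrix K K ℝ) := FiniteDimensional.proper_real _
  refine (isCompact_closedBall (0 : Matrix K K ℝ) 1).of_isClosed_subset CSB.isClosed_sto ?_
  intro A hA
  simpa using CSB.norm_le_one hA

theorem CSB.exists_E {B : Matrix K K ℝ} (hB : B ∈ rowStochastic ℝ K) :
    ∃ E ∈ rowStochastic ℝ K, E * B = E ∧ B * E = E ∧ E * E = E ∧
      ∀ i j, (∀ k, (B ^ (k+1)) i j = 0) → E i j = 0 := by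
  let avg : ℕ → Matrix K K ℝ := fun n => ((n:ℝ)+1)⁻¹ • ∑ k ∈ Finset.range (n+1), B ^ (k+1)
  have havg : ∀ n, avg n ∈ rowStochastic ℝ K := by
    intro n
    rw [mem_rowStochastic_iff_sum]
    constructor
    · intro i j
      simp only [avg, Matrix.smul_apply, Matrix.sum_apply, smul_eq_mul]
      exact mul_nonneg (by positivity) (Finset.sum_nonneg fun k _ =>
        nonneg_of_mem_rowStochastic (pow_mem hB _))
    · intro i
      simp only [avg, Matrix.smul_apply, Matrix.sum_apply, smul_eq_mul]
      rw [← Finset.mul_sum, Finset.sum_comm]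
      simp only [sum_row_of_mem_rowStochastic (pow_mem hB _)]
      have : (n:ℝ) + 1 ≠ 0 := by positivity
      simp [this]
  have : FirstCountableTopology (Matrix K K ℝ) :=
    inferInstanceAs (FirstCountableTopology (K → K → ℝ))
  obtain ⟨E, hE, φ, hφ, hlim⟩ := CSB.isCompact_sto.tendsto_subseq havg
  have hcomm : ∀ n, avg n * B = B * avg n := by
    intro n
    simp only [avg, Matrix.smul_mul, Matrix.mul_smul, Finset.sum_mul, Finset.mul_sum]
    congr 1
    exact Finset.sum_congr rfl fun k _ => by rw [← pow_succ, ← pow_succ']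
  have hdiff : ∀ n, ‖avg n * B - avg n‖ ≤ 2 * ((n:ℝ)+1)⁻¹ := by
    intro n
    have : avg n * B - avg n = ((n:ℝ)+1)⁻¹ • (B ^ (n+2) - B) := by
      simp only [avg, Matrix.smul_mul, Finset.sum_mul, ← smul_sub, ← Finset.sum_sub_distrib, ← pow_succ]
      congr 1
      have := Finset.sum_range_sub (fun k => B ^ (k+1)) (n+1)
      simpa using this
    rw [this, norm_smul, Real.norm_of_nonneg (by positivity), mul_comm]
    refine mul_le_mul_of_nonneg_right ?_ (by positivity)
    refine (norm_sub_le _ _).trans ?_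
    linarith [CSB.norm_le_one (pow_mem hB (n+2)), CSB.norm_le_one hB]
  have hEB : E * B = E := by
    have h1 : Tendsto (fun n => avg (φ n) * B - avg (φ n)) atTop (𝓝 (E * B - E)) :=
      (hlim.mul_const B).sub hlim
    have h2 : Tendsto (fun n => avg (φ n) * B - avg (φ n)) atTop (𝓝 0) := by
      refine squeeze_zero_norm (fun n => hdiff (φ n)) ?_
      have : Tendsto (fun n : ℕ => 2 * ((n:ℝ)+1)⁻¹) atTop (𝓝 (2 * 0)) :=
        (tendsto_inv_atTop_zero.comp
          (tendsto_atTop_add_const_right _ _ tendsto_natCast_atTop_atTop)).const_mul 2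
      rw [mul_zero] at this
      exact this.comp hφ.tendsto_atTop
    exact sub_eq_zero.1 (tendsto_nhds_unique h1 h2)
  have hBE : B * E = E := by
    have h1 : Tendsto (fun n => avg (φ n) * B) atTop (𝓝 (E * B)) := hlim.mul_const B
    have h2 : Tendsto (fun n => avg (φ n) * B) atTop (𝓝 (B * E)) := by
      simp only [hcomm]
      exact hlim.const_mul B
    rw [tendsto_nhds_unique h2 h1, hEB]
  have hEk : ∀ k, E * B ^ k = E := by
    intro k
    induction k with
    | zero => simp
    | succ k ih => rw [pow_succ, ← mul_assoc, ih, hEB]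
  have hEavg : ∀ n, E * avg n = E := by
    intro n
    simp only [avg, Matrix.mul_smul, Finset.mul_sum, hEk]
    rw [Finset.sum_const, Finset.card_range, ← Nat.cast_smul_eq_nsmul ℝ, smul_smul]
    have : (n:ℝ) + 1 ≠ 0 := by positivity
    push_cast
    rw [inv_mul_cancel₀ this, one_smul]
  refine ⟨E, hE, hEB, hBE, ?_, ?_⟩
  · have h1 : Tendsto (fun n => E * avg (φ n)) atTop (𝓝 (E * E)) := hlim.const_mul E
    simp only [hEavg] at h1
    exact (tendsto_nhds_unique h1 tendsto_const_nhds)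
  · intro i j h
    have h1 : Tendsto (fun n => avg (φ n) i j) atTop (𝓝 (E i j)) :=
      ((continuous_id.matrix_elem i j).tendsto E).comp hlim
    have h2 : ∀ n, avg n i j = 0 := by
      intro n
      simp only [avg, Matrix.smul_apply, Matrix.sum_apply, smul_eq_mul]
      rw [Finset.sum_eq_zero fun k _ => h k, mul_zero]
    simp only [h2] at h1
    exact tendsto_nhds_unique h1 tendsto_const_nhds

/-- A stochastic matrix whose powers have constant support converges geometrically. -/
theorem CSB.conv_of_supp {B : Matrix K K ℝ} (hB : B ∈ rowStochastic ℝ K)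
    (hsupp : ∀ k i j, B i j = 0 → (B ^ (k+1)) i j = 0) :
    ∃ E : Matrix K K ℝ, Tendsto (fun n => ‖B ^ n - E‖) atTop (𝓝 0) := by
  obtain ⟨E, hE, hEB, hBE, hEE, hEs⟩ := CSB.exists_E hB
  -- the minorization constant
  obtain ⟨c, hc0, hc1, hc⟩ : ∃ c : ℝ, 0 < c ∧ c < 1 ∧ ∀ i j, c * E i j ≤ B i j := by
    have : ∀ x : K × K, ∃ c : ℝ, 0 < c ∧ c < 1 ∧ c * E x.1 x.2 ≤ B x.1 x.2 := by
      rintro ⟨i, j⟩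
      have hE0 := nonneg_of_mem_rowStochastic hE (i := i) (j := j)
      have hE1 := le_one_of_mem_rowStochastic hE (i := i) (j := j)
      have hB0 := nonneg_of_mem_rowStochastic hB (i := i) (j := j)
      have hB1 := le_one_of_mem_rowStochastic hB (i := i) (j := j)
      rcases hB0.eq_or_lt with h | h
      · refine ⟨1/2, by norm_num, by norm_num, ?_⟩
        simp only
        rw [hEs i j fun k => hsupp k i j h.symm, ← h, mul_zero]
      · exact ⟨B i j / 2, by linarith, by linarith, by simp only; nlinarith⟩
    choose c h0 h1 h2 using this
    rcases isEmpty_or_nonempty (K × K) with hK | hK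
    · exact ⟨1/2, by norm_num, by norm_num, fun i j => hK.elim (i, j)⟩
    · obtain ⟨x, hx⟩ := Finite.exists_min c
      refine ⟨c x, h0 x, h1 x, fun i j => le_trans ?_ (h2 (i, j))⟩
      exact mul_le_mul_of_nonneg_right (hx (i,j)) (nonneg_of_mem_rowStochastic hE)
  have hc' : (1 - c) ≠ 0 := by linarith
  let Q : Matrix K K ℝ := (1 - c)⁻¹ • (B - c • E)
  have hQ : Q ∈ rowStochastic ℝ K := by
    rw [mem_rowStochastic_iff_sum]
    constructor
    · intro i j
      simp only [Q, Matrix.smul_apply, Matrix.sub_apply, smul_eq_mul]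
      exact mul_nonneg (inv_nonneg.2 (by linarith)) (by linarith [hc i j])
    · intro i
      simp only [Q, Matrix.smul_apply, Matrix.sub_apply, smul_eq_mul]
      rw [← Finset.mul_sum, Finset.sum_sub_distrib, ← Finset.mul_sum,
        sum_row_of_mem_rowStochastic hB, sum_row_of_mem_rowStochastic hE, mul_one,
        inv_mul_cancel₀ hc']
  have hQE : Q * E = E := by
    simp only [Q, Matrix.smul_mul, sub_mul, hBE, hEE]
    rw [show E - c • E = (1 - c) • E by rw [sub_smul, one_smul], smul_smul, inv_mul_cancel₀ hc',
      one_smul]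
  have hEQ : E * Q = E := by
    simp only [Q, Matrix.mul_smul, Matrix.mul_sub, hEB, hEE]
    rw [show E - c • E = (1 - c) • E by rw [sub_smul, one_smul], smul_smul, inv_mul_cancel₀ hc',
      one_smul]
  have hpow : ∀ X : Matrix K K ℝ, X * E = E → E * X = E → ∀ n, (X - E) ^ (n+1) = X ^ (n+1) - E := by
    intro X h1 h2 n
    induction n with
    | zero => simp
    | succ n ih =>
      have h3 : ∀ k, X ^ k * E = E := fun k => by
        induction k with
        | zero => simp
        | succ k ih => rw [pow_succ, mul_assoc, h1, ih]
      rw [pow_succ, ih, sub_mul, mul_sub, mul_sub, h2, hEE, h3, ← pow_succ]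
      simp
  have hBQ : B - E = (1 - c) • (Q - E) := by
    simp only [Q, smul_sub, smul_smul, mul_inv_cancel₀ hc', one_smul]
    rw [← mul_assoc, mul_inv_cancel₀ hc', one_mul, sub_smul, one_smul]
    abel
  have hbound : ∀ n, ‖B ^ (n+1) - E‖ ≤ 2 * (1 - c) ^ (n+1) := by
    intro n
    rw [← hpow B hBE hEB, hBQ, smul_pow, hpow Q hQE hEQ, norm_smul, norm_pow,
      Real.norm_of_nonneg (by linarith), mul_comm]
    refine mul_le_mul_of_nonneg_right ?_ (pow_nonneg (by linarith) _)
    refine (norm_sub_le _ _).trans ?_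
    linarith [CSB.norm_le_one (pow_mem hQ (n+1)), CSB.norm_le_one hE]
  refine ⟨E, (tendsto_add_atTop_iff_nat 1).1 ?_⟩
  refine squeeze_zero (fun _ => norm_nonneg _) hbound ?_
  have := ((tendsto_pow_atTop_nhds_zero_of_lt_one (show 0 ≤ 1 - c by linarith)
    (by linarith)).const_mul 2)
  rw [mul_zero] at this
  exact this.comp (tendsto_add_atTop_nat 1)

/-- Supports of powers are eventually periodic. -/
theorem CSB.exists_supp_period {A : Matrix K K ℝ} (hA : A ∈ rowStochastic ℝ K) :
    ∃ N : ℕ, 1 ≤ N ∧ ∀ k i j, (A ^ N) i j = 0 → ((A ^ N) ^ (k+1)) i j = 0 := by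
  let s : ℕ → Set (K × K) := fun n => {x | (A ^ n) x.1 x.2 = 0}
  have hnn : ∀ n i j, 0 ≤ (A ^ n) i j := fun n i j =>
    nonneg_of_mem_rowStochastic (pow_mem hA n)
  have hs : ∀ m n k, s m = s n → s (m + k) = s (n + k) := by
    intro m n k h
    ext ⟨i, j⟩
    have h' : ∀ i j, (A ^ m) i j = 0 ↔ (A ^ n) i j = 0 := fun i j =>
      Set.ext_iff.1 h (i, j)
    simp only [s, Set.mem_ofPred_eq, pow_add, mul_apply]
    rw [Finset.sum_eq_zero_iff_of_nonneg fun l _ => mul_nonneg (hnn _ _ _) (hnn _ _ _),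
      Finset.sum_eq_zero_iff_of_nonneg fun l _ => mul_nonneg (hnn _ _ _) (hnn _ _ _)]
    simp only [mul_eq_zero, h']
  obtain ⟨a, b, hab, heq⟩ : ∃ a b, a < b ∧ s a = s b := by
    obtain ⟨a, b, hne, heq⟩ := Finite.exists_ne_map_eq_of_infinite s
    rcases lt_or_gt_of_ne hne with h | h
    · exact ⟨a, b, h, heq⟩
    · exact ⟨b, a, h, heq.symm⟩
  have hper : ∀ n, a ≤ n → s (n + (b - a)) = s n := by
    intro n hn
    have := hs a b (n - a) heq
    rw [show a + (n - a) = n by omega, show b + (n - a) = n + (b - a) by omega] at this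
    exact this.symm
  have hper' : ∀ t n, a ≤ n → s (n + t * (b - a)) = s n := by
    intro t
    induction t with
    | zero => intro n _; simp
    | succ t ih =>
      intro n hn
      rw [show n + (t+1) * (b - a) = (n + t * (b-a)) + (b - a) by ring,
        hper _ (by omega), ih n hn]
  have hba : 1 ≤ b - a := by omega
  refine ⟨(a+1) * (b - a), Nat.one_le_iff_ne_zero.2 (Nat.mul_ne_zero (by omega) (by omega)), ?_⟩
  intro k i j h
  rw [← pow_mul]
  have h1 : a ≤ (a+1) * (b - a) := by nlinarith
  have h2 := hper' (k * (a+1)) _ h1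
  have h3 : (i, j) ∈ s ((a+1) * (b - a) + k * (a+1) * (b - a)) := by
    rw [h2]; exact h
  rw [show (a+1) * (b - a) * (k+1) = (a+1) * (b - a) + k * (a+1) * (b - a) by ring]
  exact h3

theorem CSB.eventually_periodic {A : Matrix K K ℝ} (hA : A ∈ rowStochastic ℝ K) :
    ∃ D : ℕ, 1 ≤ D ∧ ∀ η > (0:ℝ), ∃ M, ∀ n ≥ M, ∀ k, ‖A ^ (n + k * D) - A ^ n‖ ≤ η := by
  obtain ⟨D, hD, hs⟩ := CSB.exists_supp_period hA
  obtain ⟨E, hE⟩ := CSB.conv_of_supp (pow_mem hA D) hs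
  refine ⟨D, hD, fun η hη => ?_⟩
  obtain ⟨M, hM⟩ := eventually_atTop.1 ((tendsto_order.1 hE).2 (η / 2) (half_pos hη))
  refine ⟨M * D, fun n hn k => ?_⟩
  have h1 : M ≤ n / D := (Nat.le_div_iff_mul_le hD).2 hn
  have h2 : ‖(A ^ D) ^ (n / D + k) - (A ^ D) ^ (n / D)‖ ≤ η := by
    have e1 := hM (n / D + k) (by omega)
    have e2 := hM (n / D) h1
    have e3 := norm_sub_le_norm_sub_add_norm_sub ((A ^ D) ^ (n / D + k)) E ((A ^ D) ^ (n / D))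
    rw [norm_sub_rev E] at e3
    linarith
  have h3 : n = D * (n / D) + n % D := (Nat.div_add_mod n D).symm
  have h4 : A ^ (n + k * D) - A ^ n = ((A ^ D) ^ (n / D + k) - (A ^ D) ^ (n / D)) * A ^ (n % D) := by
    rw [sub_mul, ← pow_mul, ← pow_mul, ← pow_add, ← pow_add, ← h3]
    congr 2
    rw [mul_add]
    nth_rewrite 1 [h3]
    ring
  rw [h4]
  calc _ ≤ _ := norm_mul_le _ _
    _ ≤ η * 1 := mul_le_mul h2 (CSB.norm_le_one (pow_mem hA _)) (norm_nonneg _) hη.le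
    _ = η := mul_one _
end

section
open scoped Matrix.Norms.Operator
open Matrix
variable {K : Type*} [Fintype K] [DecidableEq K]

theorem CSB.lasso {A : Matrix K K ℝ} (hA : A ∈ rowStochastic ℝ K) {η : ℝ} (hη : 0 < η) :
    ∃ (T : ℕ) (red : ℕ → ℕ), (∀ n, red n < T) ∧ (∀ n, red (red n + 1) = red (n + 1)) ∧
      ∀ n, ‖A ^ n - A ^ (red n)‖ ≤ η := by
  obtain ⟨D, hD, h⟩ := CSB.eventually_periodic hA
  obtain ⟨M, hM⟩ := h η hη
  refine ⟨M + D, fun n => if n < M then n else M + (n - M) % D, fun n => ?_, fun n => ?_,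
    fun n => ?_⟩
  · have := Nat.mod_lt (n - M) hD
    simp only
    split_ifs <;> omega
  · by_cases h1 : n < M
    · simp only [h1, if_true]
    · have e1 : ¬ (M + (n - M) % D + 1 < M) := by omega
      have e2 : ¬ (n + 1 < M) := by omega
      simp only [h1, e1, e2, if_false]
      rw [show M + (n - M) % D + 1 - M = (n - M) % D + 1 by omega,
        show n + 1 - M = (n - M) + 1 by omega, Nat.mod_add_mod]
  · by_cases h1 : n < M
    · simp only [h1, if_true, sub_self, norm_zero]; exact hη.le
    · simp only [h1, if_false]
      have h2 := hM (M + (n - M) % D) (by omega) ((n - M) / D)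
      rw [show M + (n - M) % D + (n - M) / D * D = n by
        have := Nat.div_add_mod (n - M) D
        rw [mul_comm] at this
        omega] at h2
      exact h2

theorem CSB.prod_step {α : Type*} [DecidableEq α] {A : α → Matrix K K ℝ}
    (hc : ∀ a b, Commute (A a) (A b)) (n : α → ℕ) (a : α) (l : List α) (hl : l.Nodup)
    (ha : a ∈ l) :
    (l.map fun b => A b ^ (n b + if b = a then 1 else 0)).prod =
      (l.map fun b => A b ^ n b).prod * A a := by
  induction l with
  | nil => simp at ha
  | cons b l ih =>
    rw [List.nodup_cons] at hl
    simp only [List.map_cons, List.prod_cons]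
    by_cases hab : b = a
    · subst hab
      have h1 : (l.map fun c => A c ^ (n c + if c = b then 1 else 0)) =
          l.map fun c => A c ^ n c := by
        refine List.map_congr_left fun c hc' => ?_
        rw [if_neg (by rintro rfl; exact hl.1 hc'), add_zero]
      have h2 : Commute (A b) (l.map fun c => A c ^ n c).prod := by
        refine Commute.list_prod_right _ _ fun x hx => ?_
        obtain ⟨c, _, rfl⟩ := List.mem_map.1 hx
        exact (hc b c).pow_right _
      rw [h1, if_pos rfl, pow_succ, mul_assoc, h2.eq, ← mul_assoc]
    · rw [if_neg hab, add_zero, ih hl.2 ((List.mem_cons.1 ha).resolve_left (Ne.symm hab)),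
        ← mul_assoc]

theorem CSB.prod_sto {α : Type*} {X : α → Matrix K K ℝ} (hX : ∀ a, X a ∈ rowStochastic ℝ K)
    (l : List α) : (l.map X).prod ∈ rowStochastic ℝ K := by
  refine list_prod_mem fun x hx => ?_
  obtain ⟨c, _, rfl⟩ := List.mem_map.1 hx
  exact hX c

theorem CSB.prod_close {α : Type*} {X Y : α → Matrix K K ℝ}
    (hX : ∀ a, X a ∈ rowStochastic ℝ K) (hY : ∀ a, Y a ∈ rowStochastic ℝ K) {η : ℝ} (hη : 0 ≤ η)
    (h : ∀ a, ‖X a - Y a‖ ≤ η) (l : List α) :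
    ‖(l.map X).prod - (l.map Y).prod‖ ≤ l.length * η := by
  induction l with
  | nil => simp
  | cons b l ih =>
    simp only [List.map_cons, List.prod_cons, List.length_cons]
    have : X b * (l.map X).prod - Y b * (l.map Y).prod =
        X b * ((l.map X).prod - (l.map Y).prod) + (X b - Y b) * (l.map Y).prod := by
      noncomm_ring
    rw [this]
    refine (norm_add_le _ _).trans ?_
    have h1 := norm_mul_le (X b) ((l.map X).prod - (l.map Y).prod)
    have h2 := norm_mul_le (X b - Y b) (l.map Y).prod
    have h3 := CSB.norm_le_one (hX b)
    have h4 := CSB.norm_le_one (CSB.prod_sto hY l)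
    have h5 := h b
    have h6 := mul_le_mul h3 ih (norm_nonneg _) zero_le_one
    have h7 := mul_le_mul h5 h4 (norm_nonneg _) hη
    push_cast
    linarith

theorem CSB.vecMul_mem {A : Matrix K K ℝ} (hA : A ∈ rowStochastic ℝ K) {p : K → ℝ}
    (hp : p ∈ stdSimplex ℝ K) : p ᵥ* A ∈ stdSimplex ℝ K := by
  refine ⟨fun k => Finset.sum_nonneg fun k' _ => mul_nonneg (hp.1 k')
    (nonneg_of_mem_rowStochastic hA), ?_⟩
  simp only [vecMul, dotProduct]
  rw [Finset.sum_comm]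
  simp only [← Finset.mul_sum, sum_row_of_mem_rowStochastic hA, mul_one, hp.2]
end

section
open scoped Matrix.Norms.Operator
open Matrix
variable {K I J : Type*} [Fintype K] [Fintype I] [Fintype J]

theorem CSB.automaton {q : K → I → J → K → ℝ} (hq : ∀ k i j, q k i j ∈ stdSimplex ℝ K)
    {g : K → I → J → ℝ} (hg01 : ∀ k i j, g k i j ∈ Set.Icc (0 : ℝ) 1)
    (hcomm : ∀ (k : K) (i i' : I) (j j' : J),
      qTilde q (q k i j) i' j' = qTilde q (q k i' j') i j)
    {p₁ : K → ℝ} (hp₁ : p₁ ∈ stdSimplex ℝ K) {ε : ℝ} (hε : 0 < ε) :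
    ∃ (N T : ℕ) (δ : (Fin N → Fin T) → I → J → (Fin N → Fin T))
      (r : (Fin N → Fin T) → I → J → ℝ) (s₀ : Fin N → Fin T),
      (∀ s i j, r s i j ∈ Set.Icc (0:ℝ) 1) ∧
      ∀ (h : List (I × J)) (i : I) (j : J),
      |gTilde g (h.foldl (fun p a => qTilde q p a.1 a.2) p₁) i j
        - r (h.foldl (fun s a => δ s a.1 a.2) s₀) i j| ≤ ε := by
  classical
  let N := Fintype.card (I × J)
  let e : I × J ≃ Fin N := Fintype.equivFin (I × J)
  let A : Fin N → Matrix K K ℝ := fun a k k' => q k (e.symm a).1 (e.symm a).2 k'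
  have hA : ∀ a, A a ∈ rowStochastic ℝ K := fun a =>
    mem_rowStochastic_iff_sum.2 ⟨fun k k' => (hq _ _ _).1 k', fun k => (hq _ _ _).2⟩
  have hAc : ∀ a b, Commute (A a) (A b) := by
    intro a b
    ext k k'
    exact congrFun (hcomm k _ _ _ _) k'
  have hqA : ∀ p i j, qTilde q p i j = p ᵥ* A (e (i, j)) := by
    intro p i j
    ext k
    simp [qTilde, vecMul, dotProduct, A]
  let l : List (Fin N) := Finset.univ.toList
  have hl : l.Nodup := Finset.nodup_toList _
  have hmem : ∀ a, a ∈ l := fun a => by simp [l]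
  set η : ℝ := ε / (l.length + 1) with hηdef
  have hη : 0 < η := by positivity
  have hηl : l.length * η ≤ ε := by
    have : η * (l.length + 1) = ε := div_mul_cancel₀ _ (by positivity)
    linarith
  choose T red hT hred hnear using fun a => CSB.lasso (hA a) hη
  let TT := ∑ a, T a
  have hTT : ∀ a n, red a n < TT := fun a n =>
    (hT a n).trans_le (Finset.single_le_sum (f := T) (fun _ _ => Nat.zero_le _) (Finset.mem_univ a))
  let M : (Fin N → ℕ) → Matrix K K ℝ := fun n => (l.map fun b => A b ^ n b).prod
  have hM : ∀ n, M n ∈ rowStochastic ℝ K := fun n =>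
    CSB.prod_sto (fun a => pow_mem (hA a) _) l
  let δ : (Fin N → Fin TT) → I → J → (Fin N → Fin TT) := fun s i j =>
    fun b => if b = e (i, j) then ⟨red b (s b + 1), hTT _ _⟩ else s b
  let r : (Fin N → Fin TT) → I → J → ℝ := fun s i j => gTilde g (p₁ ᵥ* M fun a => s a) i j
  let s₀ : Fin N → Fin TT := fun a => ⟨red a 0, hTT _ _⟩
  refine ⟨N, TT, δ, r, s₀, fun s i j => ?_, ?_⟩
  · have hb := CSB.vecMul_mem (hM fun a => (s a : ℕ)) hp₁
    exact ⟨CSB.le_wsum hb fun k => (hg01 k i j).1, CSB.wsum_le hb fun k => (hg01 k i j).2⟩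
  have key : ∀ h : List (I × J), ∃ n : Fin N → ℕ,
      h.foldl (fun p a => qTilde q p a.1 a.2) p₁ = p₁ ᵥ* M n ∧
      ∀ a, ((h.foldl (fun s a => δ s a.1 a.2) s₀ a : Fin TT) : ℕ) = red a (n a) := by
    intro h
    induction h using List.reverseRecOn with
    | nil =>
      refine ⟨fun _ => 0, ?_, fun a => rfl⟩
      have : M (fun _ => 0) = 1 := by simp [M]
      rw [this, vecMul_one]
      rfl
    | append_singleton h x ih =>
      obtain ⟨n, h1, h2⟩ := ih
      refine ⟨fun b => n b + if b = e x then 1 else 0, ?_, fun b => ?_⟩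
      · simp only [List.foldl_append, List.foldl_cons, List.foldl_nil]
        rw [h1, hqA, vecMul_vecMul]
        congr 1
        exact (CSB.prod_step hAc n (e x) l hl (hmem _)).symm
      · simp only [List.foldl_append, List.foldl_cons, List.foldl_nil]
        by_cases hb : b = e x
        · simp only [δ, hb, if_true]
          rw [h2, hred]
        · simp only [δ, hb, if_false]
          rw [h2, add_zero]
  intro h i j
  obtain ⟨n, h1, h2⟩ := key h
  simp only [r, h1, h2]
  have h3 : ‖M n - M fun a => red a (n a)‖ ≤ ε :=
    (CSB.prod_close (fun a => pow_mem (hA a) _) (fun a => pow_mem (hA a) _) hη.le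
      (fun a => hnear a (n a)) l).trans hηl
  have hgt : ∀ p : K → ℝ, gTilde g p i j = p ⬝ᵥ fun k => g k i j := fun p => rfl
  rw [hgt, hgt, ← dotProduct_mulVec, ← dotProduct_mulVec, ← dotProduct_sub, ← sub_mulVec]
  have h4 : ∀ k, |((M n - M fun a => red a (n a)) *ᵥ fun k => g k i j) k| ≤ ε := by
    intro k
    have h5 := linfty_opNorm_mulVec (M n - M fun a => red a (n a)) (fun k => g k i j)
    have h6 : ‖fun k => g k i j‖ ≤ 1 := (pi_norm_le_iff_of_nonneg zero_le_one).2 fun k => by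
      rw [Real.norm_of_nonneg (hg01 k i j).1]; exact (hg01 k i j).2
    have h7 := norm_le_pi_norm ((M n - M fun a => red a (n a)) *ᵥ fun k => g k i j) k
    rw [Real.norm_eq_abs] at h7
    have h8 := mul_le_mul h3 h6 (norm_nonneg _) hε.le
    linarith
  rw [abs_le]
  exact ⟨CSB.le_wsum hp₁ fun k => (abs_le.1 (h4 k)).1,
    CSB.wsum_le hp₁ fun k => (abs_le.1 (h4 k)).2⟩
end

section
variable {K I J : Type*} [Fintype K] [Nonempty K] [Fintype I] [Nonempty I] [Fintype J] [Nonempty J]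

theorem CSB.main
    (q : K → I → J → K → ℝ) (hq : ∀ k i j, q k i j ∈ stdSimplex ℝ K)
    (g : K → I → J → ℝ) (hg01 : ∀ k i j, g k i j ∈ Set.Icc (0 : ℝ) 1)
    (hcomm : ∀ (k : K) (i i' : I) (j j' : J),
      qTilde q (q k i j) i' j' = qTilde q (q k i' j') i j)
    (p₁ : K → ℝ) (hp₁ : p₁ ∈ stdSimplex ℝ K) :
    ∃ v : ℝ,
      (∀ ε > (0 : ℝ), ∃ (σ : List (I × J) → PMF I) (N : ℕ),
        ∀ (τ : List (I × J) → PMF J), ∀ n ≥ N, v - ε ≤ sbPayoff q g σ τ p₁ n) ∧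
      (∀ ε > (0 : ℝ), ∃ (τ : List (I × J) → PMF J) (N : ℕ),
        ∀ (σ : List (I × J) → PMF I), ∀ n ≥ N, sbPayoff q g σ τ p₁ n ≤ v + ε) := by
  classical
  let PA : ℝ → Prop := fun a => ∃ (σ : List (I × J) → PMF I) (N : ℕ),
        ∀ (τ : List (I × J) → PMF J), ∀ n ≥ N, a ≤ sbPayoff q g σ τ p₁ n
  let PB : ℝ → Prop := fun b => ∃ (τ : List (I × J) → PMF J) (N : ℕ),
        ∀ (σ : List (I × J) → PMF I), ∀ n ≥ N, sbPayoff q g σ τ p₁ n ≤ b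
  have hAB : ∀ a b, PA a → PB b → a ≤ b := by
    rintro a b ⟨σ, N, h1⟩ ⟨τ, M, h2⟩
    exact (h1 τ (max N M) (le_max_left _ _)).trans (h2 σ (max N M) (le_max_right _ _))
  have hmain : ∀ ε > (0:ℝ), ∃ w, PA (w - ε) ∧ PB (w + ε) := by
    intro ε hε
    set ε' : ℝ := min (ε / 8) (1/3) with hε'
    have h0 : 0 < ε' := lt_min (by linarith) (by norm_num)
    have h1 : 3 * ε' ≤ 1 := by linarith [min_le_right (ε / 8) (1/3)]
    have h2 : 8 * ε' ≤ ε := by linarith [min_le_left (ε / 8) (1/3)]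
    obtain ⟨N, T, δ, r, s₀, hr, happ⟩ := CSB.automaton hq hg01 hcomm hp₁ h0
    obtain ⟨w, ⟨σ, C, hσ⟩, ⟨τ, C', hτ⟩⟩ := CSB.two_sided hq g hp₁ δ r hr s₀ h0 h1 happ
    have hC : ∀ C : ℝ, ∃ M : ℕ, ∀ n ≥ M, 0 < (n:ℝ) ∧ C ≤ n * ε' := fun C => by
      obtain ⟨M, hM⟩ := exists_nat_gt (max (C / ε') 0)
      refine ⟨M, fun n hn => ?_⟩
      have hn' : (M:ℝ) ≤ n := by exact_mod_cast hn
      have h3 := (le_max_left (C / ε') 0).trans_lt hM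
      have h4 := (le_max_right (C / ε') 0).trans_lt hM
      rw [div_lt_iff₀ h0] at h3
      exact ⟨h4.trans_le hn', h3.le.trans (mul_le_mul_of_nonneg_right hn' h0.le)⟩
    refine ⟨w, ?_, ?_⟩
    · obtain ⟨M, hM⟩ := hC C
      refine ⟨σ, M, fun τ n hn => ?_⟩
      obtain ⟨h3, h4⟩ := hM n hn
      have h5 := hσ τ n
      rw [sbPayoff, one_div_mul_eq_div, le_div_iff₀ h3]
      nlinarith
    · obtain ⟨M, hM⟩ := hC C'
      refine ⟨τ, M, fun σ n hn => ?_⟩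
      obtain ⟨h3, h4⟩ := hM n hn
      have h5 := hτ σ n
      rw [sbPayoff, one_div_mul_eq_div, div_le_iff₀ h3]
      nlinarith
  have hne : {a | PA a}.Nonempty := by
    obtain ⟨w, hw, _⟩ := hmain 1 one_pos
    exact ⟨_, hw⟩
  have hbdd : BddAbove {a | PA a} := by
    obtain ⟨w, _, hw⟩ := hmain 1 one_pos
    exact ⟨_, fun a ha => hAB a _ ha hw⟩
  have hdown : ∀ a a', a' ≤ a → PA a → PA a' := fun a a' h ⟨σ, N, hs⟩ =>
    ⟨σ, N, fun τ n hn => h.trans (hs τ n hn)⟩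
  have hup : ∀ b b', b ≤ b' → PB b → PB b' := fun b b' h ⟨τ, N, hs⟩ =>
    ⟨τ, N, fun σ n hn => (hs σ n hn).trans h⟩
  refine ⟨sSup {a | PA a}, fun ε hε => ?_, fun ε hε => ?_⟩
  · obtain ⟨w, hw1, hw2⟩ := hmain (ε / 2) (half_pos hε)
    refine hdown _ _ ?_ hw1
    have : sSup {a | PA a} ≤ w + ε / 2 := csSup_le hne fun a ha => hAB a _ ha hw2
    linarith
  · obtain ⟨w, hw1, hw2⟩ := hmain (ε / 2) (half_pos hε)
    refine hup _ _ ?_ hw2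
    have : w - ε / 2 ≤ sSup {a | PA a} := le_csSup hbdd hw1
    linarith
end

/-- A commutative state-blind repeated game with finite sets of states and actions has a uniform
value from every initial probability on the states. -/
theorem commutative_state_blind_game_has_uniform_value
    {K I J : Type*} [Fintype K] [Nonempty K] [Fintype I] [Nonempty I] [Fintype J] [Nonempty J]
    (q : K → I → J → K → ℝ) (hq : ∀ k i j, q k i j ∈ stdSimplex ℝ K)
    (g : K → I → J → ℝ) (hg01 : ∀ k i j, g k i j ∈ Set.Icc (0 : ℝ) 1)
    (hcomm : ∀ (k : K) (i i' : I) (j j' : J),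
      qTilde q (q k i j) i' j' = qTilde q (q k i' j') i j)
    (p₁ : K → ℝ) (hp₁ : p₁ ∈ stdSimplex ℝ K) :
    ∃ v : ℝ,
      (∀ ε > (0 : ℝ), ∃ (σ : List (I × J) → PMF I) (N : ℕ),
        ∀ (τ : List (I × J) → PMF J), ∀ n ≥ N, v - ε ≤ sbPayoff q g σ τ p₁ n) ∧
      (∀ ε > (0 : ℝ), ∃ (τ : List (I × J) → PMF J) (N : ℕ),
        ∀ (σ : List (I × J) → PMF I), ∀ n ≥ N, sbPayoff q g σ τ p₁ n ≤ v + ε) := by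
  exact CSB.main q hq g hg01 hcomm p₁ hp₁
end
end

section
/- Let Γ^{sb} = (K, I, q, g) be a commutative state-blind POMDP with K and I finite and nonempty. Then for every initial probability p₁ ∈ Δ(K) there exist a real number v and a pure strategy a ∈ I^ℕ such that lim_{n→∞} γ_n(p₁, a) = v and limsup_{n→∞} sup_{a' ∈ I^ℕ} γ_n(p₁, a') ≤ v; in particular Γ^{sb}(p₁) has uniform value v and a is a pure 0-optimal strategy. -/
open Filter Topology

noncomputable section

/-- The affine extension of a transition `q : K → I → Δ(K)` to beliefs `p : K → ℝ`. -/
def qTilde1 {K I : Type*} [Fintype K] (q : K → I → K → ℝ) (p : K → ℝ) (i : I) : K → ℝ :=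
  fun k' => ∑ k : K, p k * q k i k'

/-- The belief process induced by a pure strategy `a` from the initial belief `p₁`:
`p_{t+1} = q̃(p_t, a_t)`. -/
def beliefPlay {K I : Type*} [Fintype K] (q : K → I → K → ℝ) (p₁ : K → ℝ) (a : ℕ → I) :
    ℕ → (K → ℝ)
  | 0 => p₁
  | t + 1 => qTilde1 q (beliefPlay q p₁ a t) (a t)

/-- The `n`-stage expected average payoff `γ_n(p₁, a)` of the state-blind POMDP. -/
def pomdpPayoff {K I : Type*} [Fintype K] (q : K → I → K → ℝ) (g : K → I → ℝ)
    (p₁ : K → ℝ) (a : ℕ → I) (n : ℕ) : ℝ :=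
  (1 / (n : ℝ)) * ∑ t ∈ Finset.range n, ∑ k : K, beliefPlay q p₁ a t k * g k (a t)


lemma aux_closed_dvd {S : Type*} [CommMonoid S] [TopologicalSpace S] [CompactSpace S] [T2Space S]
    [ContinuousMul S] (B : S) : IsClosed {x : S | ∃ y, x * y = B} := by
  have h1 : IsClosed {p : S × S | p.1 * p.2 = B} := isClosed_eq (by fun_prop) continuous_const
  have h2 : {x : S | ∃ y, x * y = B} = Prod.fst '' {p : S × S | p.1 * p.2 = B} := by
    ext x; simp
  rw [h2]
  exact (h1.isCompact.image continuous_fst).isClosed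

/-- Existence of an idempotent in the closure of the positive powers. -/
lemma aux_idem {S : Type*} [CommMonoid S] [TopologicalSpace S] [CompactSpace S] [T2Space S]
    [ContinuousMul S] (T : S) :
    ∃ P B : S, P * P = P ∧ T * B = P ∧ P ∈ closure (Set.range fun n : ℕ => T ^ n) := by
  set s : Set S := closure (Set.range fun n : ℕ => T ^ (n + 1)) with hs
  obtain ⟨P, hP, hPP⟩ := exists_idempotent_in_compact_subsemigroup (M := S)
    (fun r => continuous_mul_const r) s
    ⟨T ^ (0 + 1), subset_closure ⟨0, rfl⟩⟩ isClosed_closure.isCompact (by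
      intro x hx y hy
      refine map_mem_closure₂ continuous_mul hx hy ?_
      rintro _ ⟨a, rfl⟩ _ ⟨b, rfl⟩
      exact ⟨a + 1 + b, by simp only [← pow_add]; congr 1⟩)
  have hc : IsClosed (Set.range fun y : S => T * y) :=
    (isCompact_range (continuous_const_mul T)).isClosed
  have : s ⊆ Set.range fun y : S => T * y := by
    refine closure_minimal ?_ hc
    rintro _ ⟨n, rfl⟩
    exact ⟨T ^ n, by simp [pow_succ']⟩
  obtain ⟨B, hB⟩ := this hP
  refine ⟨P, B, hPP, hB, closure_mono ?_ hP⟩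
  rintro _ ⟨n, rfl⟩
  exact ⟨n + 1, rfl⟩

lemma aux_conv {S : Type*} [CommMonoid S] [TopologicalSpace S] [CompactSpace S] [T2Space S]
    [ContinuousMul S] (T P : S) (hPP : P * P = P)
    (hP : P ∈ closure (Set.range fun n : ℕ => T ^ n)) (N : ℕ) (hN : 0 < N)
    (hfix : P * T ^ N = P) : Tendsto (fun n : ℕ => T ^ (N * n)) atTop (𝓝 P) := by
  refine tendsto_nhds_of_unique_mapClusterPt fun B hB => ?_
  have hfixn : ∀ n : ℕ, P * T ^ (N * n) = P := by
    intro n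
    induction n with
    | zero => simp
    | succ n ih => rw [Nat.mul_succ, pow_add, ← mul_assoc, ih, hfix]
  have hmem : ∀ (C : Set S), IsClosed C → (∀ᶠ n : ℕ in atTop, T ^ (N * n) ∈ C) → B ∈ C := by
    intro C hC h
    exact hC.closure_subset (mem_closure_iff_clusterPt.2 (ClusterPt.mono hB (le_principal_iff.2 h)))
  have h1 : P * B = P := hmem {x | P * x = P}
    (isClosed_eq (by fun_prop) continuous_const) (Eventually.of_forall hfixn)
  have h2 : P ∈ {x : S | ∃ y, x * y = B} := by
    refine closure_minimal ?_ (aux_closed_dvd B) hP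
    rintro _ ⟨n, rfl⟩
    have hc : IsClosed (Set.range fun y : S => T ^ n * y) :=
      (isCompact_range (continuous_const_mul _)).isClosed
    refine hmem _ hc ?_
    filter_upwards [eventually_ge_atTop n] with k hk
    refine ⟨T ^ (N * k - n), ?_⟩
    have : n ≤ N * k := hk.trans (Nat.le_mul_of_pos_left _ hN)
    simp only [← pow_add]
    congr 1
    omega
  obtain ⟨y, hy⟩ := h2
  rw [← h1, ← hy, ← mul_assoc, hPP]

open Matrix in
lemma aux_period {K : Type*} [Fintype K] [DecidableEq K] (T P B : Matrix K K ℝ)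
    (hT : T ∈ rowStochastic ℝ K) (hB : B ∈ rowStochastic ℝ K)
    (hPP : P * P = P) (hTP : T * P = P * T) (hBP : B * P = P * B)
    (hTB : T * B = P) (hBT : B * T = P) : ∃ N : ℕ, 0 < N ∧ P * T ^ N = P := by
  set D : Set (K → ℝ) := convexHull ℝ (Set.range fun k => P k) with hD
  have hrow : ∀ (M : Matrix K K ℝ) k, (fun k' => P k k') ᵥ* M = (P * M) k := by
    intro M k; rfl
  have hmaps : ∀ M ∈ rowStochastic ℝ K, M * P = P * M → ∀ d ∈ D, d ᵥ* M ∈ D := by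
    intro M hM hMP d hd
    have hlin : IsLinearMap ℝ (fun d : K → ℝ => d ᵥ* M) :=
      ⟨fun x y => Matrix.add_vecMul _ _ _, fun c x => Matrix.smul_vecMul _ _ _⟩
    have hsub : D ⊆ (fun d : K → ℝ => d ᵥ* M) ⁻¹' D := by
      refine convexHull_min ?_ ((convex_convexHull ℝ _).is_linear_preimage hlin)
      rintro _ ⟨k, rfl⟩
      show (P * M) k ∈ D
      rw [← hMP]
      have : (M * P) k = ∑ j, M k j • P j := by
        ext l; simp [Matrix.mul_apply]
      rw [this]
      exact (convex_convexHull ℝ _).sum_mem (fun j _ => hM.1 k j)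
        (sum_row_of_mem_rowStochastic hM k) (fun j _ => subset_convexHull ℝ _ ⟨j, rfl⟩)
    exact hsub hd
  have hfixset : ∀ (M : Matrix K K ℝ), Convex ℝ {d : K → ℝ | d ᵥ* M = d} := by
    intro M x hx y hy a b _ _ _
    simp only [Set.mem_ofPred_eq] at *
    rw [Matrix.add_vecMul, Matrix.smul_vecMul, Matrix.smul_vecMul, hx, hy]
  have hid : ∀ d ∈ D, d ᵥ* P = d := by
    intro d hd
    refine convexHull_min (t := {d : K → ℝ | d ᵥ* P = d}) ?_ (hfixset P) hd
    rintro _ ⟨k, rfl⟩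
    show (P * P) k = P k
    rw [hPP]
  set E := D.extremePoints ℝ with hE
  have hEfin : E.Finite := (Set.finite_range _).subset extremePoints_convexHull_subset
  have hED : E ⊆ D := extremePoints_subset
  have hTD := hmaps T hT hTP
  have hBD := hmaps B hB hBP
  have hdTB : ∀ d ∈ D, (d ᵥ* T) ᵥ* B = d := by
    intro d hd; rw [Matrix.vecMul_vecMul, hTB, hid d hd]
  have hdBT : ∀ d ∈ D, (d ᵥ* B) ᵥ* T = d := by
    intro d hd; rw [Matrix.vecMul_vecMul, hBT, hid d hd]
  have hEE : ∀ e ∈ E, e ᵥ* T ∈ E := by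
    intro e he
    rw [hE, mem_extremePoints_iff_left] at he ⊢
    refine ⟨hTD e he.1, ?_⟩
    rintro x hx y hy ⟨a, b, ha, hb, hab, hxy⟩
    have := he.2 (x ᵥ* B) (hBD x hx) (y ᵥ* B) (hBD y hy) ⟨a, b, ha, hb, hab, by
      rw [← Matrix.smul_vecMul, ← Matrix.smul_vecMul, ← Matrix.add_vecMul, hxy, hdTB e he.1]⟩
    rw [← this, hdBT x hx]
  have : Finite E := hEfin
  let f : E → E := fun e => ⟨e.1 ᵥ* T, hEE e.1 e.2⟩
  have hf : Function.Injective f := by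
    intro e e' h
    have h' : e.1 ᵥ* T = e'.1 ᵥ* T := congrArg Subtype.val h
    apply Subtype.ext
    rw [← hdTB e.1 (hED e.2), h', hdTB e'.1 (hED e'.2)]
  let σ : Equiv.Perm E := Equiv.ofBijective f (Finite.injective_iff_bijective.1 hf)
  have hσ : ∀ (n : ℕ) (e : E), ((σ ^ n) e).1 = e.1 ᵥ* T ^ n := by
    intro n
    induction n with
    | zero => intro e; simp
    | succ n ih =>
      intro e
      rw [pow_succ' σ, Equiv.Perm.mul_apply, pow_succ T, ← Matrix.vecMul_vecMul, ← ih]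
      rfl
  refine ⟨orderOf σ, orderOf_pos σ, ?_⟩
  have hEfix : ∀ e ∈ E, e ᵥ* T ^ orderOf σ = e := by
    intro e he
    have := hσ (orderOf σ) ⟨e, he⟩
    rw [pow_orderOf_eq_one] at this
    exact this.symm
  have hDc : IsCompact D := (Set.finite_range _).isCompact_convexHull (𝕜 := ℝ)
  have hDfix : D ⊆ {d : K → ℝ | d ᵥ* T ^ orderOf σ = d} := by
    rw [← closure_convexHull_extremePoints hDc (convex_convexHull ℝ _)]
    refine closure_minimal (convexHull_min hEfix (hfixset _)) ?_
    exact isClosed_eq (by fun_prop) continuous_id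
  funext k
  exact hDfix (subset_convexHull ℝ _ ⟨k, rfl⟩)

/-- Product of the letters of a word. -/
def wpr {S I : Type*} [CommMonoid S] (A : I → S) (w : List I) : S := (w.map A).prod

/-- Total reward along a word, starting from `y`. -/
def wR {S I : Type*} [CommMonoid S] (A : I → S) (r : I → S → ℝ) : S → List I → ℝ
  | _, [] => 0
  | y, i :: w => r i y + wR A r (y * A i) w

set_option linter.unusedSectionVars false

section words
variable {S I : Type*} [CommMonoid S] (A : I → S) (r : I → S → ℝ)

lemma wpr_nil : wpr A [] = 1 := by simp [wpr]
lemma wpr_cons (i : I) (w : List I) : wpr A (i :: w) = A i * wpr A w := by simp [wpr]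
lemma wpr_append (u w : List I) : wpr A (u ++ w) = wpr A u * wpr A w := by simp [wpr]
lemma wpr_single (i : I) : wpr A [i] = A i := by simp [wpr]

lemma wR_append (y : S) (u w : List I) :
    wR A r y (u ++ w) = wR A r y u + wR A r (y * wpr A u) w := by
  induction u generalizing y with
  | nil => simp [wR, wpr]
  | cons i u ih => simp only [List.cons_append, wR, ih, wpr_cons, mul_assoc, add_assoc]

lemma wR_single (y : S) (i : I) : wR A r y [i] = r i y := by simp [wR]

lemma wR_nonneg (h : ∀ i y, r i y ∈ Set.Icc (0 : ℝ) 1) (y : S) (w : List I) : 0 ≤ wR A r y w := by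
  induction w generalizing y with
  | nil => simp [wR]
  | cons i u ih => exact add_nonneg (h i y).1 (ih _)

lemma wR_le (h : ∀ i y, r i y ∈ Set.Icc (0 : ℝ) 1) (y : S) (w : List I) :
    wR A r y w ≤ w.length := by
  induction w generalizing y with
  | nil => simp [wR]
  | cons i u ih =>
    simp only [wR, List.length_cons, Nat.cast_add, Nat.cast_one]
    linarith [(h i y).2, ih (y * A i)]

lemma wR_cont [TopologicalSpace S] [ContinuousMul S] (h : ∀ i, Continuous (r i)) (w : List I) :
    Continuous (fun y => wR A r y w) := by
  induction w with
  | nil => exact continuous_const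
  | cons i u ih => exact (h i).add (ih.comp (continuous_mul_const (A i)))

lemma wR_range (y : S) (a : ℕ → I) (n : ℕ) :
    wR A r y ((List.range n).map a)
      = ∑ t ∈ Finset.range n, r (a t) (y * wpr A ((List.range t).map a)) := by
  induction n with
  | zero => simp [wR]
  | succ n ih =>
    rw [List.range_succ, List.map_append, wR_append, ih, Finset.sum_range_succ]
    simp [wR]

lemma wpr_flatten_replicate_fix (y : S) (c : List I) (h : y * wpr A c = y) (n : ℕ) :
    y * wpr A (List.replicate n c).flatten = y := by
  induction n with
  | zero => simp [wpr]
  | succ n ih => rw [List.replicate_succ, List.flatten_cons, wpr_append, ← mul_assoc, h, ih]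

lemma wR_flatten_replicate (y : S) (c : List I) (h : y * wpr A c = y) (n : ℕ) :
    wR A r y (List.replicate n c).flatten = n * wR A r y c := by
  induction n with
  | zero => simp [wR]
  | succ n ih =>
    rw [List.replicate_succ, List.flatten_cons, wR_append, h, ih]; push_cast; ring

end words

/-- Pigeonhole: a long word contains a short nonempty factor with all counts divisible by `N`. -/
lemma aux_pigeon {I : Type*} [Fintype I] [DecidableEq I] (N : ℕ) (hN : 0 < N) (w : List I)
    (hw : N ^ Fintype.card I < w.length) :
    ∃ u₁ c u₂ : List I, w = u₁ ++ (c ++ u₂) ∧ c ≠ [] ∧ c.length ≤ N ^ Fintype.card I ∧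
      ∀ i, N ∣ c.count i := by
  have : NeZero N := ⟨hN.ne'⟩
  let F : Fin (N ^ Fintype.card I + 1) → (I → ZMod N) :=
    fun t i => (((w.take t).count i : ℕ) : ZMod N)
  have key : ∃ s t, s < t ∧ F s = F t := by
    obtain ⟨s, t, hst, h⟩ := Fintype.exists_ne_map_eq_of_card_lt F (by simp [ZMod.card])
    rcases lt_or_gt_of_ne hst with h1 | h1
    · exact ⟨s, t, h1, h⟩
    · exact ⟨t, s, h1, h.symm⟩
  obtain ⟨s, t, hst, h⟩ := key
  have hst' : s.1 < t.1 := hst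
  have ht := t.2
  have e1 : w.take t = w.take s ++ (w.take t).drop s := by
    conv_lhs => rw [← List.take_append_drop s.1 (w.take t)]
    rw [List.take_take, min_eq_left hst'.le]
  refine ⟨w.take s, (w.take t).drop s, w.drop t, ?_, ?_, ?_, ?_⟩
  · rw [← List.append_assoc, ← e1, List.take_append_drop]
  · intro h0
    have := congrArg List.length h0
    simp at this
    omega
  · simp; omega
  · intro i
    have h2 := congrFun h i
    simp only [F] at h2
    rw [e1, List.count_append, Nat.cast_add, left_eq_add] at h2
    exact (ZMod.natCast_eq_zero_iff _ _).1 h2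

section main
variable {S I : Type*} [CommMonoid S] [TopologicalSpace S] [CompactSpace S] [T2Space S]
  [ContinuousMul S]

lemma aux_PA (A P : S) (N : ℕ) (hAP : Tendsto (fun n : ℕ => A ^ (N * n)) atTop (𝓝 P)) :
    P * A ^ N = P := by
  have h1 : Tendsto (fun n : ℕ => A ^ (N * n) * A ^ N) atTop (𝓝 (P * A ^ N)) :=
    hAP.mul_const _
  have h2 : Tendsto (fun n : ℕ => A ^ (N * (n + 1))) atTop (𝓝 P) :=
    hAP.comp (tendsto_add_atTop_nat 1)
  refine tendsto_nhds_unique h1 (h2.congr fun n => ?_)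
  rw [Nat.mul_succ, pow_add]

lemma aux_PAn (A P : S) (N : ℕ) (hAP : Tendsto (fun n : ℕ => A ^ (N * n)) atTop (𝓝 P)) (n : ℕ) :
    P * A ^ (N * n) = P := by
  induction n with
  | zero => simp
  | succ n ih => rw [Nat.mul_succ, pow_add, ← mul_assoc, ih, aux_PA A P N hAP]

lemma aux_PP (A P : S) (N : ℕ) (hAP : Tendsto (fun n : ℕ => A ^ (N * n)) atTop (𝓝 P)) :
    P * P = P :=
  tendsto_nhds_unique (hAP.const_mul P)
    (tendsto_const_nhds.congr fun n => (aux_PAn A P N hAP n).symm)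

lemma aux_unif (A P : S) (N : ℕ) (hAP : Tendsto (fun n : ℕ => A ^ (N * n)) atTop (𝓝 P))
    (r : S → ℝ) (hr : Continuous r) (ε : ℝ) (hε : 0 < ε) :
    ∃ M : ℕ, ∀ n ≥ M, ∀ s : S, |r (s * A ^ n) - r (P * (s * A ^ n))| ≤ ε := by
  let F0 : C(S × S, ℝ) := ⟨fun p => r (p.2 * p.1), hr.comp (continuous_snd.mul continuous_fst)⟩
  have h := (F0.curry.continuous.tendsto P).comp hAP
  obtain ⟨k, hk⟩ := (Metric.tendsto_atTop.1 h) ε hε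
  refine ⟨N * k, fun n hn s => ?_⟩
  have h1 := (ContinuousMap.dist_apply_le_dist (f := F0.curry (A ^ (N * k))) (g := F0.curry P)
    (s * A ^ (n - N * k))).trans (hk k le_rfl).le
  have e1 : A ^ n = A ^ (n - N * k) * A ^ (N * k) := by rw [← pow_add]; congr 1; omega
  have e2 : s * A ^ n = (s * A ^ (n - N * k)) * A ^ (N * k) := by rw [e1, mul_assoc]
  have e3 : P * (s * A ^ n) = (s * A ^ (n - N * k)) * P := by
    rw [e2, mul_comm P, mul_assoc, mul_comm _ P, aux_PAn A P N hAP]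
  rw [e3, e2]
  exact h1

variable [Fintype I] [DecidableEq I]

lemma PJ_fix (A P : I → S) (N : ℕ)
    (hAP : ∀ i, Tendsto (fun n : ℕ => A i ^ (N * n)) atTop (𝓝 (P i))) (J : Finset I) (c : List I) (hc : ∀ i ∈ c, i ∈ J) (hN : ∀ i, N ∣ c.count i) :
    (∏ j ∈ J, P j) * wpr A c = ∏ j ∈ J, P j := by
  have h1 : ∀ i ∈ J, (∏ j ∈ J, P j) * A i ^ c.count i = ∏ j ∈ J, P j := by
    intro i hi
    obtain ⟨n, hn⟩ := hN i
    rw [← Finset.mul_prod_erase J P hi, hn, mul_right_comm, aux_PAn _ _ N (hAP i)]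
  have h2 : ∀ s : Finset I, s ⊆ J →
      (∏ j ∈ J, P j) * ∏ m ∈ s, A m ^ c.count m = ∏ j ∈ J, P j := by
    intro s
    induction s using Finset.induction_on with
    | empty => simp
    | insert i s hi ih =>
      intro hs
      rw [Finset.prod_insert hi, ← mul_assoc, h1 i (hs (Finset.mem_insert_self _ _)),
        ih ((Finset.subset_insert _ _).trans hs)]
  rw [wpr, Finset.prod_list_map_count]
  exact h2 _ (fun i hi => hc i (List.mem_toFinset.1 hi))

lemma PJ_union (A P : I → S) (N : ℕ)
    (hAP : ∀ i, Tendsto (fun n : ℕ => A i ^ (N * n)) atTop (𝓝 (P i))) (J J' : Finset I) :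
    (∏ j ∈ J, P j) * (∏ j ∈ J', P j) = ∏ j ∈ J ∪ J', P j := by
  induction J using Finset.induction_on with
  | empty => simp
  | insert i s hi ih =>
    rw [Finset.prod_insert hi, mul_assoc, ih, Finset.insert_union]
    by_cases h : i ∈ s ∪ J'
    · rw [Finset.insert_eq_of_mem h, ← Finset.mul_prod_erase _ P h, ← mul_assoc,
        aux_PP _ _ N (hAP i)]
    · rw [Finset.prod_insert h]

/-- Words containing many copies of each letter of `J` are close to their `J`-limits. -/
lemma aux_approx (A P : I → S) (N : ℕ)
    (hAP : ∀ i, Tendsto (fun n : ℕ => A i ^ (N * n)) atTop (𝓝 (P i)))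
    (r : I → S → ℝ) (hr : ∀ i, Continuous (r i)) (ε : ℝ) (hε : 0 < ε) :
    ∃ M : ℕ, ∀ (J : Finset I) (u : List I) (i : I), (∀ j ∈ J, M ≤ u.count j) →
      |r i (wpr A u) - r i ((∏ j ∈ J, P j) * wpr A u)| ≤ ε := by
  set δ : ℝ := ε / (Fintype.card I + 1) with hδ
  have hδ0 : 0 < δ := by positivity
  choose M0 hM0 using fun (i j : I) => aux_unif (A j) (P j) N (hAP j) (r i) (hr i) δ hδ0
  refine ⟨∑ i, ∑ j, M0 i j, ?_⟩
  have hM : ∀ i j, M0 i j ≤ ∑ i, ∑ j, M0 i j := fun i j =>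
    (Finset.single_le_sum (f := fun j => M0 i j) (fun _ _ => Nat.zero_le _)
      (Finset.mem_univ j)).trans
    (Finset.single_le_sum (f := fun i => ∑ j, M0 i j) (fun _ _ => Nat.zero_le _)
      (Finset.mem_univ i))
  intro J u i hJ
  have key : ∀ s : Finset I, s ⊆ J →
      |r i (wpr A u) - r i ((∏ j ∈ s, P j) * wpr A u)| ≤ s.card * δ := by
    intro s
    induction s using Finset.induction_on with
    | empty => simp
    | insert j s hj ih =>
      intro hs
      have ih' := ih ((Finset.subset_insert _ _).trans hs)
      have hjJ := hs (Finset.mem_insert_self _ _)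
      have hu : ∃ x, wpr A u = x * A j ^ u.count j := by
        rw [wpr, Finset.prod_list_map_count]
        by_cases hju : j ∈ u.toFinset
        · rw [← Finset.prod_erase_mul _ _ hju]; exact ⟨_, rfl⟩
        · rw [List.mem_toFinset] at hju
          rw [List.count_eq_zero_of_not_mem hju]; exact ⟨_, by rw [pow_zero, mul_one]⟩
      obtain ⟨x, hx⟩ := hu
      have h3 := hM0 i j (u.count j) ((hM i j).trans (hJ j hjJ)) ((∏ j ∈ s, P j) * x)
      rw [mul_assoc, ← hx, ← mul_assoc, ← Finset.prod_insert hj] at h3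
      rw [Finset.card_insert_of_notMem hj]
      push_cast
      have := abs_sub_le (r i (wpr A u)) (r i ((∏ j ∈ s, P j) * wpr A u))
        (r i ((∏ j ∈ insert j s, P j) * wpr A u))
      linarith
  refine (key J subset_rfl).trans ?_
  have : (J.card : ℝ) ≤ Fintype.card I := by exact_mod_cast Finset.card_le_univ J
  calc (J.card : ℝ) * δ ≤ (Fintype.card I + 1) * δ := by gcongr; linarith
    _ = ε := by rw [hδ]; field_simp

/-- A compact set containing all words, made of limits of words. -/
lemma aux_Q (A P : I → S) (N : ℕ)
    (hAP : ∀ i, Tendsto (fun n : ℕ => A i ^ (N * n)) atTop (𝓝 (P i))) (hN : 0 < N) : ∃ Q : Set S, IsCompact Q ∧ (∀ m : List I, wpr A m ∈ Q) ∧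
    ∀ x ∈ Q, ∃ (J : Finset I) (m : List I), x = (∏ j ∈ J, P j) * wpr A m := by
  let C : I → Set S := fun i => ⋃ l ∈ Finset.range N,
    insert (A i ^ l * P i) (Set.range fun n : ℕ => A i ^ l * A i ^ (N * n))
  have hC : ∀ i, IsCompact (C i) := by
    intro i
    refine (Finset.range N).isCompact_biUnion fun l _ => ?_
    exact ((hAP i).const_mul _).isCompact_insert_range
  have hpow : ∀ i n, A i ^ n ∈ C i := by
    intro i n
    simp only [C, Set.mem_iUnion]
    refine ⟨n % N, Finset.mem_range.2 (Nat.mod_lt _ hN), Or.inr ⟨n / N, ?_⟩⟩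
    simp only [← pow_add, Nat.mod_add_div]
  have hform : ∀ i, ∀ x ∈ C i, ∃ (b : Bool) (n : ℕ), x = (if b then P i else 1) * A i ^ n := by
    intro i x hx
    simp only [C, Set.mem_iUnion] at hx
    obtain ⟨l, _, h | ⟨n, h⟩⟩ := hx
    · exact ⟨true, l, by simp [h, mul_comm]⟩
    · exact ⟨false, l + N * n, by simp [← h, pow_add]⟩
  have hwords : ∀ (e : I → ℕ) (s : Finset I), ∃ m : List I, wpr A m = ∏ i ∈ s, A i ^ e i := by
    intro e s
    induction s using Finset.induction_on with
    | empty => exact ⟨[], by simp [wpr]⟩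
    | insert i s hi ih =>
      obtain ⟨m, hm⟩ := ih
      exact ⟨List.replicate (e i) i ++ m, by
        rw [wpr_append, hm, Finset.prod_insert hi]; simp [wpr]⟩
  refine ⟨(fun c : I → S => ∏ i, c i) '' Set.pi Set.univ C,
    (isCompact_univ_pi hC).image (by fun_prop), ?_, ?_⟩
  · intro m
    refine ⟨fun i => A i ^ m.count i, fun i _ => hpow i _, ?_⟩
    simp only [wpr]
    rw [Finset.prod_list_map_count]
    symm
    refine Finset.prod_subset (Finset.subset_univ _) ?_
    intro i _ hi
    rw [List.mem_toFinset] at hi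
    rw [List.count_eq_zero_of_not_mem hi, pow_zero]
  · rintro _ ⟨c, hc, rfl⟩
    choose b e h using fun i => hform i (c i) (hc i (Set.mem_univ i))
    obtain ⟨m, hm⟩ := hwords e Finset.univ
    refine ⟨Finset.univ.filter fun i => b i = true, m, ?_⟩
    rw [hm, Finset.prod_filter, ← Finset.prod_mul_distrib]
    exact Finset.prod_congr rfl fun i _ => h i

/-- The value. -/
lemma aux_value (A P : I → S) (N : ℕ)
    (hAP : ∀ i, Tendsto (fun n : ℕ => A i ^ (N * n)) atTop (𝓝 (P i)))
    (r : I → S → ℝ) (hr : ∀ i, Continuous (r i)) (h01 : ∀ i y, r i y ∈ Set.Icc (0 : ℝ) 1) [Nonempty I] (hN : 0 < N) : ∃ v : ℝ, 0 ≤ v ∧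
    (∃ (J : Finset I) (m c : List I), c ≠ [] ∧ (∀ i ∈ c, i ∈ J) ∧ (∀ i, N ∣ c.count i) ∧
      wR A r ((∏ j ∈ J, P j) * wpr A m) c = v * c.length) ∧
    ∀ (J : Finset I) (m c : List I), c ≠ [] → c.length ≤ N ^ Fintype.card I →
      (∀ i ∈ c, i ∈ J) → (∀ i, N ∣ c.count i) →
      wR A r ((∏ j ∈ J, P j) * wpr A m) c ≤ v * c.length := by
  obtain ⟨Q, hQ, hQw, hQf⟩ := aux_Q A P N hAP hN
  let Z : Set (Finset I × List I) := {z | z.2 ≠ [] ∧ z.2.length ≤ N ^ Fintype.card I ∧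
      (∀ i ∈ z.2, i ∈ z.1) ∧ (∀ i, N ∣ z.2.count i)}
  have hZfin : Z.Finite := by
    refine (Set.finite_univ.prod (List.finite_length_le I (N ^ Fintype.card I))).subset ?_
    intro z hz
    exact ⟨Set.mem_univ _, hz.2.1⟩
  have hZne : Z.Nonempty := by
    obtain ⟨i⟩ := ‹Nonempty I›
    refine ⟨({i}, List.replicate N i), ?_, ?_, ?_, ?_⟩
    · simp [hN.ne']
    · simp only [List.length_replicate]
      exact Nat.le_self_pow (Fintype.card_ne_zero) _
    · intro j hj
      simpa using List.eq_of_mem_replicate hj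
    · intro j
      rw [List.count_replicate]
      split_ifs <;> simp
  have hmax : ∀ z : Finset I × List I, ∃ x ∈ Q, ∀ y ∈ Q,
      wR A r ((∏ j ∈ z.1, P j) * y) z.2 ≤ wR A r ((∏ j ∈ z.1, P j) * x) z.2 := by
    intro z
    obtain ⟨x, hx, h⟩ := hQ.exists_isMaxOn ⟨_, hQw []⟩
      (f := fun y => wR A r ((∏ j ∈ z.1, P j) * y) z.2)
      ((wR_cont A r hr z.2).comp (continuous_const_mul _)).continuousOn
    exact ⟨x, hx, fun y hy => h hy⟩
  choose X hXQ hX using hmax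
  obtain ⟨z, hz, hzmax⟩ := Set.exists_max_image Z
    (fun z => wR A r ((∏ j ∈ z.1, P j) * X z) z.2 / z.2.length) hZfin hZne
  have hlen : ∀ c : List I, c ≠ [] → (0 : ℝ) < c.length := by
    intro c hc
    exact_mod_cast List.length_pos_iff.2 hc
  refine ⟨wR A r ((∏ j ∈ z.1, P j) * X z) z.2 / z.2.length, ?_, ?_, ?_⟩
  · exact div_nonneg (wR_nonneg A r h01 _ _) (Nat.cast_nonneg _)
  · obtain ⟨J, m, hJm⟩ := hQf (X z) (hXQ z)
    refine ⟨z.1 ∪ J, m, z.2, hz.1, fun i hi => Finset.mem_union_left _ (hz.2.2.1 i hi),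
      hz.2.2.2, ?_⟩
    rw [div_mul_cancel₀ _ (hlen _ hz.1).ne', ← PJ_union A P N hAP, mul_assoc, ← hJm]
  · intro J m c h1 h2 h3 h4
    have h5 := hzmax (J, c) ⟨h1, h2, h3, h4⟩
    have h6 := hX (J, c) _ (hQw m)
    rw [div_le_iff₀ (hlen c h1)] at h5
    exact h6.trans h5

/-- In the limit system, every word has reward at most `v * length + D`. -/
lemma aux_upper_limit (A P : I → S) (N : ℕ)
    (hAP : ∀ i, Tendsto (fun n : ℕ => A i ^ (N * n)) atTop (𝓝 (P i)))
    (r : I → S → ℝ) (h01 : ∀ i y, r i y ∈ Set.Icc (0 : ℝ) 1) (hN : 0 < N) (v : ℝ) (hv0 : 0 ≤ v)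
    (hv : ∀ (J : Finset I) (m c : List I), c ≠ [] → c.length ≤ N ^ Fintype.card I →
      (∀ i ∈ c, i ∈ J) → (∀ i, N ∣ c.count i) →
      wR A r ((∏ j ∈ J, P j) * wpr A m) c ≤ v * c.length)
    (J : Finset I) (m : List I) (n : ℕ) : ∀ w : List I, w.length = n → (∀ i ∈ w, i ∈ J) →
      wR A r ((∏ j ∈ J, P j) * wpr A m) w ≤ v * w.length + (N ^ Fintype.card I : ℕ) := by
  induction n using Nat.strong_induction_on with
  | _ n ih =>
    intro w hwn hwJ
    by_cases hlen : w.length ≤ N ^ Fintype.card I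
    · have h1 := wR_le A r h01 ((∏ j ∈ J, P j) * wpr A m) w
      have h2 : (w.length : ℝ) ≤ (N ^ Fintype.card I : ℕ) := by exact_mod_cast hlen
      have h3 : 0 ≤ v * w.length := by positivity
      linarith
    · obtain ⟨u₁, c, u₂, rfl, hc0, hcl, hcN⟩ := aux_pigeon N hN w (not_le.1 hlen)
      have hcJ : ∀ i ∈ c, i ∈ J := fun i hi => hwJ i (by simp [hi])
      have hpos := List.length_pos_iff.2 hc0
      have h1 := ih (u₁ ++ u₂).length (by rw [← hwn]; simp; omega) (u₁ ++ u₂) rfl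
        (fun i hi => hwJ i (by simp at hi ⊢; tauto))
      have h2 := hv J (m ++ u₁) c hc0 hcl hcJ hcN
      have hfix : (∏ j ∈ J, P j) * wpr A m * wpr A u₁ * wpr A c
          = (∏ j ∈ J, P j) * wpr A m * wpr A u₁ := by
        rw [mul_assoc (∏ j ∈ J, P j), mul_right_comm, PJ_fix A P N hAP J c hcJ hcN]
      rw [wpr_append, ← mul_assoc] at h2
      rw [wR_append] at h1
      rw [wR_append, wR_append, hfix]
      simp only [List.length_append, Nat.cast_add] at h1 ⊢
      linarith

/-- Comparison of two starting points along a word. -/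
lemma aux_compare (A : I → S) (r : I → S → ℝ) (ε : ℝ) (x y : S) (w : List I)
    (h : ∀ u i u', w = u ++ i :: u' → |r i (x * wpr A u) - r i (y * wpr A u)| ≤ ε) :
    |wR A r x w - wR A r y w| ≤ ε * w.length := by
  induction w generalizing x y with
  | nil => simp [wR]
  | cons i w ih =>
    have h1 := h [] i w rfl
    rw [wpr_nil, mul_one, mul_one] at h1
    have h2 := ih (x * A i) (y * A i) (by
      intro u j u' hw
      have := h (i :: u) j u' (by rw [hw]; rfl)
      rwa [wpr_cons, ← mul_assoc, ← mul_assoc] at this)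
    simp only [wR, List.length_cons, Nat.cast_add, Nat.cast_one]
    have h3 := abs_add_le (r i x - r i y) (wR A r (x * A i) w - wR A r (y * A i) w)
    have e : r i x + wR A r (x * A i) w - (r i y + wR A r (y * A i) w)
      = (r i x - r i y) + (wR A r (x * A i) w - wR A r (y * A i) w) := by ring
    rw [e]
    linarith

lemma aux_upper (A P : I → S) (N : ℕ)
    (hAP : ∀ i, Tendsto (fun n : ℕ => A i ^ (N * n)) atTop (𝓝 (P i)))
    (r : I → S → ℝ) (hr : ∀ i, Continuous (r i)) (h01 : ∀ i y, r i y ∈ Set.Icc (0 : ℝ) 1) (hN : 0 < N) (v : ℝ) (hv0 : 0 ≤ v)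
    (hv : ∀ (J : Finset I) (m c : List I), c ≠ [] → c.length ≤ N ^ Fintype.card I →
      (∀ i ∈ c, i ∈ J) → (∀ i, N ∣ c.count i) →
      wR A r ((∏ j ∈ J, P j) * wpr A m) c ≤ v * c.length)
    (ε : ℝ) (hε : 0 < ε) : ∃ C : ℝ, ∀ w : List I, wR A r 1 w ≤ (v + ε) * w.length + C := by
  obtain ⟨M, hM⟩ := aux_approx A P N hAP r hr ε hε
  set D : ℕ := N ^ Fintype.card I with hD
  have main : ∀ (n : ℕ) (w : List I), w.length = n → ∀ u : List I,
      wR A r (wpr A u) w ≤ (v + ε) * w.length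
        + ((D : ℝ) + 1) * (1 + (∑ i, (M - u.count i) : ℕ)) := by
    intro n
    induction n using Nat.strong_induction_on with
    | _ n ih =>
      intro w hwn u
      let J : Finset I := Finset.univ.filter fun i => M ≤ u.count i
      have seg : ∀ w1 : List I, (∀ i ∈ w1, i ∈ J) →
          wR A r (wpr A u) w1 ≤ (v + ε) * w1.length + D := by
        intro w1 hw1
        have h1 := aux_upper_limit A P N hAP r h01 hN v hv0 hv J u w1.length w1 rfl hw1
        have h2 := aux_compare A r ε (wpr A u) ((∏ j ∈ J, P j) * wpr A u) w1 (by
          intro u1 i _ _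
          rw [mul_assoc, ← wpr_append]
          refine hM J (u ++ u1) i fun j hj => ?_
          have := (Finset.mem_filter.1 hj).2
          rw [List.count_append]
          omega)
        have h3 := (abs_le.1 h2).2
        linarith
      have hsplit : w = w.takeWhile (fun i => decide (i ∈ J)) ++
          w.dropWhile (fun i => decide (i ∈ J)) := List.takeWhile_append_dropWhile.symm
      have hw1 : ∀ i ∈ w.takeWhile (fun i => decide (i ∈ J)), i ∈ J := by
        intro i hi
        simpa using List.mem_takeWhile_imp hi
      set w1 := w.takeWhile (fun i => decide (i ∈ J))
      have hseg := seg w1 hw1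
      rcases hw2 : w.dropWhile (fun i => decide (i ∈ J)) with _ | ⟨i, w3⟩
      · rw [hw2, List.append_nil] at hsplit
        rw [hsplit]
        have : (0 : ℝ) ≤ ((D : ℝ) + 1) * (∑ i, (M - u.count i) : ℕ) := by positivity
        linarith
      · rw [hw2] at hsplit
        have hiJ : i ∉ J := by
          have := List.head?_dropWhile_not (fun i => decide (i ∈ J)) w
          rw [hw2] at this
          simpa using this
        have hi : u.count i < M := by
          by_contra hcon
          exact hiJ (Finset.mem_filter.2 ⟨Finset.mem_univ _, not_lt.1 hcon⟩)
        have hlen : w.length = w1.length + (w3.length + 1) := by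
          conv_lhs => rw [hsplit]
          simp
        have h1 := ih w3.length (by omega) w3 rfl (u ++ (w1 ++ [i]))
        have hΦ : (∑ k, (M - (u ++ (w1 ++ [i])).count k)) + 1 ≤ ∑ k, (M - u.count k) := by
          refine Nat.succ_le_of_lt (Finset.sum_lt_sum ?_ ⟨i, Finset.mem_univ _, ?_⟩)
          · intro k _
            rw [List.count_append]; omega
          · simp only [List.count_append, List.count_singleton_self]; omega
        have hΦ' : ((∑ k, (M - (u ++ (w1 ++ [i])).count k) : ℕ) : ℝ) + 1
            ≤ (∑ k, (M - u.count k) : ℕ) := by exact_mod_cast hΦ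
        have h2 : ((D : ℝ) + 1) * (1 + (∑ k, (M - (u ++ (w1 ++ [i])).count k) : ℕ))
            ≤ ((D : ℝ) + 1) * (∑ k, (M - u.count k) : ℕ) := by
          gcongr; linarith
        have h3 : wR A r (wpr A u) w = wR A r (wpr A u) w1 + (r i (wpr A u * wpr A w1) +
            wR A r (wpr A (u ++ (w1 ++ [i]))) w3) := by
          conv_lhs => rw [hsplit]
          rw [wR_append, wR, wpr_append, wpr_append, wpr_single]
          simp only [mul_assoc]
        rw [h3, hlen]
        push_cast at h1 h2 hseg ⊢
        have h4 := (h01 i (wpr A u * wpr A w1)).2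
        have h5 : 0 ≤ v + ε := by linarith
        nlinarith
  refine ⟨((D : ℝ) + 1) * (1 + (∑ i, (M - ([] : List I).count i) : ℕ)), fun w => ?_⟩
  have := main w.length w rfl []
  rwa [wpr_nil] at this

end main

lemma aux_sqrt (ε : ℝ) (hε : 0 < ε) (k : ℕ) : (Nat.sqrt k : ℝ) ≤ ε * k + 1 / ε := by
  have h1 : ((Nat.sqrt k : ℕ) : ℝ) * Nat.sqrt k ≤ k := by exact_mod_cast Nat.sqrt_le k
  have h2 : ε * (1 / ε) = 1 := by field_simp
  set z : ℝ := (Nat.sqrt k : ℝ)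
  set w := 1 / ε
  have h3 : 0 ≤ z := Nat.cast_nonneg _
  have h4 : 0 ≤ ε * (z - w) ^ 2 := by positivity
  have h5 : ε * (z - w) ^ 2 = ε * (z * z) - 2 * (ε * w) * z + (ε * w) * w := by ring
  rw [h5, h2] at h4
  have h6 : ε * (z * z) ≤ ε * k := by gcongr
  linarith

section lower
variable {S I : Type*} [CommMonoid S]

/-- A periodic-with-sparse-pumps sequence in the limit system. -/
lemma aux_virtual [DecidableEq I] (A : I → S) (r : I → S → ℝ)
    (h01 : ∀ i y, r i y ∈ Set.Icc (0 : ℝ) 1) (y : S) (v : ℝ) (hv0 : 0 ≤ v) (hv1 : v ≤ 1)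
    (c u : List I) (hc : c ≠ []) (hu : u ≠ [])
    (hyc : y * wpr A c = y) (hyu : y * wpr A u = y)
    (hval : wR A r y c = v * c.length) :
    ∃ b : ℕ → I,
      (∀ ε > 0, ∃ C : ℝ, ∀ n : ℕ, |wR A r y ((List.range n).map b) - v * n| ≤ ε * n + C) ∧
      ∀ M : ℕ, ∃ T : ℕ, ∀ t ≥ T, ∀ j ∈ u, M ≤ ((List.range t).map b).count j := by
  set L : ℕ := u.length * c.length with hL
  have hcl := List.length_pos_iff.2 hc
  have hul := List.length_pos_iff.2 hu
  have hL0 : 0 < L := Nat.mul_pos hul hcl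
  set W : List I := (List.replicate u.length c).flatten with hW
  set U : List I := (List.replicate c.length u).flatten with hU
  have hWl : W.length = L := by simp [hW, hL]
  have hUl : U.length = L := by simp [hU, hL, mul_comm]
  have hyW : y * wpr A W = y := wpr_flatten_replicate_fix A y c hyc _
  have hyU : y * wpr A U = y := wpr_flatten_replicate_fix A y u hyu _
  have hRW : wR A r y W = v * L := by
    rw [hW, wR_flatten_replicate A r y c hyc, hval, hL]; push_cast; ring
  have hUj : ∀ j ∈ u, 1 ≤ U.count j := by
    intro j hj
    rw [Nat.succ_le_iff, List.count_pos_iff, hU, List.mem_flatten]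
    exact ⟨u, by simp [hcl.ne'], hj⟩
  let blk : ℕ → List I := fun l => if Nat.sqrt l < Nat.sqrt (l + 1) then U else W
  have hblkl : ∀ l, (blk l).length = L := by
    intro l; simp only [blk]; split_ifs <;> assumption
  have hblky : ∀ l, y * wpr A (blk l) = y := by
    intro l; simp only [blk]; split_ifs <;> assumption
  let b : ℕ → I := fun t => (blk (t / L))[t % L]'(by rw [hblkl]; exact Nat.mod_lt _ hL0)
  have hbs : ∀ k, (List.range (L * (k + 1))).map b = (List.range (L * k)).map b ++ blk k := by
    intro k
    rw [Nat.mul_succ, List.range_add, List.map_append]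
    congr 1
    refine List.ext_getElem (by simp [hblkl]) fun s h1 h2 => ?_
    have hs : s < L := by simpa using h1
    have e1 : (L * k + s) / L = k := by
      rw [Nat.mul_add_div hL0, Nat.div_eq_of_lt hs, add_zero]
    have e2 : (L * k + s) % L = s := by
      rw [Nat.mul_add_mod, Nat.mod_eq_of_lt hs]
    simp only [List.getElem_map, List.getElem_range, b, e1, e2]
  have hfix : ∀ k, y * wpr A ((List.range (L * k)).map b) = y := by
    intro k
    induction k with
    | zero => simp [wpr]
    | succ k ih => rw [hbs, wpr_append, ← mul_assoc, ih, hblky]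
  have hY : ∀ k, |wR A r y ((List.range (L * k)).map b) - v * (L * k : ℕ)| ≤ L * Nat.sqrt k := by
    intro k
    induction k with
    | zero => simp [wR]
    | succ k ih =>
      rw [hbs, wR_append, hfix]
      rw [abs_le] at ih ⊢
      by_cases h : Nat.sqrt k < Nat.sqrt (k + 1)
      · have e : blk k = U := by simp only [blk]; rw [if_pos h]
        have h1 := wR_nonneg A r h01 y U
        have h2 := wR_le A r h01 y U
        rw [hUl] at h2
        rw [e]
        have h3 : ((Nat.sqrt k : ℕ) : ℝ) + 1 ≤ (Nat.sqrt (k + 1) : ℕ) := by exact_mod_cast h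
        have h4 : (L : ℝ) * ((Nat.sqrt k : ℕ) + 1) ≤ L * (Nat.sqrt (k + 1) : ℕ) := by gcongr
        have h5 : v * L ≤ L := by
          have : (0 : ℝ) ≤ L := Nat.cast_nonneg _
          nlinarith
        have h6 : 0 ≤ v * L := by positivity
        push_cast at ih ⊢
        constructor <;> nlinarith
      · have e : blk k = W := by simp only [blk]; rw [if_neg h]
        have h3 : ((Nat.sqrt k : ℕ) : ℝ) ≤ (Nat.sqrt (k + 1) : ℕ) := by
          exact_mod_cast Nat.sqrt_le_sqrt (Nat.le_succ k)
        have h4 : (L : ℝ) * (Nat.sqrt k : ℕ) ≤ L * (Nat.sqrt (k + 1) : ℕ) := by gcongr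
        rw [e, hRW]
        push_cast at ih ⊢
        constructor <;> nlinarith
  have hcount : ∀ j ∈ u, ∀ k, Nat.sqrt k ≤ ((List.range (L * k)).map b).count j := by
    intro j hj k
    induction k with
    | zero => simp
    | succ k ih =>
      rw [hbs, List.count_append]
      by_cases h : Nat.sqrt k < Nat.sqrt (k + 1)
      · have e : blk k = U := by simp only [blk]; rw [if_pos h]
        rw [e]
        have h1 : Nat.sqrt (k + 1) ≤ Nat.sqrt k + 1 := Nat.sqrt_succ_le_succ_sqrt k
        have := hUj j hj
        omega
      · omega
  have hsplit : ∀ n n', n ≤ n' → ∃ w : List I, w.length = n' - n ∧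
      (List.range n').map b = (List.range n).map b ++ w := by
    intro n n' h
    obtain ⟨d, rfl⟩ := Nat.exists_eq_add_of_le h
    exact ⟨((List.range d).map (n + ·)).map b, by simp, by rw [List.range_add, List.map_append]⟩
  refine ⟨b, ?_, ?_⟩
  · intro ε hε
    refine ⟨L * (1 / (ε / L)) + L, fun n => ?_⟩
    obtain ⟨w, hwl, hw⟩ := hsplit (L * (n / L)) n (Nat.mul_div_le n L)
    have hwL : w.length < L := by
      rw [hwl]
      have := Nat.div_add_mod n L
      have := Nat.mod_lt n hL0
      omega
    rw [hw, wR_append, hfix]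
    have h1 := hY (n / L)
    have h2 := wR_nonneg A r h01 y w
    have h3 := wR_le A r h01 y w
    have hnn : (n : ℝ) = (L * (n / L) : ℕ) + w.length := by
      rw [hwl, ← Nat.cast_add]; congr 1
      have := Nat.mul_div_le n L
      omega
    have hwL' : (w.length : ℝ) ≤ L := by exact_mod_cast hwL.le
    have hLr : (0 : ℝ) < L := by exact_mod_cast hL0
    have h4 := aux_sqrt (ε / L) (by positivity) (n / L)
    have h5 : (L : ℝ) * (Nat.sqrt (n / L) : ℕ) ≤ L * (ε / L * (n / L : ℕ) + 1 / (ε / L)) := by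
      gcongr
    have h6 : (L : ℝ) * (ε / L * (n / L : ℕ) + 1 / (ε / L))
        = ε * (n / L : ℕ) + L * (1 / (ε / L)) := by
      field_simp
    have h7 : ε * ((n / L : ℕ) : ℝ) ≤ ε * n := by
      gcongr; exact Nat.div_le_self _ _
    have h8 : v * (w.length : ℝ) ≤ w.length := by
      have : (0 : ℝ) ≤ w.length := Nat.cast_nonneg _
      nlinarith
    have h9 : 0 ≤ v * (w.length : ℝ) := by positivity
    have h10 : v * (n : ℝ) = v * (L * (n / L) : ℕ) + v * w.length := by rw [hnn]; push_cast; ring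
    rw [h10]
    rw [abs_le] at h1 ⊢
    constructor <;> linarith
  · intro M
    refine ⟨L * (M * M), fun t ht j hj => ?_⟩
    obtain ⟨w, _, hw⟩ := hsplit _ t ht
    have := hcount j hj (M * M)
    rw [Nat.sqrt_eq] at this
    rw [hw, List.count_append]
    omega

variable [TopologicalSpace S] [CompactSpace S] [T2Space S] [ContinuousMul S]

lemma aux_lower [Fintype I] [DecidableEq I] (A P : I → S) (N : ℕ) (hN : 0 < N)
    (hAP : ∀ i, Tendsto (fun n : ℕ => A i ^ (N * n)) atTop (𝓝 (P i)))
    (r : I → S → ℝ) (hr : ∀ i, Continuous (r i)) (h01 : ∀ i y, r i y ∈ Set.Icc (0 : ℝ) 1)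
    (v : ℝ) (hv0 : 0 ≤ v) (J : Finset I) (m c : List I) (hc : c ≠ []) (hcJ : ∀ i ∈ c, i ∈ J)
    (hcN : ∀ i, N ∣ c.count i)
    (hval : wR A r ((∏ j ∈ J, P j) * wpr A m) c = v * c.length) :
    ∃ a : ℕ → I, ∀ ε > 0, ∃ C : ℝ, ∀ n : ℕ,
      |wR A r 1 ((List.range n).map a) - v * n| ≤ ε * n + C := by
  have hcl : (0 : ℝ) < c.length := by exact_mod_cast List.length_pos_iff.2 hc
  have hv1 : v ≤ 1 := by
    have := wR_le A r h01 ((∏ j ∈ J, P j) * wpr A m) c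
    rw [hval] at this
    by_contra hcon
    nlinarith [not_le.1 hcon]
  set y := (∏ j ∈ J, P j) * wpr A m with hy
  have hfix : ∀ w : List I, (∀ i ∈ w, i ∈ J) → (∀ i, N ∣ w.count i) → y * wpr A w = y := by
    intro w h1 h2
    rw [hy, mul_right_comm, PJ_fix A P N hAP J w h1 h2]
  obtain ⟨i0, hi0⟩ := List.exists_mem_of_ne_nil c hc
  have hi0J := hcJ i0 hi0
  set u : List I := (List.replicate N J.toList).flatten with hu
  have huJ : ∀ i, i ∈ u ↔ i ∈ J := by
    intro i
    simp [hu, List.mem_flatten, List.mem_replicate, hN.ne']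
  have huN : ∀ i, N ∣ u.count i := by
    intro i
    simp [hu, List.count_flatten]
  obtain ⟨b, hb1, hb2⟩ := aux_virtual A r h01 y v hv0 hv1 c u hc
    (List.ne_nil_of_mem ((huJ i0).2 hi0J)) (hfix c hcJ hcN)
    (hfix u (fun i hi => (huJ i).1 hi) huN) hval
  let a : ℕ → I := fun t => if h : t < m.length then m[t] else b (t - m.length)
  have ha : ∀ n, (List.range (m.length + n)).map a = m ++ (List.range n).map b := by
    intro n
    rw [List.range_add, List.map_append]
    congr 1
    · refine List.ext_getElem (by simp) fun s h1 h2 => ?_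
      simp [a, h2]
    · rw [List.map_map]
      refine List.map_congr_left fun s _ => ?_
      simp [a]
  refine ⟨a, fun ε hε => ?_⟩
  obtain ⟨C, hC⟩ := hb1 (ε / 2) (by positivity)
  obtain ⟨M, hM⟩ := aux_approx A P N hAP r hr (ε / 2) (by positivity)
  obtain ⟨T, hT⟩ := hb2 M
  have hXY : ∀ n : ℕ, |wR A r (wpr A m) ((List.range n).map b) - wR A r y ((List.range n).map b)|
      ≤ ε / 2 * n + (min n T : ℕ) := by
    intro n
    induction n with
    | zero => simp [wR]
    | succ n ih =>
      rw [List.range_succ, List.map_append, wR_append, wR_append, List.map_singleton,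
        wR_single, wR_single]
      set x1 := wR A r (wpr A m) ((List.range n).map b)
      set x2 := wR A r y ((List.range n).map b)
      set r1 := r (b n) (wpr A m * wpr A ((List.range n).map b)) with hr1
      set r2 := r (b n) (y * wpr A ((List.range n).map b)) with hr2
      have h1 := abs_add_le (x1 - x2) (r1 - r2)
      have e : x1 + r1 - (x2 + r2) = (x1 - x2) + (r1 - r2) := by ring
      rw [e]
      by_cases hn : n < T
      · have e1 : min (n + 1) T = min n T + 1 := by omega
        rw [e1]
        have h2 : |r1 - r2| ≤ 1 := by
          have := h01 (b n) (wpr A m * wpr A ((List.range n).map b))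
          have := h01 (b n) (y * wpr A ((List.range n).map b))
          rw [abs_le]
          constructor <;> linarith [this.1, this.2, (h01 (b n) (wpr A m * wpr A ((List.range n).map b))).1, (h01 (b n) (wpr A m * wpr A ((List.range n).map b))).2]
        push_cast at ih ⊢
        linarith
      · have e1 : min (n + 1) T = min n T := by omega
        rw [e1]
        have h2 : |r1 - r2| ≤ ε / 2 := by
          have h3 := hM J (m ++ (List.range n).map b) (b n) (by
            intro j hj
            have := hT n (not_lt.1 hn) j ((huJ j).2 hj)
            rw [List.count_append]
            omega)
          rw [wpr_append, ← mul_assoc] at h3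
          exact h3
        push_cast at ih ⊢
        linarith
  refine ⟨C + T + 2 * m.length + |C|, fun n => ?_⟩
  by_cases hn : n < m.length
  · have h1 := wR_nonneg A r h01 1 ((List.range n).map a)
    have h2 := wR_le A r h01 1 ((List.range n).map a)
    simp only [List.length_map, List.length_range] at h2
    have h3 : (n : ℝ) ≤ m.length := by exact_mod_cast hn.le
    have h4 : 0 ≤ v * n := by positivity
    have h5 : v * (n : ℝ) ≤ n := by
      have : (0 : ℝ) ≤ n := Nat.cast_nonneg _
      nlinarith
    have h6 : 0 ≤ ε * n := by positivity
    have h7 := neg_abs_le C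
    have h8 : (0 : ℝ) ≤ T := Nat.cast_nonneg _
    rw [abs_le]
    constructor <;> linarith
  · obtain ⟨d, rfl⟩ := Nat.exists_eq_add_of_le (not_lt.1 hn)
    rw [ha, wR_append, one_mul]
    have h1 := wR_nonneg A r h01 1 m
    have h2 := wR_le A r h01 1 m
    have h3 := hXY d
    have h4 := hC d
    have h5 : ((min d T : ℕ) : ℝ) ≤ T := by exact_mod_cast min_le_right _ _
    have h6 : v * (m.length : ℝ) ≤ m.length := by
      have : (0 : ℝ) ≤ m.length := Nat.cast_nonneg _
      nlinarith
    have h7 : 0 ≤ v * (m.length : ℝ) := by positivity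
    have h8 : 0 ≤ ε * (m.length : ℝ) := by positivity
    have h9 := abs_nonneg C
    push_cast
    rw [abs_le] at h3 h4 ⊢
    constructor <;> nlinarith

lemma aux_main [Fintype I] [Nonempty I] (A P : I → S) (N : ℕ) (hN : 0 < N)
    (hAP : ∀ i, Tendsto (fun n : ℕ => A i ^ (N * n)) atTop (𝓝 (P i)))
    (r : I → S → ℝ) (hr : ∀ i, Continuous (r i)) (h01 : ∀ i y, r i y ∈ Set.Icc (0 : ℝ) 1) :
    ∃ (v : ℝ) (a : ℕ → I),
      (∀ ε > 0, ∃ C : ℝ, ∀ n : ℕ, |wR A r 1 ((List.range n).map a) - v * n| ≤ ε * n + C) ∧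
      (∀ ε > 0, ∃ C : ℝ, ∀ w : List I, wR A r 1 w ≤ (v + ε) * w.length + C) := by
  classical
  obtain ⟨v, hv0, ⟨J, m, c, h1, h2, h3, h4⟩, hv⟩ := aux_value A P N hAP r hr h01 hN
  obtain ⟨a, ha⟩ := aux_lower A P N hN hAP r hr h01 v hv0 J m c h1 h2 h3 h4
  exact ⟨v, a, ha, aux_upper A P N hAP r hr h01 hN v hv0 hv⟩

end lower

lemma aux_conv_period {S I : Type*} [CommMonoid S] [TopologicalSpace S] [CompactSpace S]
    [T2Space S] [ContinuousMul S] [Fintype I] (A : I → S)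
    (h : ∀ (T P B : S), P * P = P → T * B = P → ∃ N : ℕ, 0 < N ∧ P * T ^ N = P) :
    ∃ (P : I → S) (N : ℕ), 0 < N ∧ ∀ i, Tendsto (fun n : ℕ => A i ^ (N * n)) atTop (𝓝 (P i)) := by
  choose P B h1 h2 h3 using fun i => aux_idem (A i)
  choose N hN hfix using fun i => h (A i) (P i) (B i) (h1 i) (h2 i)
  refine ⟨P, ∏ i, N i, Finset.prod_pos fun i _ => hN i, fun i => ?_⟩
  refine aux_conv (A i) (P i) (h1 i) (h3 i) _ (Finset.prod_pos fun i _ => hN i) ?_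
  obtain ⟨d, hd⟩ := Finset.dvd_prod_of_mem N (Finset.mem_univ i)
  rw [hd]
  have : ∀ d : ℕ, P i * A i ^ (N i * d) = P i := by
    intro d
    induction d with
    | zero => simp
    | succ d ih => rw [Nat.mul_succ, pow_add, ← mul_assoc, ih, hfix]
  exact this d

lemma aux_tendsto (F : ℕ → ℝ) (v : ℝ)
    (h : ∀ ε > 0, ∃ C : ℝ, ∀ n : ℕ, |F n - v * n| ≤ ε * n + C) :
    Tendsto (fun n : ℕ => (1 / (n : ℝ)) * F n) atTop (𝓝 v) := by
  rw [Metric.tendsto_atTop]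
  intro ε hε
  obtain ⟨C, hC⟩ := h (ε / 2) (by positivity)
  obtain ⟨n0, hn0⟩ := exists_nat_gt (C / (ε / 2))
  refine ⟨n0 + 1, fun n hn => ?_⟩
  have hn' : (n0 : ℝ) + 1 ≤ n := by exact_mod_cast hn
  have hnpos : (0 : ℝ) < n := by
    have : (0 : ℝ) ≤ n0 := Nat.cast_nonneg _
    linarith
  have e : 1 / (n : ℝ) * F n - v = (F n - v * n) / n := by field_simp
  rw [Real.dist_eq, e, abs_div, abs_of_pos hnpos, div_lt_iff₀ hnpos]
  rw [div_lt_iff₀ (by positivity)] at hn0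
  have := hC n
  nlinarith

lemma aux_rowStochastic_compact {K : Type*} [Fintype K] [DecidableEq K] :
    IsCompact (Matrix.rowStochastic ℝ K : Set (Matrix K K ℝ)) := by
  have h : (Matrix.rowStochastic ℝ K : Set (Matrix K K ℝ))
      = Set.pi Set.univ (fun _ : K => stdSimplex ℝ K) := by
    ext M
    rw [SetLike.mem_coe, Matrix.mem_rowStochastic_iff_sum]
    exact ⟨fun h k _ => ⟨h.1 k, h.2 k⟩,
      fun h => ⟨fun k => (h k (Set.mem_univ k)).1, fun k => (h k (Set.mem_univ k)).2⟩⟩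
  rw [h]
  exact isCompact_univ_pi fun _ => isCompact_stdSimplex ℝ K

open Matrix in
lemma aux_glue {K I : Type*} [Fintype K] [Fintype I] [Nonempty I]
    (q : K → I → K → ℝ) (hq : ∀ k i, q k i ∈ stdSimplex ℝ K)
    (g : K → I → ℝ) (hg01 : ∀ k i, g k i ∈ Set.Icc (0 : ℝ) 1)
    (hcomm : ∀ (k : K) (i i' : I), qTilde1 q (q k i) i' = qTilde1 q (q k i') i)
    (p₁ : K → ℝ) (hp₁ : p₁ ∈ stdSimplex ℝ K) :
    ∃ (v : ℝ) (a : ℕ → I),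
      (∀ ε > 0, ∃ C : ℝ, ∀ n : ℕ, |(∑ t ∈ Finset.range n, ∑ k : K,
        beliefPlay q p₁ a t k * g k (a t)) - v * n| ≤ ε * n + C) ∧
      (∀ ε > 0, ∃ C : ℝ, ∀ (a' : ℕ → I) (n : ℕ), (∑ t ∈ Finset.range n, ∑ k : K,
        beliefPlay q p₁ a' t k * g k (a' t)) ≤ (v + ε) * n + C) := by
  classical
  let A0 : I → Matrix K K ℝ := fun i => Matrix.of fun k k' => q k i k'
  have hA0 : ∀ i, A0 i ∈ rowStochastic ℝ K := by
    intro i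
    rw [mem_rowStochastic_iff_sum]
    exact ⟨fun k k' => (hq k i).1 k', fun k => (hq k i).2⟩
  have hA0c : ∀ i i', A0 i * A0 i' = A0 i' * A0 i := by
    intro i i'
    ext k k'
    have := congrFun (hcomm k i i') k'
    simpa [Matrix.mul_apply, A0, qTilde1] using this
  let S0 : Submonoid (Matrix K K ℝ) := Submonoid.closure (Set.range A0)
  have hS0c : ∀ x y : S0, x * y = y * x := by
    have : ∀ x ∈ S0, ∀ y ∈ S0, x * y = y * x := by
      intro x hx y hy
      refine Submonoid.closure_induction₂ (motive := fun x y _ _ => x * y = y * x) ?_ ?_ ?_ ?_ ?_ hx hy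
      · rintro _ _ ⟨i, rfl⟩ ⟨j, rfl⟩; exact hA0c i j
      · intro x _; simp
      · intro x _; simp
      · intro x y z _ _ _ h1 h2
        exact Commute.mul_left (a := x) (b := y) (c := z) h1 h2
      · intro x y z _ _ _ h1 h2
        exact Commute.mul_right (a := z) (b := x) (c := y) h1 h2
    exact fun x y => Subtype.ext (this x x.2 y y.2)
  let _ : CommMonoid S0.topologicalClosure := S0.commMonoidTopologicalClosure hS0c
  have hSrow : (S0.topologicalClosure : Set (Matrix K K ℝ)) ⊆ rowStochastic ℝ K := by
    refine closure_minimal ?_ aux_rowStochastic_compact.isClosed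
    have : S0 ≤ rowStochastic ℝ K := by
      rw [Submonoid.closure_le]; rintro _ ⟨i, rfl⟩; exact hA0 i
    exact this
  have : CompactSpace S0.topologicalClosure :=
    isCompact_iff_compactSpace.1
      (aux_rowStochastic_compact.of_isClosed_subset S0.isClosed_topologicalClosure hSrow)
  let A : I → S0.topologicalClosure := fun i =>
    ⟨A0 i, S0.le_topologicalClosure (Submonoid.subset_closure ⟨i, rfl⟩)⟩
  obtain ⟨P, N, hN, hAP⟩ := aux_conv_period A (by
    intro T P B hPP hTB
    have c1 : T.1 * P.1 = P.1 * T.1 := congrArg Subtype.val (mul_comm T P)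
    have c2 : B.1 * P.1 = P.1 * B.1 := congrArg Subtype.val (mul_comm B P)
    have c3 : T.1 * B.1 = P.1 := congrArg Subtype.val hTB
    have c4 : B.1 * T.1 = P.1 := congrArg Subtype.val ((mul_comm B T).trans hTB)
    obtain ⟨n, hn, h⟩ := aux_period T.1 P.1 B.1 (hSrow T.2) (hSrow B.2)
      (congrArg Subtype.val hPP) c1 c2 c3 c4
    exact ⟨n, hn, Subtype.ext h⟩)
  let r : I → S0.topologicalClosure → ℝ := fun i s => ∑ k, (p₁ ᵥ* s.1) k * g k i
  have hr : ∀ i, Continuous (r i) := by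
    intro i
    simp only [r, Matrix.vecMul, dotProduct]
    refine continuous_finsetSum _ fun k _ => Continuous.mul ?_ continuous_const
    refine continuous_finsetSum _ fun l _ => continuous_const.mul ?_
    exact continuous_subtype_val.matrix_elem l k
  have h01 : ∀ i y, r i y ∈ Set.Icc (0 : ℝ) 1 := by
    intro i y
    have hy := hSrow y.2
    have h1 := nonneg_vecMul_of_mem_rowStochastic hy hp₁.1
    have h2 := vecMul_dotProduct_one_eq_one_rowStochastic hy (x := p₁)
      (by simpa [dotProduct] using hp₁.2)
    have h3 : ∑ k, (p₁ ᵥ* y.1) k = 1 := by simpa [dotProduct] using h2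
    refine ⟨Finset.sum_nonneg fun k _ => mul_nonneg (h1 k) (hg01 k i).1, ?_⟩
    rw [← h3]
    exact Finset.sum_le_sum fun k _ => mul_le_of_le_one_right (h1 k) (hg01 k i).2
  have hbel : ∀ (a : ℕ → I) (t : ℕ),
      beliefPlay q p₁ a t = p₁ ᵥ* (wpr A ((List.range t).map a)).1 := by
    intro a t
    induction t with
    | zero =>
      simp only [beliefPlay, List.range_zero, List.map_nil, wpr_nil]
      exact (Matrix.vecMul_one p₁).symm
    | succ t ih =>
      rw [List.range_succ, List.map_append, List.map_singleton, wpr_append, wpr_single]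
      have e : ((wpr A ((List.range t).map a)) * A (a t)).1
        = (wpr A ((List.range t).map a)).1 * A0 (a t) := rfl
      rw [e, ← Matrix.vecMul_vecMul, ← ih]
      rfl
  have hsum : ∀ (a : ℕ → I) (n : ℕ), (∑ t ∈ Finset.range n, ∑ k : K,
        beliefPlay q p₁ a t k * g k (a t)) = wR A r 1 ((List.range n).map a) := by
    intro a n
    rw [wR_range]
    refine Finset.sum_congr rfl fun t _ => ?_
    rw [hbel, one_mul]
  obtain ⟨v, a, h1, h2⟩ := aux_main A P N hN hAP r hr h01
  refine ⟨v, a, fun ε hε => ?_, fun ε hε => ?_⟩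
  · obtain ⟨C, hC⟩ := h1 ε hε
    exact ⟨C, fun n => by rw [hsum]; exact hC n⟩
  · obtain ⟨C, hC⟩ := h2 ε hε
    refine ⟨C, fun a' n => ?_⟩
    have := hC ((List.range n).map a')
    rw [hsum]
    simpa using this

/-- A commutative state-blind POMDP with finite sets of states and actions has a uniform value
from every initial probability, and there is a pure `0`-optimal strategy. -/
theorem commutative_state_blind_pomdp_has_pure_zero_optimal
    {K I : Type*} [Fintype K] [Nonempty K] [Fintype I] [Nonempty I]
    (q : K → I → K → ℝ) (hq : ∀ k i, q k i ∈ stdSimplex ℝ K)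
    (g : K → I → ℝ) (hg01 : ∀ k i, g k i ∈ Set.Icc (0 : ℝ) 1)
    (hcomm : ∀ (k : K) (i i' : I), qTilde1 q (q k i) i' = qTilde1 q (q k i') i)
    (p₁ : K → ℝ) (hp₁ : p₁ ∈ stdSimplex ℝ K) :
    ∃ (v : ℝ) (a : ℕ → I),
      Tendsto (fun n => pomdpPayoff q g p₁ a n) atTop (𝓝 v) ∧
      limsup (fun n => ⨆ a' : ℕ → I, pomdpPayoff q g p₁ a' n) atTop ≤ v := by
  obtain ⟨v, a, h1, h2⟩ := aux_glue q hq g hg01 hcomm p₁ hp₁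
  have hnn : ∀ (a' : ℕ → I) (t : ℕ) (k : K), 0 ≤ beliefPlay q p₁ a' t k := by
    intro a' t
    induction t with
    | zero => exact hp₁.1
    | succ t ih =>
      intro k
      exact Finset.sum_nonneg fun l _ => mul_nonneg (ih l) ((hq l _).1 k)
  refine ⟨v, a, aux_tendsto _ v h1, ?_⟩
  refine le_of_forall_pos_le_add fun ε hε => ?_
  have hbdd : IsBoundedUnder (· ≥ ·) atTop
      (fun n => ⨆ a' : ℕ → I, pomdpPayoff q g p₁ a' n) := by
    refine isBoundedUnder_of ⟨0, fun n => Real.iSup_nonneg fun a' => ?_⟩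
    refine mul_nonneg (by positivity) (Finset.sum_nonneg fun t _ => Finset.sum_nonneg fun k _ => ?_)
    exact mul_nonneg (hnn a' t k) (hg01 k _).1
  refine limsup_le_of_le hbdd.isCoboundedUnder_le ?_
  obtain ⟨C, hC⟩ := h2 (ε / 2) (by positivity)
  obtain ⟨n0, hn0⟩ := exists_nat_gt (C / (ε / 2))
  filter_upwards [eventually_ge_atTop (n0 + 1)] with n hn
  refine ciSup_le fun a' => ?_
  have hn' : (n0 : ℝ) + 1 ≤ n := by exact_mod_cast hn
  have hnpos : (0 : ℝ) < n := by
    have : (0 : ℝ) ≤ n0 := Nat.cast_nonneg _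
    linarith
  rw [pomdpPayoff, one_div, inv_mul_le_iff₀ hnpos]
  rw [div_lt_iff₀ (by positivity)] at hn0
  have := hC a' n
  nlinarith
end
end
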